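/- arXiv:2102.07979 — 2 statements merged into one kernel-verified Lean document; each statement's English description precedes it below -/
import Mathlib

section
/- (Hodge-type div-curl estimate) Let Ω = 𝕋² × (−1,1) with boundary Γ and outward normal N, and let s ≥ 1 be an integer. For any smooth vector field X on Ω̄, ‖X‖_{H^s(Ω)} ≲ ‖X‖_{L²(Ω)} + ‖curl X‖_{H^{s-1}(Ω)} + ‖div X‖_{H^{s-1}(Ω)} + |∂̄ X · N|_{H^{s-3/2}(Γ)}, where ∂̄ denotes tangential derivatives and the implicit constant depends only on s and Ω. -/
open MeasureTheory
open scoped ENNReal NNReal Classical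

noncomputable section

/-- Fundamental domain of the horizontal torus `𝕋²`. -/
def Q2 : Set (Fin 2 → ℝ) := Set.univ.pi fun _ => Set.Ioo (0 : ℝ) 1

/-- Fundamental domain of `Ω = 𝕋² × (−1, 1)` inside `ℝ³`. -/
def Q3 : Set (Fin 3 → ℝ) :=
  {y | y 0 ∈ Set.Ioo (0 : ℝ) 1 ∧ y 1 ∈ Set.Ioo (0 : ℝ) 1 ∧ y 2 ∈ Set.Ioo (-1 : ℝ) 1}

/-- The periodic (torus) distance on `𝕋²`. -/
def pdist2 (x y : Fin 2 → ℝ) : ℝ := ⨅ k : Fin 2 → ℤ, ‖x - y + fun i => (k i : ℝ)‖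

/-- Horizontal lattice vector in `ℝ³`. -/
def lat3 (k : Fin 2 → ℤ) : Fin 3 → ℝ := ![(k 0 : ℝ), (k 1 : ℝ), 0]

/-- Periodicity on `𝕋²`. -/
def Per2 {E : Type*} (f : (Fin 2 → ℝ) → E) : Prop :=
  ∀ (x : Fin 2 → ℝ) (k : Fin 2 → ℤ), f (x + fun i => (k i : ℝ)) = f x

/-- Horizontal periodicity on `Ω = 𝕋² × (−1,1)`. -/
def Per3 {E : Type*} (f : (Fin 3 → ℝ) → E) : Prop :=
  ∀ (y : Fin 3 → ℝ) (k : Fin 2 → ℤ), f (y + lat3 k) = f y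

/-- Embedding of a horizontal point at height `t`. -/
def ext3 (x : Fin 2 → ℝ) (t : ℝ) : Fin 3 → ℝ := ![x 0, x 1, t]

/-- Squared Gagliardo seminorm of fractional order `θ` on `𝕋²`. -/
def gagliardo2Sq {E : Type*} [NormedAddCommGroup E] (θ : ℝ) (f : (Fin 2 → ℝ) → E) : ℝ≥0∞ :=
  ∫⁻ x in Q2, ∫⁻ y in Q2,
    ((‖f x - f y‖₊ : ℝ≥0∞) ^ 2) / ENNReal.ofReal (pdist2 x y ^ (2 + 2 * θ))

/-- The Sobolev–Slobodeckij `H^σ(𝕋²)` norm for `σ ≥ 0`. -/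
def HGamma2 (σ : ℝ) (f : (Fin 2 → ℝ) → ℝ) : ℝ≥0∞ :=
  ((∑ k ∈ Finset.range (⌊σ⌋₊ + 1), ∫⁻ x in Q2, (‖iteratedFDeriv ℝ k f x‖₊ : ℝ≥0∞) ^ 2) +
      if σ = (⌊σ⌋₊ : ℝ) then 0
      else gagliardo2Sq (σ - ⌊σ⌋₊) (iteratedFDeriv ℝ ⌊σ⌋₊ f)) ^ (1/2 : ℝ)

/-- The `H^σ(𝕋²)` norm for arbitrary real `σ`, given for `σ < 0` by duality against
smooth periodic test functions of `H^{−σ}`-norm at most one. -/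
def HGammaR (σ : ℝ) (w : (Fin 2 → ℝ) → ℝ) : ℝ≥0∞ :=
  if 0 ≤ σ then HGamma2 σ w
  else ⨆ (φ : (Fin 2 → ℝ) → ℝ)
      (_ : ContDiff ℝ (⊤ : ℕ∞) φ ∧ Per2 φ ∧ HGamma2 (-σ) φ ≤ 1),
      ENNReal.ofReal (∫ x in Q2, w x * φ x)

/-- The integer-order Sobolev `H^n(Ω)` norm. -/
def HOmega3n {E : Type*} [NormedAddCommGroup E] [NormedSpace ℝ E] (n : ℕ)
    (f : (Fin 3 → ℝ) → E) : ℝ≥0∞ :=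
  (∑ k ∈ Finset.range (n + 1), ∫⁻ y in Q3, (‖iteratedFDeriv ℝ k f y‖₊ : ℝ≥0∞) ^ 2) ^ (1/2 : ℝ)

/-- The Levi-Civita symbol `ε_{kli}` on three indices. -/
def eps (k l i : Fin 3) : ℝ :=
  (((l : ℕ) : ℝ) - ((k : ℕ) : ℝ)) * (((i : ℕ) : ℝ) - ((k : ℕ) : ℝ)) *
    (((i : ℕ) : ℝ) - ((l : ℕ) : ℝ)) / 2

/-- The (Euclidean) curl of a vector field on `ℝ³`. -/
def curl3 (X : (Fin 3 → ℝ) → (Fin 3 → ℝ)) (y : Fin 3 → ℝ) : Fin 3 → ℝ :=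
  fun k => ∑ l : Fin 3, ∑ i : Fin 3, eps k l i * fderiv ℝ (fun z => X z i) y (Pi.single l 1)

/-- The (Euclidean) divergence of a vector field on `ℝ³`. -/
def div3 (X : (Fin 3 → ℝ) → (Fin 3 → ℝ)) (y : Fin 3 → ℝ) : ℝ :=
  ∑ i : Fin 3, fderiv ℝ (fun z => X z i) y (Pi.single i 1)

/-- integer vector in the plane -/
def ivec (k : Fin 2 → ℤ) : Fin 2 → ℝ := fun i => (k i : ℝ)

lemma measQ2 : MeasurableSet Q2 :=
  MeasurableSet.univ_pi fun _ => measurableSet_Ioo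

lemma Q2_ae_fd : Q2 =ᵐ[volume] ZSpan.fundamentalDomain (Pi.basisFun ℝ (Fin 2)) := by
  rw [ZSpan.fundamentalDomain_pi_basisFun]
  exact Measure.univ_pi_Ioo_ae_eq_Icc.trans Measure.univ_pi_Ico_ae_eq_Icc.symm

lemma span_ivec (g : Submodule.span ℤ (Set.range (Pi.basisFun ℝ (Fin 2)))) :
    ∃ k : Fin 2 → ℤ, (g : Fin 2 → ℝ) = ivec k := by
  have := (Module.Basis.mem_span_iff_repr_mem ℤ (Pi.basisFun ℝ (Fin 2)) (g : Fin 2 → ℝ)).1 g.2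
  choose k hk using this
  refine ⟨k, funext fun i => ?_⟩
  have := hk i
  simp at this
  simp [ivec, this]

lemma lint_per {G : (Fin 2 → ℝ) → ℝ≥0∞} (hG : Per2 G) (a : Fin 2 → ℝ) :
    ∫⁻ x in Q2, G (x + a) = ∫⁻ x in Q2, G x := by
  set b := Pi.basisFun ℝ (Fin 2)
  set F := ZSpan.fundamentalDomain b
  have hF : IsAddFundamentalDomain (Submodule.span ℤ (Set.range b)) F volume :=
    ZSpan.isAddFundamentalDomain b volume
  haveI : VAddInvariantMeasure (Submodule.span ℤ (Set.range b)) (Fin 2 → ℝ) volume :=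
    inferInstanceAs (VAddInvariantMeasure (Submodule.span ℤ (Set.range b)).toAddSubgroup
      (Fin 2 → ℝ) volume)
  have h1 : ∫⁻ x in Q2, G (x + a) = ∫⁻ x in F, G (x + a) := by
    rw [Measure.restrict_congr_set Q2_ae_fd]
  have h2 : ∫⁻ x in Q2, G x = ∫⁻ x in F, G x := by
    rw [Measure.restrict_congr_set Q2_ae_fd]
  rw [h1, h2]
  have hmp : MeasurePreserving (fun x : Fin 2 → ℝ => x + a) volume volume :=
    measurePreserving_add_right volume a
  have hF' : IsAddFundamentalDomain (Submodule.span ℤ (Set.range b))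
      ((fun x : Fin 2 → ℝ => x - a) ⁻¹' F) volume := by
    have hm : MeasurePreserving (fun x : Fin 2 → ℝ => x - a) volume volume :=
      measurePreserving_sub_right volume a
    refine hF.preimage_of_equiv (f := fun x : Fin 2 → ℝ => x - a) hm.quasiMeasurePreserving
      (e := id) Function.bijective_id ?_
    intro g x
    show (g : Fin 2 → ℝ) + x - a = (g : Fin 2 → ℝ) + (x - a)
    abel
  have h3 : ∫⁻ x in F, G (x + a) = ∫⁻ x in (fun x : Fin 2 → ℝ => x - a) ⁻¹' F, G x := by
    have hme : MeasurableEmbedding (fun x : Fin 2 → ℝ => x + a) :=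
      measurableEmbedding_addRight a
    rw [← hmp.setLIntegral_comp_preimage_emb hme G]
    congr 2
    ext x
    simp
  rw [h3]
  refine hF'.setLIntegral_eq hF _ ?_
  intro g x
  obtain ⟨k, hk⟩ := span_ivec g
  show G ((g : Fin 2 → ℝ) + x) = G x
  rw [hk, add_comm]
  exact hG x k

lemma lint_per_ball {G : (Fin 2 → ℝ) → ℝ≥0∞} (hG : Per2 G) :
    ∫⁻ x in Q2, G x = ∫⁻ x in Metric.ball (0 : Fin 2 → ℝ) (1/2), G x := by
  rw [← lint_per hG (fun _ => -(1/2))]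
  have hmp : MeasurePreserving (fun x : Fin 2 → ℝ => x + fun _ => -(1/2)) volume volume :=
    measurePreserving_add_right volume _
  have hme : MeasurableEmbedding (fun x : Fin 2 → ℝ => x + fun _ => (-(1/2) : ℝ)) :=
    measurableEmbedding_addRight _
  rw [← hmp.setLIntegral_comp_preimage_emb hme G (Metric.ball 0 (1/2))]
  congr 2
  ext x
  simp only [Q2, Set.mem_pi, Set.mem_univ, true_imp_iff, Set.mem_Ioo, Set.mem_preimage,
    mem_ball_zero_iff]
  rw [pi_norm_lt_iff (by norm_num)]
  refine forall_congr' fun i => ?_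
  simp only [Pi.add_apply, Real.norm_eq_abs, abs_lt]
  constructor <;> rintro ⟨h1, h2⟩ <;> constructor <;> linarith

/-- squared L2 norm on the torus -/
def sq2 {E : Type*} [NormedAddCommGroup E] (f : (Fin 2 → ℝ) → E) : ℝ≥0∞ :=
  ∫⁻ x in Q2, ‖f x‖ₑ ^ 2

/-- squared L2 modulus of continuity -/
def modN {E : Type*} [NormedAddCommGroup E] (f : (Fin 2 → ℝ) → E) (h : Fin 2 → ℝ) : ℝ≥0∞ :=
  ∫⁻ x in Q2, ‖f (x + h) - f x‖ₑ ^ 2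

lemma sq2_shift {E : Type*} [NormedAddCommGroup E] {f : (Fin 2 → ℝ) → E} (hf : Per2 f)
    (a : Fin 2 → ℝ) : sq2 (fun x => f (x + a)) = sq2 f := by
  refine lint_per (G := fun x => ‖f x‖ₑ ^ 2) ?_ a
  intro x k
  simp only [hf x k]

lemma per2_shift {E : Type*} {f : (Fin 2 → ℝ) → E} (hf : Per2 f) (a : Fin 2 → ℝ) :
    Per2 (fun x => f (x + a)) := by
  intro x k
  show f (x + _ + a) = f (x + a)
  rw [add_right_comm]; exact hf _ _

lemma enorm_add_sq_le {E : Type*} [NormedAddCommGroup E] (a b : E) :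
    ‖a + b‖ₑ ^ 2 ≤ 2 * ‖a‖ₑ ^ 2 + 2 * ‖b‖ₑ ^ 2 := by
  have h := norm_add_le a b
  have : ‖a + b‖ ^ 2 ≤ 2 * ‖a‖ ^ 2 + 2 * ‖b‖ ^ 2 := by
    nlinarith [norm_nonneg (a + b), norm_nonneg a, norm_nonneg b, sq_nonneg (‖a‖ - ‖b‖)]
  have h2 := ENNReal.ofReal_le_ofReal this
  rw [ENNReal.ofReal_add (by positivity) (by positivity), ENNReal.ofReal_mul (by norm_num),
    ENNReal.ofReal_mul (by norm_num), ENNReal.ofReal_pow (norm_nonneg _),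
    ENNReal.ofReal_pow (norm_nonneg _), ENNReal.ofReal_pow (norm_nonneg _)] at h2
  simpa using h2

lemma sq2_add_le {E : Type*} [NormedAddCommGroup E] {f g : (Fin 2 → ℝ) → E}
    (hf : Continuous f) : sq2 (fun x => f x + g x) ≤ 2 * sq2 f + 2 * sq2 g := by
  unfold sq2
  rw [← lintegral_const_mul' _ _ (by norm_num), ← lintegral_const_mul' _ _ (by norm_num),
    ← lintegral_add_left']
  · exact lintegral_mono fun x => enorm_add_sq_le _ _
  · exact ((hf.enorm.measurable.pow_const 2).const_mul _).aemeasurable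

lemma sq2_neg {E : Type*} [NormedAddCommGroup E] (f : (Fin 2 → ℝ) → E) :
    sq2 (fun x => - f x) = sq2 f := by
  simp [sq2]

lemma modN_add_le {E : Type*} [NormedAddCommGroup E] {f : (Fin 2 → ℝ) → E} (hf : Per2 f)
    (hc : Continuous f) (a b : Fin 2 → ℝ) :
    modN f (a + b) ≤ 2 * modN f a + 2 * modN f b := by
  have h1 : modN f (a + b) = sq2 (fun x => (f (x + b + a) - f (x + b)) + (f (x + b) - f x)) := by
    unfold modN sq2
    congr 1; ext x
    rw [show x + (a + b) = x + b + a by abel]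
    simp
  rw [h1]
  refine (sq2_add_le (by fun_prop)).trans (le_of_eq ?_)
  congr 2
  refine sq2_shift (f := fun x => f (x + a) - f x) ?_ b
  intro x k
  show f _ - f _ = f _ - f _
  rw [hf x k, add_right_comm, hf]

lemma measurable_modN {E : Type*} [NormedAddCommGroup E] {f : (Fin 2 → ℝ) → E}
    (hc : Continuous f) : Measurable (modN f) := by
  unfold modN
  refine Measurable.lintegral_prod_right' (f := fun p : (Fin 2 → ℝ) × (Fin 2 → ℝ) =>
    ‖f (p.2 + p.1) - f p.2‖ₑ ^ 2) ?_
  exact Measurable.pow_const (Continuous.measurable (by fun_prop)) _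

lemma pdist2_per (x y : Fin 2 → ℝ) (k : Fin 2 → ℤ) :
    pdist2 x (y + fun i => (k i : ℝ)) = pdist2 x y := by
  unfold pdist2
  refine (Equiv.subRight k).iInf_congr ?_
  intro m
  congr 1
  ext i
  simp
  ring

lemma pdist2_ball (x h : Fin 2 → ℝ) (hh : ‖h‖ < 1/2) : pdist2 x (h + x) = ‖h‖ := by
  unfold pdist2
  apply le_antisymm
  · refine (ciInf_le ⟨0, ?_⟩ (0 : Fin 2 → ℤ)).trans ?_
    · rintro _ ⟨k, rfl⟩; exact norm_nonneg _
    · rw [← norm_neg]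
      apply le_of_eq
      congr 1
      ext i; simp
  · refine le_ciInf fun k => ?_
    by_cases hk : k = 0
    · subst hk
      rw [← norm_neg]
      apply le_of_eq
      congr 1
      ext i; simp
    · obtain ⟨i, hi⟩ : ∃ i, k i ≠ 0 := by
        by_contra hcon
        push Not at hcon
        exact hk (funext hcon)
      have h1 : (1 : ℝ) ≤ |(k i : ℝ)| := by
        rw [← Int.cast_abs]
        exact_mod_cast Int.one_le_abs hi
      have h2 := norm_le_pi_norm (x - (h + x) + fun i => (k i : ℝ)) i
      have h3 := norm_le_pi_norm h i
      simp only [Pi.add_apply, Pi.sub_apply, Real.norm_eq_abs] at h2 h3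
      have h4 : |(k i : ℝ)| ≤ |x i - (h i + x i) + k i| + |h i| := by
        calc |(k i : ℝ)| = |(x i - (h i + x i) + k i) + h i| := by ring_nf
          _ ≤ _ := abs_add_le _ _
      linarith

lemma gag_eq {E : Type*} [NormedAddCommGroup E] {f : (Fin 2 → ℝ) → E} (hf : Per2 f)
    (hc : Continuous f) :
    gagliardo2Sq (1/2) f =
      ∫⁻ h in Metric.ball (0 : Fin 2 → ℝ) (1/2), modN f h / ENNReal.ofReal (‖h‖ ^ 3) := by
  have e1 : ∀ x, ∫⁻ y in Q2,
      ((‖f x - f y‖₊ : ℝ≥0∞) ^ 2) / ENNReal.ofReal (pdist2 x y ^ (2 + 2 * (1/2 : ℝ))) =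
      ∫⁻ h in Metric.ball (0 : Fin 2 → ℝ) (1/2),
        ‖f (x + h) - f x‖ₑ ^ 2 / ENNReal.ofReal (‖h‖ ^ 3) := by
    intro x
    set G : (Fin 2 → ℝ) → ℝ≥0∞ := fun y =>
      ((‖f x - f y‖₊ : ℝ≥0∞) ^ 2) / ENNReal.ofReal (pdist2 x y ^ (2 + 2 * (1/2 : ℝ))) with hGd
    have hG : Per2 G := by
      intro y k
      simp only [hGd, hf y k, pdist2_per]
    have := lint_per hG x
    rw [lint_per_ball (per2_shift hG x)] at this
    rw [← this]
    refine setLIntegral_congr_fun Metric.isOpen_ball.measurableSet ?_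
    intro h hh
    rw [mem_ball_zero_iff] at hh
    simp only [hGd]
    rw [pdist2_ball x h hh, show (2 + 2 * (1/2 : ℝ)) = (3 : ℕ) by norm_num, Real.rpow_natCast,
      add_comm h x]
    congr 2
    rw [← enorm_eq_nnnorm, ← enorm_neg]
    congr 1
    abel
  unfold gagliardo2Sq
  simp only [e1]
  rw [lintegral_lintegral_swap]
  · refine lintegral_congr fun h => ?_
    simp only [div_eq_mul_inv]
    rw [lintegral_mul_const]
    · rfl
    · exact Measurable.pow_const (Continuous.measurable (by fun_prop)) _
  · apply Measurable.aemeasurable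
    apply Measurable.div
    · exact Measurable.pow_const (Continuous.measurable (by fun_prop)) _
    · exact Measurable.ennreal_ofReal (Continuous.measurable (by fun_prop))

/-- dyadic shell -/
def shell (t : ℝ) : Set (Fin 2 → ℝ) := {h | t / 2 ≤ ‖h‖ ∧ ‖h‖ < t}

lemma meas_shell (t : ℝ) : MeasurableSet (shell t) :=
  (measurableSet_le measurable_const measurable_norm).inter
    (measurableSet_lt measurable_norm measurable_const)

lemma modN_axis_le {f : (Fin 2 → ℝ) → ℝ} (hf : Per2 f) (hc : Continuous f) (j : Fin 2)
    {t : ℝ} (ht : 0 < t) :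
    modN f (Pi.single j t) ≤ ENNReal.ofReal (8 * t) *
      ∫⁻ h in shell t, modN f h / ENNReal.ofReal (‖h‖ ^ 3) := by
  set B : Set (Fin 2 → ℝ) :=
    Set.univ.pi (fun i => if i = j then Set.Ioo 0 t else Set.Ioo (t/2) t) with hB
  have hBm : MeasurableSet B := by
    refine MeasurableSet.univ_pi fun i => ?_
    split_ifs <;> exact measurableSet_Ioo
  have hvol : volume B = ENNReal.ofReal (t ^ 2 / 2) := by
    rw [hB, volume_pi_pi]
    have : ∀ i : Fin 2, volume (if i = j then Set.Ioo 0 t else Set.Ioo (t/2) t) =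
        ENNReal.ofReal (if i = j then t else t / 2) := by
      intro i
      split_ifs
      · simp
      · rw [Real.volume_Ioo]; congr 1; ring
    simp only [this]
    rw [← ENNReal.ofReal_prod_of_nonneg]
    · congr 1
      fin_cases j <;> simp [Fin.prod_univ_two] <;> ring
    · intro i _
      split_ifs <;> linarith
  -- coordinates of B
  have hBc : ∀ h ∈ B, ∀ i, 0 < h i ∧ h i < t ∧ (i ≠ j → t / 2 < h i) := by
    intro h hh i
    have := hh i (Set.mem_univ _)
    by_cases hij : i = j
    · simp [hij] at this
      exact ⟨hij ▸ this.1, hij ▸ this.2, fun h => absurd hij h⟩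
    · simp [hij] at this
      exact ⟨by linarith [this.1], this.2, fun _ => this.1⟩
  obtain ⟨i0, hi0⟩ : ∃ i0 : Fin 2, i0 ≠ j := exists_ne j
  have hsub1 : B ⊆ shell t := by
    intro h hh
    refine ⟨?_, ?_⟩
    · have h1 := norm_le_pi_norm h i0
      have h2 := (hBc h hh i0).2.2 hi0
      rw [Real.norm_eq_abs, abs_of_pos (by linarith)] at h1
      linarith
    · rw [pi_norm_lt_iff ht]
      intro i
      have := hBc h hh i
      rw [Real.norm_eq_abs, abs_of_pos this.1]
      exact this.2.1
  have hsub2 : B ⊆ (fun h => Pi.single j t - h) ⁻¹' shell t := by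
    intro h hh
    refine ⟨?_, ?_⟩
    · have h1 := norm_le_pi_norm (Pi.single j t - h) i0
      have h2 := (hBc h hh i0).2.2 hi0
      simp only [Pi.sub_apply, Pi.single_eq_of_ne hi0, zero_sub, Real.norm_eq_abs, abs_neg] at h1
      rw [abs_of_pos (by linarith)] at h1
      linarith
    · show ‖Pi.single j t - h‖ < t
      rw [pi_norm_lt_iff ht]
      intro i
      have := hBc h hh i
      rw [Real.norm_eq_abs, abs_lt]
      by_cases hij : i = j
      · subst hij
        simp only [Pi.sub_apply, Pi.single_eq_same]
        constructor <;> linarith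
      · simp only [Pi.sub_apply, Pi.single_eq_of_ne hij]
        constructor <;> linarith
  have hmeas := measurable_modN hc
  have key : modN f (Pi.single j t) * ENNReal.ofReal (t ^ 2 / 2) ≤
      4 * ∫⁻ h in shell t, modN f h := by
    rw [← hvol, ← setLIntegral_const]
    calc ∫⁻ _ in B, modN f (Pi.single j t)
        ≤ ∫⁻ h in B, (2 * modN f h + 2 * modN f (Pi.single j t - h)) := by
          refine lintegral_mono fun h => ?_
          have := modN_add_le hf hc h (Pi.single j t - h)
          simpa using this
      _ = 2 * (∫⁻ h in B, modN f h) + 2 * ∫⁻ h in B, modN f (Pi.single j t - h) := by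
          rw [lintegral_add_left (hmeas.const_mul _), lintegral_const_mul _ hmeas,
            lintegral_const_mul' _ _ (by norm_num)]
      _ ≤ 2 * (∫⁻ h in shell t, modN f h) + 2 * ∫⁻ h in shell t, modN f h := by
          gcongr 2 * ?_ + 2 * ?_
          · exact lintegral_mono_set hsub1
          · refine (lintegral_mono_set hsub2).trans (le_of_eq ?_)
            have hmp : MeasurePreserving (fun h : Fin 2 → ℝ => Pi.single j t - h) volume volume :=
              Measure.measurePreserving_sub_left volume _
            exact hmp.setLIntegral_comp_preimage (meas_shell t) hmeas
      _ = 4 * ∫⁻ h in shell t, modN f h := by rw [← add_mul]; norm_num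
  have key2 : ∫⁻ h in shell t, modN f h ≤
      ENNReal.ofReal (t ^ 3) * ∫⁻ h in shell t, modN f h / ENNReal.ofReal (‖h‖ ^ 3) := by
    rw [← lintegral_const_mul' _ _ (by simp)]
    refine setLIntegral_mono' (meas_shell t) ?_
    rintro h ⟨h1, h2⟩
    have hp : 0 < ‖h‖ := by linarith
    have h3 : ENNReal.ofReal (‖h‖ ^ 3) ≤ ENNReal.ofReal (t ^ 3) :=
      ENNReal.ofReal_le_ofReal (by gcongr)
    calc modN f h = ENNReal.ofReal (‖h‖ ^ 3) * (modN f h / ENNReal.ofReal (‖h‖ ^ 3)) := by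
          rw [ENNReal.mul_div_cancel]
          · have : 0 < ‖h‖ ^ 3 := by positivity
            simpa using norm_pos_iff.1 hp
          · simp
      _ ≤ _ := by gcongr
  have hne : ENNReal.ofReal (t ^ 2 / 2) ≠ 0 := by simp; positivity
  have key3 := key.trans (mul_le_mul_right key2 4)
  rw [← ENNReal.le_div_iff_mul_le (Or.inl hne) (Or.inl (by simp))] at key3
  refine key3.trans (le_of_eq ?_)
  rw [← mul_assoc, ENNReal.mul_div_right_comm]
  congr 1
  rw [show (4 : ℝ≥0∞) = ENNReal.ofReal 4 by simp, ← ENNReal.ofReal_mul (by norm_num),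
    ← ENNReal.ofReal_div_of_pos (by positivity)]
  congr 1
  field_simp
  ring

lemma dyadic_sum_le {f : (Fin 2 → ℝ) → ℝ} (hf : Per2 f) (hc : Continuous f) (j : Fin 2) (M : ℕ) :
    ∑ n ∈ Finset.range M,
      ENNReal.ofReal (2 ^ (n + 1)) * modN f (Pi.single j ((1/2 : ℝ) ^ (n + 1))) ≤
      8 * gagliardo2Sq (1/2) f := by
  rw [gag_eq hf hc]
  set w : (Fin 2 → ℝ) → ℝ≥0∞ := fun h => modN f h / ENNReal.ofReal (‖h‖ ^ 3)
  have h1 : ∀ n : ℕ, ENNReal.ofReal (2 ^ (n + 1)) * modN f (Pi.single j ((1/2 : ℝ) ^ (n + 1))) ≤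
      8 * ∫⁻ h in shell ((1/2 : ℝ) ^ (n + 1)), w h := by
    intro n
    refine (mul_le_mul_right (modN_axis_le hf hc j (by positivity)) _).trans (le_of_eq ?_)
    rw [← mul_assoc, ← ENNReal.ofReal_mul (by positivity)]
    congr 1
    rw [show (2 : ℝ) ^ (n + 1) * (8 * (1/2) ^ (n + 1)) = 8 by
      rw [mul_left_comm, ← mul_pow]; norm_num]
    simp
  calc _ ≤ ∑ n ∈ Finset.range M, 8 * ∫⁻ h in shell ((1/2 : ℝ) ^ (n + 1)), w h :=
        Finset.sum_le_sum fun n _ => h1 n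
    _ = 8 * ∑ n ∈ Finset.range M, ∫⁻ h in shell ((1/2 : ℝ) ^ (n + 1)), w h := by
        rw [Finset.mul_sum]
    _ ≤ 8 * ∑' n, ∫⁻ h in shell ((1/2 : ℝ) ^ (n + 1)), w h := by
        gcongr; exact ENNReal.sum_le_tsum _
    _ = 8 * ∫⁻ h in ⋃ n : ℕ, shell ((1/2 : ℝ) ^ (n + 1)), w h := by
        rw [lintegral_iUnion (fun n => meas_shell _)]
        intro n m hnm
        wlog hlt : n < m generalizing n m
        · exact (this hnm.symm (by omega)).symm
        refine Set.disjoint_left.2 ?_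
        rintro h ⟨a1, _⟩ ⟨_, b2⟩
        have : (1/2 : ℝ) ^ (m + 1) ≤ (1/2) ^ (n + 2) :=
          pow_le_pow_of_le_one (by norm_num) (by norm_num) (by omega)
        rw [pow_succ _ (n + 1)] at this
        linarith
    _ ≤ _ := by
        gcongr
        refine Set.iUnion_subset fun n => ?_
        rintro h ⟨_, b⟩
        rw [mem_ball_zero_iff]
        have : (1/2 : ℝ) ^ (n + 1) ≤ (1/2) ^ 1 :=
          pow_le_pow_of_le_one (by norm_num) (by norm_num) (by omega)
        linarith

lemma int_per {G : (Fin 2 → ℝ) → ℝ} (hG : Per2 G) (a : Fin 2 → ℝ) :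
    ∫ x in Q2, G (x + a) = ∫ x in Q2, G x := by
  set b := Pi.basisFun ℝ (Fin 2)
  set F := ZSpan.fundamentalDomain b
  have hF : IsAddFundamentalDomain (Submodule.span ℤ (Set.range b)) F volume :=
    ZSpan.isAddFundamentalDomain b volume
  have : VAddInvariantMeasure (Submodule.span ℤ (Set.range b)) (Fin 2 → ℝ) volume :=
    inferInstanceAs (VAddInvariantMeasure (Submodule.span ℤ (Set.range b)).toAddSubgroup
      (Fin 2 → ℝ) volume)
  have h1 : ∫ x in Q2, G (x + a) = ∫ x in F, G (x + a) := by
    rw [Measure.restrict_congr_set Q2_ae_fd]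
  have h2 : ∫ x in Q2, G x = ∫ x in F, G x := by
    rw [Measure.restrict_congr_set Q2_ae_fd]
  rw [h1, h2]
  have hmp : MeasurePreserving (fun x : Fin 2 → ℝ => x + a) volume volume :=
    measurePreserving_add_right volume a
  have hF' : IsAddFundamentalDomain (Submodule.span ℤ (Set.range b))
      ((fun x : Fin 2 → ℝ => x - a) ⁻¹' F) volume := by
    have hm : MeasurePreserving (fun x : Fin 2 → ℝ => x - a) volume volume :=
      measurePreserving_sub_right volume a
    refine hF.preimage_of_equiv (f := fun x : Fin 2 → ℝ => x - a) hm.quasiMeasurePreserving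
      (e := id) Function.bijective_id ?_
    intro g x
    show (g : Fin 2 → ℝ) + x - a = (g : Fin 2 → ℝ) + (x - a)
    abel
  have h3 : ∫ x in F, G (x + a) = ∫ x in (fun x : Fin 2 → ℝ => x - a) ⁻¹' F, G x := by
    have hme : MeasurableEmbedding (fun x : Fin 2 → ℝ => x + a) :=
      measurableEmbedding_addRight a
    rw [← hmp.setIntegral_preimage_emb hme G]
    congr 2
    ext x
    simp
  rw [h3]
  refine hF'.setIntegral_eq hF ?_
  intro g x
  obtain ⟨k, hk⟩ := span_ivec g
  show G ((g : Fin 2 → ℝ) + x) = G x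
  rw [hk, add_comm]
  exact hG x k

lemma Q2_sub : Q2 ⊆ Set.Icc (0 : Fin 2 → ℝ) 1 := by
  intro x hx
  exact ⟨fun i => (hx i trivial).1.le, fun i => (hx i trivial).2.le⟩

lemma intQ2 {u : (Fin 2 → ℝ) → ℝ} (hc : Continuous u) : IntegrableOn u Q2 :=
  (hc.continuousOn.integrableOn_compact isCompact_Icc).mono_set Q2_sub

/-- real version of `modN` -/
def NR (f : (Fin 2 → ℝ) → ℝ) (h : Fin 2 → ℝ) : ℝ := ∫ x in Q2, (f (x + h) - f x) ^ 2

lemma NR_nonneg (f : (Fin 2 → ℝ) → ℝ) (h : Fin 2 → ℝ) : 0 ≤ NR f h :=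
  integral_nonneg fun _ => sq_nonneg _

lemma enorm_sq_real (r : ℝ) : ‖r‖ₑ ^ 2 = ENNReal.ofReal (r ^ 2) := by
  rw [Real.enorm_eq_ofReal_abs, ← ENNReal.ofReal_pow (abs_nonneg _), sq_abs]

lemma sq2_eq {f : (Fin 2 → ℝ) → ℝ} (hc : Continuous f) :
    sq2 f = ENNReal.ofReal (∫ x in Q2, f x ^ 2) := by
  unfold sq2
  rw [ofReal_integral_eq_lintegral_ofReal (intQ2 (by fun_prop))
    (Filter.Eventually.of_forall fun _ => sq_nonneg _)]
  simp only [enorm_sq_real]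

lemma modN_eq {f : (Fin 2 → ℝ) → ℝ} (hc : Continuous f) (h : Fin 2 → ℝ) :
    modN f h = ENNReal.ofReal (NR f h) :=
  sq2_eq (f := fun x => f (x + h) - f x) (by fun_prop)

lemma per2_comp2 {A B C : Type*} (F : A → B → C) {u : (Fin 2 → ℝ) → A} {v : (Fin 2 → ℝ) → B}
    (hu : Per2 u) (hv : Per2 v) : Per2 (fun x => F (u x) (v x)) := by
  intro x k
  simp only [hu x k, hv x k]

lemma step_identity {φ g : (Fin 2 → ℝ) → ℝ} (hφ : Per2 φ) (hg : Per2 g) (cφ : Continuous φ)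
    (cg : Continuous g) (T : Fin 2 → ℝ) :
    |2 * (∫ x in Q2, φ x * (g (x + T) - g (x - T))) -
      ∫ x in Q2, φ x * (g (x + (T + T)) - g (x - (T + T)))| ≤ NR φ T / 2 + 8 * NR g T := by
  set k : (Fin 2 → ℝ) → ℝ := fun x => g (x + T) - g (x - T) with hk
  have pk : Per2 k := by
    refine per2_comp2 (fun a b => a - b) (per2_shift hg T) ?_
    have := per2_shift hg (-T)
    simpa [sub_eq_add_neg] using this
  have ck : Continuous k := by fun_prop
  have e1 : ∫ x in Q2, φ x * k (x - T) = ∫ x in Q2, φ (x + T) * k x := by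
    rw [← int_per (G := fun x => φ x * k (x - T)) _ T]
    · simp
    · refine per2_comp2 (fun a b => a * b) hφ ?_
      have := per2_shift pk (-T)
      simpa [sub_eq_add_neg] using this
  have e2 : ∫ x in Q2, φ x * k x = ∫ x in Q2, φ (x + T) * k (x + T) :=
    (int_per (G := fun x => φ x * k x) (per2_comp2 (fun a b => a * b) hφ pk) T).symm
  have e3 : ∫ x in Q2, φ x * (g (x + (T + T)) - g (x - (T + T))) =
      (∫ x in Q2, φ x * k (x + T)) + ∫ x in Q2, φ x * k (x - T) := by
    rw [← integral_add (intQ2 (by fun_prop)) (intQ2 (by fun_prop))]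
    congr 1; ext x
    simp only [hk]
    rw [show x + T + T = x + (T + T) by abel, show x - T - T = x - (T + T) by abel,
      show x + T - T = x by abel, show x - T + T = x by abel]
    ring
  have e4 : 2 * (∫ x in Q2, φ x * k x) - ∫ x in Q2, φ x * (g (x + (T + T)) - g (x - (T + T))) =
      ∫ x in Q2, (φ (x + T) - φ x) * (k (x + T) - k x) := by
    have : ∫ x in Q2, (φ (x + T) - φ x) * (k (x + T) - k x) =
        (∫ x in Q2, φ (x + T) * k (x + T)) - (∫ x in Q2, φ (x + T) * k x)
        - (∫ x in Q2, φ x * k (x + T)) + ∫ x in Q2, φ x * k x := by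
      rw [← integral_sub (intQ2 (by fun_prop)) (intQ2 (by fun_prop)),
        ← integral_sub (intQ2 (by fun_prop)) (intQ2 (by fun_prop)),
        ← integral_add (intQ2 (by fun_prop)) (intQ2 (by fun_prop))]
      congr 1; ext x; ring
    rw [this, e3, e1, ← e2]; ring
  show |2 * (∫ x in Q2, φ x * k x) - _| ≤ _
  rw [e4]
  have e5 : |∫ x in Q2, (φ (x + T) - φ x) * (k (x + T) - k x)| ≤
      ∫ x in Q2, (1/2 * (φ (x + T) - φ x) ^ 2 + (k (x + T) ^ 2 + k x ^ 2)) := by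
    refine (abs_integral_le_integral_abs).trans ?_
    refine integral_mono (intQ2 (by fun_prop)) (intQ2 (by fun_prop)) fun x => ?_
    show |_| ≤ _
    rw [abs_le]
    constructor <;> nlinarith [sq_nonneg ((φ (x + T) - φ x) + (k (x + T) - k x)),
      sq_nonneg ((φ (x + T) - φ x) - (k (x + T) - k x)), sq_nonneg (k (x + T) + k x)]
  have e6 : ∫ x in Q2, (1/2 * (φ (x + T) - φ x) ^ 2 + (k (x + T) ^ 2 + k x ^ 2)) =
      NR φ T / 2 + 2 * ∫ x in Q2, k x ^ 2 := by
    rw [integral_add (intQ2 (by fun_prop)) (intQ2 (by fun_prop)),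
      integral_add (intQ2 (by fun_prop)) (intQ2 (by fun_prop)), integral_const_mul,
      int_per (G := fun x => k x ^ 2) (per2_comp2 (fun a _ => a ^ 2) pk pk) T]
    unfold NR
    ring
  have e7 : ∫ x in Q2, k x ^ 2 ≤ 4 * NR g T := by
    have a1 : ∫ x in Q2, k x ^ 2 ≤
        ∫ x in Q2, (2 * (g (x + T) - g x) ^ 2 + 2 * (g (x - T + T) - g (x - T)) ^ 2) := by
      refine integral_mono (intQ2 (by fun_prop)) (intQ2 (by fun_prop)) fun x => ?_
      simp only [hk, sub_add_cancel]
      nlinarith [sq_nonneg ((g (x + T) - g x) - (g x - g (x - T)))]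
    rw [integral_add (intQ2 (by fun_prop)) (intQ2 (by fun_prop)), integral_const_mul,
      integral_const_mul] at a1
    have a2 := int_per (G := fun x => (g (x + T) - g x) ^ 2)
      (per2_comp2 (fun a b => (a - b) ^ 2) (per2_shift hg T) hg) (-T)
    simp only [← sub_eq_add_neg] at a2
    rw [a2] at a1
    unfold NR
    linarith
  linarith

lemma central_tendsto {φ g : (Fin 2 → ℝ) → ℝ} (cφ : Continuous φ) (cg : ContDiff ℝ (⊤ : ℕ∞) g)
    (j : Fin 2) (t : ℕ → ℝ) (ht0 : ∀ n, 0 < t n) (ht1 : ∀ n, t n ≤ 1)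
    (ht : Filter.Tendsto t Filter.atTop (nhds 0)) :
    Filter.Tendsto (fun n => ∫ x in Q2, φ x * ((2 * t n)⁻¹ *
      (g (x + Pi.single j (t n)) - g (x - Pi.single j (t n))))) Filter.atTop
      (nhds (∫ x in Q2, φ x * fderiv ℝ g x (Pi.single j 1))) := by
  have hgc : Continuous g := cg.continuous
  have hdiff : Differentiable ℝ g := cg.differentiable (by simp)
  obtain ⟨K, hK⟩ : ∃ K, ∀ x ∈ Metric.closedBall (0 : Fin 2 → ℝ) 3, ‖fderiv ℝ g x‖ ≤ K :=
    (isCompact_closedBall _ _).exists_bound_of_continuousOn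
      (cg.continuous_fderiv (by simp)).continuousOn
  have hn : ∀ s : ℝ, ‖(Pi.single j s : Fin 2 → ℝ)‖ = |s| := by
    intro s; rw [Pi.norm_single, Real.norm_eq_abs]
  refine tendsto_integral_of_dominated_convergence (fun x => |φ x| * K) ?_ ?_ ?_ ?_
  · intro n
    exact (Continuous.aestronglyMeasurable (by fun_prop))
  · exact intQ2 (by fun_prop)
  · intro n
    rw [ae_restrict_iff' measQ2]
    refine Filter.Eventually.of_forall fun x hx => ?_
    rw [norm_mul, Real.norm_eq_abs]
    refine mul_le_mul_of_nonneg_left ?_ (abs_nonneg _)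
    have hx1 : ‖x‖ ≤ 1 := by
      rw [pi_norm_le_iff_of_nonneg zero_le_one]
      intro i
      have := hx i trivial
      rw [Real.norm_eq_abs, abs_of_pos this.1]; exact this.2.le
    have hs : ‖(Pi.single j (t n) : Fin 2 → ℝ)‖ ≤ 1 := by
      rw [hn, abs_of_pos (ht0 n)]; exact ht1 n
    have := (convex_closedBall (0 : Fin 2 → ℝ) 3).norm_image_sub_le_of_norm_fderiv_le
      (f := g) (C := K) (fun y _ => hdiff y) hK (x := x - Pi.single j (t n))
      (y := x + Pi.single j (t n))
      (by rw [mem_closedBall_zero_iff]; linarith [norm_sub_le x (Pi.single j (t n))])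
      (by rw [mem_closedBall_zero_iff]; linarith [norm_add_le x (Pi.single j (t n))])
    rw [show x + Pi.single j (t n) - (x - Pi.single j (t n)) = Pi.single j (2 * t n) by
      rw [two_mul, Pi.single_add]; abel, hn, abs_of_pos (by linarith [ht0 n])] at this
    rw [norm_mul, Real.norm_eq_abs, abs_of_pos (by have := ht0 n; positivity),
      inv_mul_le_iff₀ (by linarith [ht0 n])]
    linarith
  · refine Filter.Eventually.of_forall fun x => ?_
    refine Filter.Tendsto.const_mul _ ?_
    have hd : HasDerivAt (fun s : ℝ => g (x + s • Pi.single j 1) - g (x - s • Pi.single j 1))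
        (2 * fderiv ℝ g x (Pi.single j 1)) 0 := by
      have h1 : HasDerivAt (fun s : ℝ => x + s • (Pi.single j 1 : Fin 2 → ℝ))
          (Pi.single j 1) 0 := by
        simpa using ((hasDerivAt_id (0 : ℝ)).smul_const (Pi.single j 1 : Fin 2 → ℝ)).const_add x
      have h2 : HasDerivAt (fun s : ℝ => x - s • (Pi.single j 1 : Fin 2 → ℝ))
          (-Pi.single j 1) 0 := by
        simpa using ((hasDerivAt_id (0 : ℝ)).smul_const (Pi.single j 1 : Fin 2 → ℝ)).const_sub x
      have g1 : HasFDerivAt g (fderiv ℝ g x) (x + (0 : ℝ) • (Pi.single j 1 : Fin 2 → ℝ)) := by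
        simpa using (hdiff x).hasFDerivAt
      have g2 : HasFDerivAt g (fderiv ℝ g x) (x - (0 : ℝ) • (Pi.single j 1 : Fin 2 → ℝ)) := by
        simpa using (hdiff x).hasFDerivAt
      have := (g1.comp_hasDerivAt (0 : ℝ) h1).sub (g2.comp_hasDerivAt (0 : ℝ) h2)
      refine HasDerivAt.congr_deriv this ?_
      rw [map_neg]; ring
    rw [hasDerivAt_iff_tendsto_slope_zero] at hd
    have ht' : Filter.Tendsto t Filter.atTop (nhdsWithin 0 {0}ᶜ) :=
      tendsto_nhdsWithin_iff.2 ⟨ht, Filter.Eventually.of_forall fun n => (ht0 n).ne'⟩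
    have h3 := (hd.comp ht').const_mul (1/2 : ℝ)
    have h4 : ∀ s : ℝ, s • (Pi.single j 1 : Fin 2 → ℝ) = Pi.single j s := by
      intro s; rw [← Pi.single_smul]; simp
    convert h3 using 1
    · ext n
      simp [h4]
      ring
    · congr 1
      ring

lemma bilinear {φ g : (Fin 2 → ℝ) → ℝ} (hφ : Per2 φ) (hg : Per2 g) (cφ : Continuous φ)
    (cg : ContDiff ℝ (⊤ : ℕ∞) g) (j : Fin 2) (gφ : gagliardo2Sq (1/2) φ ≤ 1)
    (gg : gagliardo2Sq (1/2) g ≤ 1) :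
    |∫ x in Q2, φ x * fderiv ℝ g x (Pi.single j 1)| ≤ 100 := by
  have hgc : Continuous g := cg.continuous
  set t : ℕ → ℝ := fun n => (1/2 : ℝ) ^ (n + 1) with ht
  have t0 : ∀ n, 0 < t n := fun n => by positivity
  have t1 : ∀ n, t n ≤ 1 := fun n => pow_le_one₀ (by norm_num) (by norm_num)
  have tt : Filter.Tendsto t Filter.atTop (nhds 0) :=
    (tendsto_pow_atTop_nhds_zero_of_lt_one (by norm_num) (by norm_num)).comp
      (Filter.tendsto_add_atTop_nat 1)
  have lim := central_tendsto cφ cg j t t0 t1 tt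
  set a : ℕ → ℝ := fun n => ∫ x in Q2, φ x * ((2 * t n)⁻¹ *
      (g (x + Pi.single j (t n)) - g (x - Pi.single j (t n)))) with ha
  have ha' : ∀ n, a n = (2 * t n)⁻¹ * ∫ x in Q2, φ x *
      (g (x + Pi.single j (t n)) - g (x - Pi.single j (t n))) := by
    intro n
    simp only [ha]
    rw [← integral_const_mul]
    congr 1; ext x; ring
  have a0 : a 0 = 0 := by
    rw [ha']
    have : ∀ x : Fin 2 → ℝ, g (x + Pi.single j (t 0)) - g (x - Pi.single j (t 0)) = 0 := by
      intro x
      rw [sub_eq_zero, ← hg (x - (Pi.single j (t 0) : Fin 2 → ℝ)) (Pi.single j 1)]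
      congr 1
      ext i
      by_cases hij : i = j
      · subst hij; simp [ht]; norm_num; ring
      · simp [hij]
    simp [this]
  have partialB : ∀ (f : (Fin 2 → ℝ) → ℝ), Per2 f → Continuous f → gagliardo2Sq (1/2) f ≤ 1 →
      ∀ M, ∑ n ∈ Finset.range M, 2 ^ (n + 1) * NR f (Pi.single j (t n)) ≤ 8 := by
    intro f pf cf gf M
    have := (dyadic_sum_le pf cf j M).trans (mul_le_mul_right gf 8)
    simp only [modN_eq cf] at this
    simp only [← ENNReal.ofReal_mul (show (0 : ℝ) ≤ 2 ^ _ by positivity)] at this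
    rw [← ENNReal.ofReal_sum_of_nonneg (fun n _ => mul_nonneg (by positivity) (NR_nonneg _ _)),
      mul_one, show (8 : ℝ≥0∞) = ENNReal.ofReal 8 by simp] at this
    exact (ENNReal.ofReal_le_ofReal_iff (by norm_num)).1 this
  have stp : ∀ n, |a (n + 1) - a n| ≤
      2 ^ (n + 1 + 1) * NR φ (Pi.single j (t (n + 1))) +
        8 * (2 ^ (n + 1 + 1) * NR g (Pi.single j (t (n + 1)))) := by
    intro n
    have h := step_identity hφ hg cφ hgc (Pi.single j (t (n + 1)))
    have htn : t n = t (n + 1) + t (n + 1) := by simp only [ht]; rw [pow_succ _ (n + 1)]; ring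
    rw [← Pi.single_add, ← htn] at h
    rw [ha', ha']
    set I1 := ∫ x in Q2, φ x *
      (g (x + Pi.single j (t (n + 1))) - g (x - Pi.single j (t (n + 1))))
    set I2 := ∫ x in Q2, φ x * (g (x + Pi.single j (t n)) - g (x - Pi.single j (t n)))
    have hti : (t (n + 1))⁻¹ = 2 ^ (n + 1 + 1) := by
      simp only [ht]; rw [← inv_pow]; norm_num
    have h2 : (2 * t (n + 1))⁻¹ * I1 - (2 * t n)⁻¹ * I2 =
        (1/4) * 2 ^ (n + 1 + 1) * (2 * I1 - I2) := by
      rw [htn, ← two_mul, mul_inv, mul_inv, mul_inv, hti]; ring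
    rw [h2, abs_mul, abs_of_nonneg (by positivity)]
    have p1 := NR_nonneg φ (Pi.single j (t (n + 1)))
    have p2 := NR_nonneg g (Pi.single j (t (n + 1)))
    have : (1/4 : ℝ) * 2 ^ (n + 1 + 1) * |2 * I1 - I2| ≤ (1/4) * 2 ^ (n + 1 + 1) *
      (NR φ (Pi.single j (t (n + 1))) / 2 + 8 * NR g (Pi.single j (t (n + 1)))) := by gcongr
    have q1 : 0 ≤ (2 : ℝ) ^ (n + 1 + 1) * NR φ (Pi.single j (t (n + 1))) := by positivity
    have q2 : 0 ≤ (2 : ℝ) ^ (n + 1 + 1) * NR g (Pi.single j (t (n + 1))) := by positivity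
    nlinarith
  have bnd : ∀ M, |a M| ≤ 100 := by
    intro M
    have h1 : |a M| ≤ ∑ n ∈ Finset.range M, |a (n + 1) - a n| := by
      have := Finset.sum_range_sub a M
      rw [a0, sub_zero] at this
      rw [← this]
      exact Finset.abs_sum_le_sum_abs _ _
    have h2 := h1.trans (Finset.sum_le_sum fun n _ => stp n)
    rw [Finset.sum_add_distrib, ← Finset.mul_sum] at h2
    have aux : ∀ (f : (Fin 2 → ℝ) → ℝ), Per2 f → Continuous f → gagliardo2Sq (1/2) f ≤ 1 →
        ∑ n ∈ Finset.range M, 2 ^ (n + 1 + 1) * NR f (Pi.single j (t (n + 1))) ≤ 8 := by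
      intro f pf cf gf
      have := partialB f pf cf gf (M + 1)
      rw [Finset.sum_range_succ'] at this
      have p := NR_nonneg f (Pi.single j (t 0))
      have : (0 : ℝ) ≤ 2 ^ (0 + 1) * NR f (Pi.single j (t 0)) := by positivity
      linarith
    have := aux φ hφ cφ gφ
    have := aux g hg hgc gg
    linarith
  exact le_of_tendsto lim.abs (Filter.Eventually.of_forall bnd)

lemma measQ3 : MeasurableSet Q3 := by
  have h : ∀ (i : Fin 3) (a b : ℝ), MeasurableSet {y : Fin 3 → ℝ | y i ∈ Set.Ioo a b} :=
    fun i a b => measurable_pi_apply i measurableSet_Ioo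
  exact (h 0 _ _).inter ((h 1 _ _).inter (h 2 _ _))

lemma insertNth_ext3 (x : Fin 2 → ℝ) (z : ℝ) :
    (Fin.insertNth (2 : Fin 3) z x : Fin 3 → ℝ) = ext3 x z := by
  ext i
  fin_cases i
  · exact Fin.insertNth_apply_succAbove (α := fun _ : Fin 3 => ℝ) 2 z x 0
  · exact Fin.insertNth_apply_succAbove (α := fun _ : Fin 3 => ℝ) 2 z x 1
  · exact Fin.insertNth_apply_same (α := fun _ : Fin 3 => ℝ) 2 z x

lemma fubini_Q3 {G : (Fin 3 → ℝ) → ℝ≥0∞} (hG : Measurable G) :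
    ∫⁻ y in Q3, G y = ∫⁻ z in Set.Ioo (-1 : ℝ) 1, ∫⁻ x in Q2, G (ext3 x z) := by
  have hmp := (volume_preserving_piFinSuccAbove (fun _ : Fin 3 => ℝ) 2).symm
  rw [← hmp.setLIntegral_comp_preimage measQ3 hG]
  have hset : (MeasurableEquiv.piFinSuccAbove (fun _ : Fin 3 => ℝ) 2).symm ⁻¹' Q3 =
      Set.Ioo (-1 : ℝ) 1 ×ˢ Q2 := by
    ext ⟨z, x⟩
    have : (MeasurableEquiv.piFinSuccAbove (fun _ : Fin 3 => ℝ) 2).symm (z, x) = ext3 x z :=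
      insertNth_ext3 x z
    rw [Set.mem_preimage, this]
    simp only [Q3, Q2, ext3, Set.mem_prod, Set.mem_pi, Fin.forall_fin_two, Set.mem_ofPred_eq,
      Set.mem_univ, true_imp_iff]
    simp
    tauto
  rw [hset, Measure.volume_eq_prod, ← Measure.prod_restrict, lintegral_prod]
  · refine lintegral_congr fun z => lintegral_congr fun x => ?_
    congr 1
    exact insertNth_ext3 x z
  · exact (hG.comp (MeasurableEquiv.measurable _)).aemeasurable

lemma slice_le {G : (Fin 3 → ℝ) → ℝ≥0∞} (hG : Measurable G) {ε : ℝ} (hε : ε = 1 ∨ ε = -1) :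
    ∫⁻ t in Set.Ioo (0 : ℝ) 1, ∫⁻ x in Q2, G (ext3 x (ε * (1 - t))) ≤ ∫⁻ y in Q3, G y := by
  rw [fubini_Q3 hG]
  set W : ℝ → ℝ≥0∞ := fun z => ∫⁻ x in Q2, G (ext3 x z) with hW
  have hWm : Measurable W := by
    refine Measurable.lintegral_prod_right' (f := fun p : ℝ × (Fin 2 → ℝ) => G (ext3 p.2 p.1)) ?_
    refine hG.comp ?_
    refine Continuous.measurable ?_
    unfold ext3
    fun_prop
  have hmp : MeasurePreserving (fun t : ℝ => ε * (1 - t)) volume volume := by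
    rcases hε with rfl | rfl
    · simpa using Measure.measurePreserving_sub_left (volume : Measure ℝ) 1
    · have : (fun t : ℝ => -1 * (1 - t)) = fun t => t - 1 := by ext; ring
      rw [this]
      exact measurePreserving_sub_right (volume : Measure ℝ) 1
  have hsub : Set.Ioo (0 : ℝ) 1 ⊆ (fun t : ℝ => ε * (1 - t)) ⁻¹' Set.Ioo (-1) 1 := by
    rintro t ⟨h1, h2⟩
    rcases hε with rfl | rfl <;> constructor <;> linarith
  refine (lintegral_mono_set hsub).trans (le_of_eq ?_)
  exact hmp.setLIntegral_comp_preimage measurableSet_Ioo hWm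

lemma polar_univ {ψ : ℝ → ℝ≥0∞} (hψ : Measurable ψ) :
    ∫⁻ h : Fin 2 → ℝ, ψ ‖h‖ = 8 * ∫⁻ r in Set.Ioi (0 : ℝ), ENNReal.ofReal r * ψ r := by
  have hd : Module.finrank ℝ (Fin 2 → ℝ) = 2 := by simp
  calc ∫⁻ h : Fin 2 → ℝ, ψ ‖h‖ = ∫⁻ h in ({0} : Set (Fin 2 → ℝ))ᶜ, ψ ‖h‖ := by
        rw [restrict_compl_singleton]
    _ = ∫⁻ h : ({0}ᶜ : Set (Fin 2 → ℝ)), ψ ‖(h : Fin 2 → ℝ)‖ ∂((volume).comap Subtype.val) :=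
        (lintegral_subtype_comap (measurableSet_singleton _).compl
          (fun h : Fin 2 → ℝ => ψ ‖h‖)).symm
    _ = ∫⁻ p : Metric.sphere (0 : Fin 2 → ℝ) 1 × Set.Ioi (0 : ℝ), ψ p.2
          ∂((volume : Measure (Fin 2 → ℝ)).toSphere.prod (Measure.volumeIoiPow 1)) := by
        have := (volume : Measure (Fin 2 → ℝ)).measurePreserving_homeomorphUnitSphereProd
        rw [hd] at this
        rw [← this.lintegral_comp (f := fun p => ψ p.2)]
        · simp
        · exact hψ.comp (measurable_subtype_coe.comp measurable_snd)
    _ = 8 * ∫⁻ r : Set.Ioi (0 : ℝ), ψ r ∂(Measure.volumeIoiPow 1) := by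
        rw [lintegral_prod]
        · simp only [lintegral_const]
          rw [Measure.toSphere_apply_univ, hd, mul_comm]
          congr 1
          rw [Real.volume_pi_ball _ (by norm_num)]
          simp
          norm_num
        · exact (hψ.comp (measurable_subtype_coe.comp measurable_snd)).aemeasurable
    _ = _ := by
        rw [Measure.volumeIoiPow, lintegral_withDensity_eq_lintegral_mul]
        · congr 1
          rw [← lintegral_subtype_comap measurableSet_Ioi (fun r : ℝ => ENNReal.ofReal r * ψ r)]
          simp
        · fun_prop
        · exact hψ.comp measurable_subtype_coe

lemma polar_ball {ψ : ℝ → ℝ≥0∞} (hψ : Measurable ψ) :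
    ∫⁻ h in Metric.ball (0 : Fin 2 → ℝ) (1/2), ψ ‖h‖ =
      8 * ∫⁻ r in Set.Ioo (0 : ℝ) (1/2), ENNReal.ofReal r * ψ r := by
  have h1 := polar_univ (hψ.indicator (measurableSet_Iio (a := (1/2 : ℝ))))
  have h2 : ∫⁻ h in Metric.ball (0 : Fin 2 → ℝ) (1/2), ψ ‖h‖ =
      ∫⁻ h : Fin 2 → ℝ, (Set.Iio (1/2 : ℝ)).indicator ψ ‖h‖ := by
    rw [← lintegral_indicator Metric.isOpen_ball.measurableSet]
    refine lintegral_congr fun h => ?_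
    simp [Set.indicator]
  rw [h2, h1]
  congr 1
  have : Set.Ioo (0 : ℝ) (1/2) = Set.Iio (1/2) ∩ Set.Ioi 0 := by ext; simp [and_comm]
  rw [this, ← Measure.restrict_restrict measurableSet_Iio,
    ← lintegral_indicator measurableSet_Iio]
  refine lintegral_congr fun r => ?_
  by_cases hr : r ∈ Set.Iio (1/2 : ℝ) <;> simp [Set.indicator, hr]

lemma cs_enn {α : Type*} [MeasurableSpace α] {μ : Measure α} {f g : α → ℝ≥0∞}
    (hf : AEMeasurable f μ) (hg : AEMeasurable g μ) :
    (∫⁻ x, f x * g x ∂μ) ^ 2 ≤ (∫⁻ x, f x ^ 2 ∂μ) * ∫⁻ x, g x ^ 2 ∂μ := by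
  have h := ENNReal.lintegral_mul_le_Lp_mul_Lq μ Real.HolderConjugate.two_two hf hg
  simp only [Pi.mul_apply, ENNReal.rpow_two] at h
  calc (∫⁻ x, f x * g x ∂μ) ^ 2 ≤ _ := pow_le_pow_left' h 2
    _ = _ := by
      rw [mul_pow, ← ENNReal.rpow_two, ← ENNReal.rpow_two, ← ENNReal.rpow_mul, ← ENNReal.rpow_mul]
      norm_num

lemma ftc_enn {u u' : ℝ → ℝ} (hu : ∀ t, HasDerivAt u (u' t) t) (hc : Continuous u') {ρ : ℝ}
    (hρ : 0 < ρ) : ‖u ρ - u 0‖ₑ ≤ ∫⁻ t in Set.Ioo 0 ρ, ‖u' t‖ₑ := by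
  have h := intervalIntegral.integral_eq_sub_of_hasDerivAt (fun t _ => hu t)
    (hc.intervalIntegrable 0 ρ)
  rw [← h, intervalIntegral.integral_of_le hρ.le, integral_Ioc_eq_integral_Ioo]
  exact enorm_integral_le_lintegral_enorm _

lemma wcs {u u' : ℝ → ℝ} (hu : ∀ t, HasDerivAt u (u' t) t) (hc : Continuous u') {ρ : ℝ}
    (hρ : 0 < ρ) : ‖u ρ - u 0‖ₑ ^ 2 ≤
      2 * ENNReal.ofReal (√ρ) * ∫⁻ t in Set.Ioo 0 ρ, ENNReal.ofReal (√t) * ‖u' t‖ₑ ^ 2 := by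
  have h1 : ∫⁻ t in Set.Ioo 0 ρ, ‖u' t‖ₑ = ∫⁻ t in Set.Ioo 0 ρ,
      ENNReal.ofReal (t ^ (-(1/4) : ℝ)) * (ENNReal.ofReal (t ^ (1/4 : ℝ)) * ‖u' t‖ₑ) := by
    refine setLIntegral_congr_fun measurableSet_Ioo fun t ht => ?_
    have h0 : (0 : ℝ) < t := ht.1
    rw [← mul_assoc, ← ENNReal.ofReal_mul (by positivity), ← Real.rpow_add h0]
    norm_num
  have h2 : ∫⁻ t in Set.Ioo 0 ρ, (ENNReal.ofReal (t ^ (-(1/4) : ℝ))) ^ 2 =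
      2 * ENNReal.ofReal (√ρ) := by
    have e : ∫⁻ t in Set.Ioo 0 ρ, (ENNReal.ofReal (t ^ (-(1/4) : ℝ))) ^ 2 =
        ∫⁻ t in Set.Ioo 0 ρ, ENNReal.ofReal (t ^ (-(1/2) : ℝ)) := by
      refine setLIntegral_congr_fun measurableSet_Ioo fun t ht => ?_
      have h0 : (0 : ℝ) < t := ht.1
      rw [← ENNReal.ofReal_pow (by positivity), ← Real.rpow_natCast, ← Real.rpow_mul h0.le]
      norm_num
    rw [e, ← ofReal_integral_eq_lintegral_ofReal]
    · rw [← integral_Ioc_eq_integral_Ioo, ← intervalIntegral.integral_of_le hρ.le,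
        integral_rpow (by norm_num)]
      norm_num
      rw [← Real.sqrt_eq_rpow, mul_comm, div_eq_mul_inv, ENNReal.ofReal_mul (Real.sqrt_nonneg _)]
      norm_num
    · have := (intervalIntegral.intervalIntegrable_rpow' (a := 0) (b := ρ) (r := -(1/2))
        (by norm_num))
      rw [intervalIntegrable_iff_integrableOn_Ioo_of_le hρ.le] at this
      exact this
    · filter_upwards [ae_restrict_mem measurableSet_Ioo] with t ht
      exact Real.rpow_nonneg ht.1.le _
  have h3 : ∫⁻ t in Set.Ioo 0 ρ, (ENNReal.ofReal (t ^ (1/4 : ℝ)) * ‖u' t‖ₑ) ^ 2 =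
      ∫⁻ t in Set.Ioo 0 ρ, ENNReal.ofReal (√t) * ‖u' t‖ₑ ^ 2 := by
    refine setLIntegral_congr_fun measurableSet_Ioo fun t ht => ?_
    have h0 : (0 : ℝ) < t := ht.1
    rw [mul_pow, ← ENNReal.ofReal_pow (by positivity), ← Real.rpow_natCast, ← Real.rpow_mul h0.le,
      Real.sqrt_eq_rpow]
    norm_num
  rw [← h2, ← h3]
  refine (pow_le_pow_left' ((ftc_enn hu hc hρ).trans h1.le) 2).trans ?_
  refine cs_enn ?_ ?_
  · exact (by fun_prop : Measurable fun t : ℝ => ENNReal.ofReal (t ^ (-(1/4) : ℝ))).aemeasurable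
  · refine Measurable.aemeasurable ?_
    exact (by fun_prop : Measurable fun t : ℝ => ENNReal.ofReal (t ^ ((1/4) : ℝ))).mul
      hc.enorm.measurable

lemma ucs {u u' : ℝ → ℝ} (hu : ∀ t, HasDerivAt u (u' t) t) (hc : Continuous u') :
    ‖u 1 - u 0‖ₑ ^ 2 ≤ ∫⁻ t in Set.Ioo (0:ℝ) 1, ‖u' t‖ₑ ^ 2 := by
  refine (pow_le_pow_left' (ftc_enn hu hc one_pos) 2).trans ?_
  have := cs_enn (μ := volume.restrict (Set.Ioo (0:ℝ) 1)) (f := fun _ => 1)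
    (g := fun t => ‖u' t‖ₑ) aemeasurable_const hc.enorm.measurable.aemeasurable
  simpa using this

lemma hardy {A : ℝ → ℝ≥0∞} (hA : Measurable A) :
    ∫⁻ r in Set.Ioo (0:ℝ) (1/2), ENNReal.ofReal (r ^ (-(3/2) : ℝ)) *
      ∫⁻ t in Set.Ioo 0 r, ENNReal.ofReal (√t) * A t ≤ 2 * ∫⁻ t in Set.Ioo (0:ℝ) 1, A t := by
  set B : ℝ → ℝ≥0∞ := fun t => ENNReal.ofReal (√t) * A t with hB
  have hBm : Measurable B := by
    refine Measurable.mul ?_ hA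
    fun_prop
  have h1 : ∀ r ∈ Set.Ioo (0:ℝ) (1/2), ENNReal.ofReal (r ^ (-(3/2) : ℝ)) * ∫⁻ t in Set.Ioo 0 r, B t
      = ∫⁻ t in Set.Ioo (0:ℝ) 1, (Set.Ioi t).indicator
          (fun r => ENNReal.ofReal (r ^ (-(3/2) : ℝ))) r * B t := by
    intro r hr
    rw [← lintegral_const_mul _ hBm]
    have : Set.Ioo 0 r = Set.Iio r ∩ Set.Ioo (0:ℝ) 1 := by
      ext t; simp only [Set.mem_Ioo, Set.mem_inter_iff, Set.mem_Iio]
      constructor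
      · rintro ⟨a, b⟩; exact ⟨b, a, by linarith [hr.2]⟩
      · rintro ⟨a, b, c⟩; exact ⟨b, a⟩
    rw [this, ← Measure.restrict_restrict measurableSet_Iio, ← lintegral_indicator measurableSet_Iio]
    refine lintegral_congr fun t => ?_
    by_cases h : t < r <;> simp [Set.indicator, h]
  rw [setLIntegral_congr_fun measurableSet_Ioo h1, lintegral_lintegral_swap,
    ← lintegral_const_mul _ hA]
  · refine setLIntegral_mono (hA.const_mul _) fun t ht => ?_
    have h0 : (0:ℝ) < t := ht.1
    rw [lintegral_mul_const]
    · have h2 : ∫⁻ r in Set.Ioo (0:ℝ) (1/2), (Set.Ioi t).indicator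
          (fun r => ENNReal.ofReal (r ^ (-(3/2) : ℝ))) r ≤ ENNReal.ofReal (2 / √t) := by
        calc _ ≤ ∫⁻ r, (Set.Ioi t).indicator (fun r => ENNReal.ofReal (r ^ (-(3/2) : ℝ))) r :=
              setLIntegral_le_lintegral _ _
          _ = ∫⁻ r in Set.Ioi t, ENNReal.ofReal (r ^ (-(3/2) : ℝ)) :=
              lintegral_indicator measurableSet_Ioi _
          _ = _ := by
              rw [← ofReal_integral_eq_lintegral_ofReal]
              · rw [integral_Ioi_rpow_of_lt (by norm_num) h0]
                congr 1
                norm_num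
                rw [Real.rpow_neg h0.le, ← Real.sqrt_eq_rpow]
                field_simp
              · exact integrableOn_Ioi_rpow_of_lt (by norm_num) h0
              · filter_upwards [ae_restrict_mem measurableSet_Ioi] with r hr
                exact Real.rpow_nonneg (h0.le.trans hr.le) _
      refine (mul_le_mul_left h2 _).trans (le_of_eq ?_)
      rw [hB]
      simp only
      rw [← mul_assoc, ← ENNReal.ofReal_mul (by positivity)]
      have : 2 / √t * √t = 2 := by field_simp
      rw [this]
      norm_num
    · refine Measurable.indicator ?_ measurableSet_Ioi
      fun_prop
  · refine Measurable.aemeasurable ?_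
    refine Measurable.mul ?_ (hBm.comp measurable_snd)
    have : (fun p : ℝ × ℝ => (Set.Ioi p.2).indicator (fun r => ENNReal.ofReal (r ^ (-(3/2) : ℝ))) p.1)
        = {p : ℝ × ℝ | p.2 < p.1}.indicator (fun p => ENNReal.ofReal (p.1 ^ (-(3/2) : ℝ))) := by
      ext p
      simp [Set.indicator]
    exact this ▸ Measurable.indicator (by fun_prop) (measurableSet_lt measurable_snd measurable_fst)

lemma ext3_add_lat (x : Fin 2 → ℝ) (k : Fin 2 → ℤ) (z : ℝ) :
    ext3 (x + fun i => (k i : ℝ)) z = ext3 x z + lat3 k := by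
  ext i
  fin_cases i <;> simp [ext3, lat3]

lemma per3_slice {E : Type*} {F : (Fin 3 → ℝ) → E} (hF : Per3 F) (z : ℝ) :
    Per2 (fun x => F (ext3 x z)) := by
  intro x k
  simp only
  rw [ext3_add_lat, hF]

lemma per3_fderiv {E : Type*} [NormedAddCommGroup E] [NormedSpace ℝ E] {F : (Fin 3 → ℝ) → E}
    (hF : Per3 F) : Per3 (fderiv ℝ F) := by
  intro y k
  rw [← fderiv_comp_add_right]
  congr 1
  ext z
  exact hF z k

lemma continuous_ext3 : Continuous fun p : (Fin 2 → ℝ) × ℝ => ext3 p.1 p.2 := by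
  unfold ext3
  fun_prop

/-- horizontal lift of a plane vector -/
def lift3 (h : Fin 2 → ℝ) : Fin 3 → ℝ := ![h 0, h 1, 0]

lemma norm_lift3 (h : Fin 2 → ℝ) : ‖lift3 h‖ ≤ ‖h‖ := by
  rw [pi_norm_le_iff_of_nonneg (norm_nonneg _)]
  intro i
  fin_cases i
  · exact norm_le_pi_norm h 0
  · exact norm_le_pi_norm h 1
  · simp [lift3]

lemma slice_z {E : Type*} [NormedAddCommGroup E] [NormedSpace ℝ E] {F : (Fin 3 → ℝ) → E}
    (hF : Differentiable ℝ F) (x : Fin 2 → ℝ) (ε t : ℝ) :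
    HasDerivAt (fun t => F (ext3 x (ε * (1 - t))))
      (fderiv ℝ F (ext3 x (ε * (1 - t))) (Pi.single 2 (-ε))) t := by
  have h : HasDerivAt (fun t => ext3 x (ε * (1 - t))) (Pi.single 2 (-ε)) t := by
    rw [hasDerivAt_pi]
    intro i
    fin_cases i
    · simpa [ext3] using hasDerivAt_const t (x 0)
    · simpa [ext3] using hasDerivAt_const t (x 1)
    · simpa [ext3] using ((hasDerivAt_id t).const_sub 1).const_mul ε
  exact (hF _).hasFDerivAt.comp_hasDerivAt t h

lemma slice_h {E : Type*} [NormedAddCommGroup E] [NormedSpace ℝ E] {F : (Fin 3 → ℝ) → E}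
    (hF : Differentiable ℝ F) (x h : Fin 2 → ℝ) (z t : ℝ) :
    HasDerivAt (fun t : ℝ => F (ext3 (x + t • h) z))
      (fderiv ℝ F (ext3 (x + t • h) z) (lift3 h)) t := by
  have h : HasDerivAt (fun t : ℝ => ext3 (x + t • h) z) (lift3 h) t := by
    rw [hasDerivAt_pi]
    intro i
    fin_cases i
    · simpa [ext3, lift3] using ((hasDerivAt_id t).mul_const (h 0)).const_add (x 0)
    · simpa [ext3, lift3] using ((hasDerivAt_id t).mul_const (h 1)).const_add (x 1)
    · simpa [ext3, lift3] using hasDerivAt_const t z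
  exact (hF _).hasFDerivAt.comp_hasDerivAt t h

/-- slice energy -/
def sliceA (F : (Fin 3 → ℝ) → ℝ) (ε t : ℝ) : ℝ≥0∞ :=
  ∫⁻ x in Q2, ‖fderiv ℝ F (ext3 x (ε * (1 - t)))‖ₑ ^ 2

lemma opn_sq {E F : Type*} [NormedAddCommGroup E] [NormedSpace ℝ E] [NormedAddCommGroup F]
    [NormedSpace ℝ F] (L : E →L[ℝ] F) (v : E) : ‖L v‖ₑ ^ 2 ≤ ‖L‖ₑ ^ 2 * ‖v‖ₑ ^ 2 := by
  rw [← mul_pow]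
  exact pow_le_pow_left' (L.le_opENorm v) 2

section trace
variable {F : (Fin 3 → ℝ) → ℝ} (hF : ContDiff ℝ (⊤ : ℕ∞) F) (hP : Per3 F) {ε : ℝ}
  (hε : ε = 1 ∨ ε = -1)
include hF

lemma cont_fd : Continuous (fderiv ℝ F) := hF.continuous_fderiv (by simp)

lemma cont_slice (ε : ℝ) : Continuous fun p : (Fin 2 → ℝ) × ℝ =>
    fderiv ℝ F (ext3 p.1 (ε * (1 - p.2))) :=
  (cont_fd hF).comp (continuous_ext3.comp (by fun_prop : Continuous fun p : (Fin 2 → ℝ) × ℝ =>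
    (p.1, ε * (1 - p.2))))

lemma meas_slice (ε : ℝ) : Measurable fun p : (Fin 2 → ℝ) × ℝ =>
    ‖fderiv ℝ F (ext3 p.1 (ε * (1 - p.2)))‖ₑ ^ 2 :=
  (cont_slice hF ε).enorm.measurable.pow_const 2

lemma meas_slice_z (z : ℝ) : Measurable fun x : Fin 2 → ℝ =>
    ‖fderiv ℝ F (ext3 x z)‖ₑ ^ 2 := by
  have : Continuous fun x : Fin 2 → ℝ => fderiv ℝ F (ext3 x z) :=
    (cont_fd hF).comp (continuous_ext3.comp (by fun_prop : Continuous fun x : Fin 2 → ℝ => (x, z)))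
  exact this.enorm.measurable.pow_const 2

lemma meas_sliceA (ε : ℝ) : Measurable (sliceA F ε) := by
  unfold sliceA
  exact Measurable.lintegral_prod_left' (meas_slice hF ε)

include hε in
lemma vert_le {ρ : ℝ} (hρ : 0 < ρ) :
    ∫⁻ x in Q2, ‖F (ext3 x (ε * (1 - ρ))) - F (ext3 x (ε * (1 - 0)))‖ₑ ^ 2 ≤
      2 * ENNReal.ofReal (√ρ) * ∫⁻ t in Set.Ioo 0 ρ, ENNReal.ofReal (√t) * sliceA F ε t := by
  have hd : Differentiable ℝ F := hF.differentiable (by simp)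
  have hn : ‖(Pi.single 2 (-ε) : Fin 3 → ℝ)‖ₑ = 1 := by
    rcases hε with rfl | rfl <;> simp [enorm_eq_nnnorm, Pi.nnnorm_single]
  have h1 : ∀ x : Fin 2 → ℝ, ‖F (ext3 x (ε * (1 - ρ))) - F (ext3 x (ε * (1 - 0)))‖ₑ ^ 2 ≤
      2 * ENNReal.ofReal (√ρ) * ∫⁻ t in Set.Ioo 0 ρ,
        ENNReal.ofReal (√t) * ‖fderiv ℝ F (ext3 x (ε * (1 - t)))‖ₑ ^ 2 := by
    intro x
    have hcx : Continuous fun t => fderiv ℝ F (ext3 x (ε * (1 - t))) :=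
      (cont_slice hF ε).comp (by fun_prop : Continuous fun t : ℝ => (x, t))
    refine (wcs (slice_z hd x ε) (hcx.clm_apply continuous_const) hρ).trans ?_
    refine mul_le_mul_right (lintegral_mono fun t => mul_le_mul_right ?_ _) _
    refine (opn_sq _ _).trans ?_
    rw [hn]; simp
  have hm : Measurable fun p : (Fin 2 → ℝ) × ℝ =>
      ENNReal.ofReal (√p.2) * ‖fderiv ℝ F (ext3 p.1 (ε * (1 - p.2)))‖ₑ ^ 2 :=
    Measurable.mul (by fun_prop) (meas_slice hF ε)
  refine (lintegral_mono h1).trans ?_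
  rw [lintegral_const_mul]
  · refine mul_le_mul_right (le_of_eq ?_) _
    rw [lintegral_lintegral_swap hm.aemeasurable]
    refine lintegral_congr fun t => ?_
    have hmt : Measurable fun x : Fin 2 → ℝ => ‖fderiv ℝ F (ext3 x (ε * (1 - t)))‖ₑ ^ 2 :=
      meas_slice_z hF _
    exact lintegral_const_mul _ hmt
  · exact Measurable.lintegral_prod_right' hm

include hP in
lemma horiz_le (h : Fin 2 → ℝ) (ρ : ℝ) :
    ∫⁻ x in Q2, ‖F (ext3 (x + h) (ε * (1 - ρ))) - F (ext3 x (ε * (1 - ρ)))‖ₑ ^ 2 ≤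
      ‖h‖ₑ ^ 2 * sliceA F ε ρ := by
  have hd : Differentiable ℝ F := hF.differentiable (by simp)
  set z := ε * (1 - ρ) with hz
  have h1 : ∀ x : Fin 2 → ℝ, ‖F (ext3 (x + h) z) - F (ext3 x z)‖ₑ ^ 2 ≤
      ‖h‖ₑ ^ 2 * ∫⁻ t in Set.Ioo (0:ℝ) 1, ‖fderiv ℝ F (ext3 (x + t • h) z)‖ₑ ^ 2 := by
    intro x
    have hcx : Continuous fun t : ℝ => fderiv ℝ F (ext3 (x + t • h) z) :=
      (cont_fd hF).comp (continuous_ext3.comp (by fun_prop : Continuous fun t : ℝ => (x + t • h, z)))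
    have := ucs (slice_h hd x h z) (hcx.clm_apply continuous_const)
    simp only [one_smul, zero_smul, add_zero] at this
    refine this.trans ?_
    rw [← lintegral_const_mul _ (hcx.enorm.measurable.pow_const 2)]
    refine lintegral_mono fun t => ?_
    refine (opn_sq _ _).trans ?_
    rw [mul_comm]
    refine mul_le_mul_left (pow_le_pow_left' ?_ 2) _
    rw [enorm_le_iff_norm_le]
    exact norm_lift3 h
  have hm : Measurable fun p : (Fin 2 → ℝ) × ℝ =>
      ‖fderiv ℝ F (ext3 (p.1 + p.2 • h) z)‖ₑ ^ 2 := by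
    refine Measurable.pow_const (Continuous.measurable ?_) 2
    exact ((cont_fd hF).comp (continuous_ext3.comp
      (by fun_prop : Continuous fun p : (Fin 2 → ℝ) × ℝ => (p.1 + p.2 • h, z)))).enorm
  refine (lintegral_mono h1).trans ?_
  rw [lintegral_const_mul _ (Measurable.lintegral_prod_right' hm)]
  refine mul_le_mul_right (le_of_eq ?_) _
  rw [lintegral_lintegral_swap hm.aemeasurable]
  have h2 : ∀ t : ℝ, ∫⁻ x in Q2, ‖fderiv ℝ F (ext3 (x + t • h) z)‖ₑ ^ 2 = sliceA F ε ρ := by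
    intro t
    unfold sliceA
    refine lint_per (G := fun x => ‖fderiv ℝ F (ext3 x z)‖ₑ ^ 2) ?_ (t • h)
    intro x k
    have := per3_slice (per3_fderiv hP) z x k
    simp only at this ⊢
    rw [this]
  simp [h2]

include hP hε in
lemma modN_trace {h : Fin 2 → ℝ} (hh : 0 < ‖h‖) :
    modN (fun x => F (ext3 x ε)) h ≤
      12 * (ENNReal.ofReal (√‖h‖) * ∫⁻ t in Set.Ioo 0 ‖h‖, ENNReal.ofReal (√t) * sliceA F ε t) +
      4 * (ENNReal.ofReal (‖h‖ ^ 2) * sliceA F ε ‖h‖) := by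
  set ρ := ‖h‖ with hρ
  have hc : ∀ z, Continuous fun x => F (ext3 x z) := fun z =>
    hF.continuous.comp (continuous_ext3.comp (by fun_prop : Continuous fun x : Fin 2 → ℝ => (x, z)))
  have hc' : ∀ z, Continuous fun x => F (ext3 (x + h) z) := fun z =>
    (hc z).comp (continuous_add_const h)
  set V : (Fin 2 → ℝ) → ℝ := fun x => F (ext3 x (ε * (1 - ρ))) - F (ext3 x (ε * (1 - 0))) with hV
  set D : (Fin 2 → ℝ) → ℝ := fun x => F (ext3 (x + h) (ε * (1 - ρ))) - F (ext3 x (ε * (1 - ρ)))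
    with hD
  have hVc : Continuous V := (hc _).sub (hc _)
  have hDc : Continuous D := (hc' _).sub (hc _)
  have hVp : Per2 V := by
    intro x k
    have h1 := per3_slice hP (ε * (1 - ρ)) x k
    have h2 := per3_slice hP (ε * (1 - 0)) x k
    simp only at h1 h2
    simp only [hV, h1, h2]
  have e : modN (fun x => F (ext3 x ε)) h = sq2 (fun x => - V (x + h) + (D x + V x)) := by
    unfold modN sq2
    refine lintegral_congr fun x => ?_
    congr 2
    simp only [hV, hD, sub_zero, mul_one]
    ring
  rw [e]
  have s1 : sq2 (fun x => - V (x + h)) = sq2 V := by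
    rw [sq2_neg (fun x => V (x + h)), sq2_shift hVp]
  have s2 := sq2_add_le (g := V) hDc
  have s3 := sq2_add_le (f := fun x => - V (x + h)) (g := fun x => D x + V x)
    (hVc.comp (continuous_add_const h)).neg
  rw [s1] at s3
  have s4 : sq2 V ≤ _ := vert_le hF hε hh
  have s5 : sq2 D ≤ _ := horiz_le hF hP (ε := ε) h ρ
  rw [show ‖h‖ₑ ^ 2 = ENNReal.ofReal (ρ ^ 2) by
    rw [ENNReal.ofReal_pow (norm_nonneg _), ofReal_norm]] at s5
  calc _ ≤ 2 * sq2 V + 2 * (2 * sq2 D + 2 * sq2 V) := s3.trans (by gcongr)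
    _ = 6 * sq2 V + 4 * sq2 D := by ring
    _ ≤ _ := add_le_add (mul_le_mul_right s4 6) (mul_le_mul_right s5 4)
    _ = _ := by ring

include hP hε in
lemma gag_trace : gagliardo2Sq (1/2) (fun x => F (ext3 x ε)) ≤
    224 * ∫⁻ y in Q3, ‖fderiv ℝ F y‖ₑ ^ 2 := by
  have hc : Continuous fun x => F (ext3 x ε) :=
    hF.continuous.comp (continuous_ext3.comp (by fun_prop : Continuous fun x : Fin 2 → ℝ => (x, ε)))
  have hAm := meas_sliceA hF ε
  rw [gag_eq (per3_slice hP ε) hc]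
  set I : ℝ → ℝ≥0∞ := fun r => ∫⁻ t in Set.Ioo 0 r, ENNReal.ofReal (√t) * sliceA F ε t with hI
  have hIm : Measurable I := by
    refine Monotone.measurable fun a b hab => ?_
    exact lintegral_mono_set (Set.Ioo_subset_Ioo_right hab)
  set ψ : ℝ → ℝ≥0∞ := fun r => (12 * (ENNReal.ofReal (√r) * I r) +
      4 * (ENNReal.ofReal (r ^ 2) * sliceA F ε r)) / ENNReal.ofReal (r ^ 3) with hψ
  have hψm : Measurable ψ := by
    refine Measurable.div (Measurable.add (Measurable.const_mul (Measurable.mul ?_ hIm) _)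
      (Measurable.const_mul (Measurable.mul ?_ hAm) _)) ?_ <;> fun_prop
  have h1 : ∫⁻ h in Metric.ball (0 : Fin 2 → ℝ) (1/2),
      modN (fun x => F (ext3 x ε)) h / ENNReal.ofReal (‖h‖ ^ 3) ≤
      ∫⁻ h in Metric.ball (0 : Fin 2 → ℝ) (1/2), ψ ‖h‖ := by
    refine lintegral_mono fun h => ?_
    rcases eq_or_ne h 0 with rfl | hh
    · simp [modN]
    · exact ENNReal.div_le_div_right (modN_trace hF hP hε (norm_pos_iff.2 hh)) _
  refine h1.trans ?_
  rw [polar_ball hψm]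
  have h2 : ∫⁻ r in Set.Ioo (0 : ℝ) (1/2), ENNReal.ofReal r * ψ r =
      ∫⁻ r in Set.Ioo (0 : ℝ) (1/2), (12 * (ENNReal.ofReal (r ^ (-(3/2) : ℝ)) * I r) +
        4 * sliceA F ε r) := by
    refine setLIntegral_congr_fun measurableSet_Ioo fun r hr => ?_
    have h0 : 0 < r := hr.1
    simp only [hψ]
    rw [div_eq_mul_inv, ← ENNReal.ofReal_inv_of_pos (by positivity)]
    have e1 : ENNReal.ofReal (r ^ (-(3/2) : ℝ)) = ENNReal.ofReal r * ENNReal.ofReal (√r) *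
        ENNReal.ofReal (r ^ 3)⁻¹ := by
      rw [← ENNReal.ofReal_mul h0.le, ← ENNReal.ofReal_mul (by positivity)]
      congr 1
      rw [Real.sqrt_eq_rpow, ← Real.rpow_natCast, ← Real.rpow_neg h0.le]
      nth_rewrite 2 [← Real.rpow_one r]
      rw [← Real.rpow_add h0, ← Real.rpow_add h0]
      norm_num
    have e2 : ENNReal.ofReal r * ENNReal.ofReal (r ^ 2) * ENNReal.ofReal (r ^ 3)⁻¹ = 1 := by
      rw [← ENNReal.ofReal_mul h0.le, ← ENNReal.ofReal_mul (by positivity)]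
      have : r * r ^ 2 * (r ^ 3)⁻¹ = 1 := by field_simp
      rw [this]; simp
    rw [e1]
    calc _ = 12 * (ENNReal.ofReal r * ENNReal.ofReal (√r) * ENNReal.ofReal (r ^ 3)⁻¹ * I r) +
        4 * ((ENNReal.ofReal r * ENNReal.ofReal (r ^ 2) * ENNReal.ofReal (r ^ 3)⁻¹) *
          sliceA F ε r) := by ring
      _ = _ := by rw [e2, one_mul]
  rw [h2, lintegral_add_right _ (hAm.const_mul _), lintegral_const_mul _ hAm, lintegral_const_mul]
  · have h3 := hardy hAm
    have h4 : ∫⁻ r in Set.Ioo (0 : ℝ) (1/2), sliceA F ε r ≤ ∫⁻ r in Set.Ioo (0 : ℝ) 1, sliceA F ε r :=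
      lintegral_mono_set (Set.Ioo_subset_Ioo_right (by norm_num))
    have h5 : ∫⁻ r in Set.Ioo (0 : ℝ) 1, sliceA F ε r ≤ ∫⁻ y in Q3, ‖fderiv ℝ F y‖ₑ ^ 2 :=
      slice_le (G := fun y => ‖fderiv ℝ F y‖ₑ ^ 2)
        ((cont_fd hF).enorm.measurable.pow_const 2) hε
    calc _ ≤ 8 * (12 * (2 * ∫⁻ r in Set.Ioo (0 : ℝ) 1, sliceA F ε r) +
          4 * ∫⁻ r in Set.Ioo (0 : ℝ) 1, sliceA F ε r) := by gcongr
      _ = 224 * ∫⁻ r in Set.Ioo (0 : ℝ) 1, sliceA F ε r := by ring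
      _ ≤ _ := by gcongr
  · refine Measurable.mul (by fun_prop) hIm

include hε in
lemma l2_trace : ∫⁻ x in Q2, ‖F (ext3 x ε)‖ₑ ^ 2 ≤
    2 * (∫⁻ y in Q3, ‖F y‖ₑ ^ 2) + 4 * ∫⁻ y in Q3, ‖fderiv ℝ F y‖ₑ ^ 2 := by
  have hc : ∀ z, Continuous fun x => F (ext3 x z) := fun z =>
    hF.continuous.comp (continuous_ext3.comp (by fun_prop : Continuous fun x : Fin 2 → ℝ => (x, z)))
  set Z := ∫⁻ y in Q3, ‖fderiv ℝ F y‖ₑ ^ 2 with hZ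
  have h5 : ∫⁻ r in Set.Ioo (0 : ℝ) 1, sliceA F ε r ≤ Z :=
      slice_le (G := fun y => ‖fderiv ℝ F y‖ₑ ^ 2)
        ((cont_fd hF).enorm.measurable.pow_const 2) hε
  have h6 : ∫⁻ t in Set.Ioo (0 : ℝ) 1, ∫⁻ x in Q2, ‖F (ext3 x (ε * (1 - t)))‖ₑ ^ 2 ≤
      ∫⁻ y in Q3, ‖F y‖ₑ ^ 2 :=
    slice_le (G := fun y => ‖F y‖ₑ ^ 2) (hF.continuous.enorm.measurable.pow_const 2) hε
  have hm : Measurable fun t => ∫⁻ x in Q2, ‖F (ext3 x (ε * (1 - t)))‖ₑ ^ 2 := by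
    refine Measurable.lintegral_prod_left' (f := fun p : (Fin 2 → ℝ) × ℝ =>
      ‖F (ext3 p.1 (ε * (1 - p.2)))‖ₑ ^ 2) (Measurable.pow_const (Continuous.measurable ?_) 2)
    exact (hF.continuous.comp (continuous_ext3.comp (by fun_prop : Continuous fun p : (Fin 2 → ℝ) × ℝ =>
      (p.1, ε * (1 - p.2))))).enorm
  have h7 : ∀ t ∈ Set.Ioo (0:ℝ) 1, ∫⁻ x in Q2, ‖F (ext3 x ε)‖ₑ ^ 2 ≤
      2 * (∫⁻ x in Q2, ‖F (ext3 x (ε * (1 - t)))‖ₑ ^ 2) + 4 * Z := by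
    intro t ht
    have e : ∫⁻ x in Q2, ‖F (ext3 x ε)‖ₑ ^ 2 = sq2 fun x => F (ext3 x (ε * (1 - t))) +
        - (F (ext3 x (ε * (1 - t))) - F (ext3 x (ε * (1 - 0)))) := by
      unfold sq2
      refine lintegral_congr fun x => ?_
      congr 2
      simp
    rw [e]
    refine (sq2_add_le (hc _)).trans ?_
    refine add_le_add le_rfl ?_
    rw [sq2_neg]
    have h8 := vert_le hF hε ht.1
    have h9 : ENNReal.ofReal (√t) ≤ 1 := by
      rw [ENNReal.ofReal_le_one, Real.sqrt_le_one]
      exact ht.2.le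
    have h10 : ∫⁻ s in Set.Ioo 0 t, ENNReal.ofReal (√s) * sliceA F ε s ≤ Z := by
      refine le_trans ?_ h5
      refine le_trans ?_ (lintegral_mono_set (Set.Ioo_subset_Ioo_right ht.2.le))
      refine setLIntegral_mono' measurableSet_Ioo fun s hs => ?_
      refine mul_le_of_le_one_left (zero_le) ?_
      rw [ENNReal.ofReal_le_one, Real.sqrt_le_one]
      exact (hs.2.trans ht.2).le
    calc _ ≤ 2 * (2 * 1 * Z) := by
          refine mul_le_mul_right (h8.trans ?_) 2
          gcongr
      _ = 4 * Z := by ring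
  have h8 : ∫⁻ t in Set.Ioo (0:ℝ) 1, (∫⁻ x in Q2, ‖F (ext3 x ε)‖ₑ ^ 2) ≤
      ∫⁻ t in Set.Ioo (0:ℝ) 1, (2 * (∫⁻ x in Q2, ‖F (ext3 x (ε * (1 - t)))‖ₑ ^ 2) + 4 * Z) :=
    setLIntegral_mono' measurableSet_Ioo h7
  rw [lintegral_add_left (hm.const_mul _), lintegral_const_mul _ hm] at h8
  simp only [lintegral_const, MeasurableSet.univ, Measure.restrict_apply, Set.univ_inter,
    Real.volume_Ioo, sub_zero, ENNReal.ofReal_one, mul_one] at h8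
  exact h8.trans (by gcongr)

end trace

lemma HGamma2_half (f : (Fin 2 → ℝ) → ℝ) : HGamma2 (1/2) f =
    ((∫⁻ x in Q2, ‖f x‖ₑ ^ 2) + gagliardo2Sq (1/2) f) ^ (1/2 : ℝ) := by
  unfold HGamma2
  have hfl : ⌊(1/2 : ℝ)⌋₊ = 0 := by
    rw [Nat.floor_eq_zero]; norm_num
  rw [hfl]
  congr 2
  · simp only [zero_add, Finset.sum_range_one]
    refine lintegral_congr fun x => ?_
    rw [← enorm_eq_nnnorm, enorm_eq_iff_norm_eq.2 (norm_iteratedFDeriv_zero (𝕜 := ℝ) (f := f) (x := x))]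
  · rw [if_neg (by norm_num)]
    unfold gagliardo2Sq
    simp only [Nat.cast_zero, sub_zero]
    refine lintegral_congr fun x => lintegral_congr fun y => ?_
    congr 2
    rw [← enorm_eq_nnnorm, ← enorm_eq_nnnorm, enorm_eq_iff_norm_eq, iteratedFDeriv_zero_eq_comp]
    simp only [Function.comp]
    rw [← map_sub, LinearIsometryEquiv.norm_map]

lemma HOmega1_eq {E : Type*} [NormedAddCommGroup E] [NormedSpace ℝ E] (F : (Fin 3 → ℝ) → E) :
    HOmega3n 1 F = ((∫⁻ y in Q3, ‖F y‖ₑ ^ 2) + ∫⁻ y in Q3, ‖fderiv ℝ F y‖ₑ ^ 2) ^ (1/2 : ℝ) := by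
  unfold HOmega3n
  congr 1
  rw [Finset.sum_range_succ, Finset.sum_range_one]
  congr 1
  · refine lintegral_congr fun x => ?_
    rw [← enorm_eq_nnnorm, enorm_eq_iff_norm_eq.2 (norm_iteratedFDeriv_zero (𝕜 := ℝ) (f := F) (x := x))]
  · refine lintegral_congr fun x => ?_
    rw [← enorm_eq_nnnorm, enorm_eq_iff_norm_eq.2 (norm_iteratedFDeriv_one (𝕜 := ℝ) (f := F) (x := x))]

lemma trace_half {F : (Fin 3 → ℝ) → ℝ} (hF : ContDiff ℝ (⊤ : ℕ∞) F) (hP : Per3 F) {ε : ℝ}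
    (hε : ε = 1 ∨ ε = -1) : HGamma2 (1/2) (fun x => F (ext3 x ε)) ≤ 16 * HOmega3n 1 F := by
  rw [HGamma2_half, HOmega1_eq]
  have h16 : (16 : ℝ≥0∞) = (256 : ℝ≥0∞) ^ (1/2 : ℝ) := by
    rw [show (256 : ℝ≥0∞) = 16 ^ (2 : ℝ) by norm_num, ← ENNReal.rpow_mul]
    norm_num
  rw [h16, ← ENNReal.mul_rpow_of_nonneg _ _ (by norm_num)]
  refine ENNReal.rpow_le_rpow ?_ (by norm_num)
  calc _ ≤ (2 * (∫⁻ y in Q3, ‖F y‖ₑ ^ 2) + 4 * ∫⁻ y in Q3, ‖fderiv ℝ F y‖ₑ ^ 2) +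
      224 * ∫⁻ y in Q3, ‖fderiv ℝ F y‖ₑ ^ 2 := add_le_add (l2_trace hF hε) (gag_trace hF hP hε)
    _ = 2 * (∫⁻ y in Q3, ‖F y‖ₑ ^ 2) + 228 * ∫⁻ y in Q3, ‖fderiv ℝ F y‖ₑ ^ 2 := by ring
    _ ≤ 256 * (∫⁻ y in Q3, ‖F y‖ₑ ^ 2) + 256 * ∫⁻ y in Q3, ‖fderiv ℝ F y‖ₑ ^ 2 := by
        gcongr <;> norm_num
    _ = _ := by ring

/-- lower corner of the box -/
def loc3 : Fin 3 → ℝ := ![0, 0, -1]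
/-- upper corner of the box -/
def upc3 : Fin 3 → ℝ := ![1, 1, 1]

lemma loc_le_upc : loc3 ≤ upc3 := by
  intro i
  fin_cases i <;> simp [loc3, upc3]

lemma Q3_ae_Icc : Q3 =ᵐ[volume] Set.Icc loc3 upc3 := by
  have h : Q3 = Set.univ.pi fun i => Set.Ioo (loc3 i) (upc3 i) := by
    ext y
    simp [Q3, Set.mem_pi, Fin.forall_fin_succ, loc3, upc3]
  rw [h]
  exact Measure.univ_pi_Ioo_ae_eq_Icc

lemma intQ3 {u : (Fin 3 → ℝ) → ℝ} (hc : Continuous u) : IntegrableOn u Q3 := by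
  refine IntegrableOn.congr_set_ae ?_ Q3_ae_Icc
  exact hc.continuousOn.integrableOn_compact isCompact_Icc

/-- partial derivative -/
def pd {n : ℕ} {E : Type*} [NormedAddCommGroup E] [NormedSpace ℝ E] (j : Fin n)
    (g : (Fin n → ℝ) → E) : (Fin n → ℝ) → E := fun y => fderiv ℝ g y (Pi.single j 1)

lemma pd_smooth {n : ℕ} {E : Type*} [NormedAddCommGroup E] [NormedSpace ℝ E] (j : Fin n)
    {g : (Fin n → ℝ) → E} (hg : ContDiff ℝ (⊤ : ℕ∞) g) : ContDiff ℝ (⊤ : ℕ∞) (pd j g) :=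
  (hg.fderiv_right (by simp)).clm_apply contDiff_const

lemma pd_per {E : Type*} [NormedAddCommGroup E] [NormedSpace ℝ E] (j : Fin 3)
    {g : (Fin 3 → ℝ) → E} (hg : Per3 g) : Per3 (pd j g) := by
  intro y k
  unfold pd
  rw [per3_fderiv hg]

lemma div_face {g : (Fin 3 → ℝ) → ℝ} (hg : ContDiff ℝ (⊤ : ℕ∞) g) (j : Fin 3) :
    ∫ y in Q3, pd j g y =
      (∫ x in Set.Icc (loc3 ∘ j.succAbove) (upc3 ∘ j.succAbove), g (j.insertNth (upc3 j) x)) -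
      ∫ x in Set.Icc (loc3 ∘ j.succAbove) (upc3 ∘ j.succAbove), g (j.insertNth (loc3 j) x) := by
  rw [setIntegral_congr_set Q3_ae_Icc]
  have hd : Differentiable ℝ g := hg.differentiable (by simp)
  have e : ∀ y, ∑ i : Fin 3, (if i = j then fderiv ℝ g y else 0) (Pi.single i 1) = pd j g y := by
    intro y
    rw [Finset.sum_eq_single j]
    · simp [pd]
    · intro i _ hi; simp [hi]
    · simp
  have := integral_divergence_of_hasFDerivAt_off_countable' loc3 upc3 loc_le_upc
    (fun i => if i = j then g else 0) (fun i y => if i = j then fderiv ℝ g y else 0) ∅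
    Set.countable_empty ?_ ?_ ?_
  · simp only [e] at this
    rw [this, Finset.sum_eq_single j]
    · simp
    · intro i _ hi; simp [hi]
    · simp
  · intro i
    by_cases h : i = j
    · simpa [h] using hd.continuous.continuousOn
    · simp only [h, if_false]
      exact continuousOn_const
  · intro y _ i
    by_cases h : i = j
    · simpa [h] using (hd y).hasFDerivAt
    · simp only [h, if_false]
      exact hasFDerivAt_const _ _
  · simp only [e]
    exact (pd_smooth j hg).continuous.continuousOn.integrableOn_compact isCompact_Icc

lemma int_pd_h {g : (Fin 3 → ℝ) → ℝ} (hg : ContDiff ℝ (⊤ : ℕ∞) g) (hP : Per3 g) (l : Fin 2) :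
    ∫ y in Q3, pd l.castSucc g y = 0 := by
  rw [div_face hg, sub_eq_zero]
  refine integral_congr_ae (Filter.Eventually.of_forall fun x => ?_)
  have h := hP (l.castSucc.insertNth (loc3 l.castSucc) x) (Pi.single l 1)
  simp only
  rw [← h]
  congr 1
  ext i
  fin_cases l
  · fin_cases i
    · simp [lat3, upc3, loc3]
    · have := Fin.insertNth_apply_succAbove (α := fun _ : Fin 3 => ℝ) 0 (1:ℝ) x 0
      simp [lat3, upc3, loc3]
    · simp [lat3, upc3, loc3]
      rfl
  · fin_cases i
    · have h1 := fun r : ℝ => Fin.insertNth_apply_succAbove (α := fun _ : Fin 3 => ℝ) 1 r x 0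
      have h2 : Fin.succAbove (1 : Fin 3) 0 = 0 := by decide
      rw [h2] at h1
      simp [lat3, h1]
    · have h1 := fun r : ℝ => Fin.insertNth_apply_same (α := fun _ : Fin 3 => ℝ) 1 r x
      simp [lat3, upc3, loc3]
    · have h1 := fun r : ℝ => Fin.insertNth_apply_succAbove (α := fun _ : Fin 3 => ℝ) 1 r x 1
      have h2 : Fin.succAbove (1 : Fin 3) 1 = 2 := by decide
      rw [h2] at h1
      simp [lat3, h1]

lemma int_pd_z {g : (Fin 3 → ℝ) → ℝ} (hg : ContDiff ℝ (⊤ : ℕ∞) g) :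
    ∫ y in Q3, pd 2 g y = (∫ x in Q2, g (ext3 x 1)) - ∫ x in Q2, g (ext3 x (-1)) := by
  rw [div_face hg]
  have h1 : Q2 =ᵐ[volume] Set.Icc (loc3 ∘ (2 : Fin 3).succAbove) (upc3 ∘ (2 : Fin 3).succAbove) := by
    have : Set.Icc (loc3 ∘ (2 : Fin 3).succAbove) (upc3 ∘ (2 : Fin 3).succAbove) =
        Set.Icc (fun _ => 0) (fun _ => 1) := by
      congr 1 <;> ext i <;> fin_cases i <;> rfl
    rw [this]
    exact Measure.univ_pi_Ioo_ae_eq_Icc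
  rw [setIntegral_congr_set h1, setIntegral_congr_set h1]
  simp only [insertNth_ext3]
  rfl

lemma gag_smul (c : ℝ) (φ : (Fin 2 → ℝ) → ℝ) :
    gagliardo2Sq (1/2) (fun x => c * φ x) = ‖c‖ₑ ^ 2 * gagliardo2Sq (1/2) φ := by
  unfold gagliardo2Sq
  have hc : ‖c‖ₑ ^ 2 ≠ ⊤ := ENNReal.pow_ne_top enorm_ne_top
  rw [← lintegral_const_mul' _ _ hc]
  refine lintegral_congr fun x => ?_
  rw [← lintegral_const_mul' _ _ hc]
  refine lintegral_congr fun y => ?_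
  rw [← enorm_eq_nnnorm, ← enorm_eq_nnnorm, ← mul_sub, enorm_mul, mul_pow, mul_div_assoc]

lemma half_pow_sq (a : ℝ≥0∞) : (a ^ 2) ^ (1/2 : ℝ) = a := by
  rw [← ENNReal.rpow_two, ← ENNReal.rpow_mul]; norm_num

lemma sq_pow_half (a : ℝ≥0∞) : (a ^ (1/2 : ℝ)) ^ 2 = a := by
  rw [← ENNReal.rpow_two, ← ENNReal.rpow_mul]; norm_num

lemma HGamma2_half_smul (c : ℝ) (φ : (Fin 2 → ℝ) → ℝ) :
    HGamma2 (1/2) (fun x => c * φ x) = ‖c‖ₑ * HGamma2 (1/2) φ := by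
  have hc : ‖c‖ₑ ^ 2 ≠ ⊤ := ENNReal.pow_ne_top enorm_ne_top
  rw [HGamma2_half, HGamma2_half, gag_smul]
  have : ∫⁻ x in Q2, ‖c * φ x‖ₑ ^ 2 = ‖c‖ₑ ^ 2 * ∫⁻ x in Q2, ‖φ x‖ₑ ^ 2 := by
    rw [← lintegral_const_mul' _ _ hc]
    refine lintegral_congr fun y => ?_
    rw [enorm_mul, mul_pow]
  rw [this, ← mul_add, ENNReal.mul_rpow_of_nonneg _ _ (by norm_num), half_pow_sq]

lemma HGammaR_neg_half (w : (Fin 2 → ℝ) → ℝ) : HGammaR (-(1/2)) w =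
    ⨆ (φ : (Fin 2 → ℝ) → ℝ)
      (_ : ContDiff ℝ (⊤ : ℕ∞) φ ∧ Per2 φ ∧ HGamma2 (1/2) φ ≤ 1),
      ENNReal.ofReal (∫ x in Q2, w x * φ x) := by
  unfold HGammaR
  rw [if_neg (by norm_num), neg_neg]

lemma dual_le {w φ : (Fin 2 → ℝ) → ℝ} (hφ : ContDiff ℝ (⊤ : ℕ∞) φ) (hP : Per2 φ) {K : ℝ≥0∞}
    (hK0 : K ≠ 0) (hK : K ≠ ⊤) (h : HGamma2 (1/2) φ ≤ K) :
    ENNReal.ofReal (∫ x in Q2, w x * φ x) ≤ K * HGammaR (-(1/2)) w := by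
  have hk : 0 < K.toReal := ENNReal.toReal_pos hK0 hK
  set ψ : (Fin 2 → ℝ) → ℝ := fun x => K.toReal⁻¹ * φ x with hψ
  have h1 : HGamma2 (1/2) ψ ≤ 1 := by
    rw [hψ, HGamma2_half_smul]
    have : ‖K.toReal⁻¹‖ₑ = K⁻¹ := by
      rw [Real.enorm_of_nonneg (by positivity), ENNReal.ofReal_inv_of_pos hk, ENNReal.ofReal_toReal hK]
    rw [this]
    calc _ ≤ K⁻¹ * K := by gcongr
      _ = 1 := ENNReal.inv_mul_cancel hK0 hK
  have h2 : ENNReal.ofReal (∫ x in Q2, w x * ψ x) ≤ HGammaR (-(1/2)) w := by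
    rw [HGammaR_neg_half]
    refine le_iSup₂_of_le ψ ⟨contDiff_const.mul hφ, ?_, h1⟩ le_rfl
    intro x k
    simp only [hψ, hP x k]
  have h3 : ∫ x in Q2, w x * φ x = K.toReal * ∫ x in Q2, w x * ψ x := by
    rw [← integral_const_mul]
    refine integral_congr_ae (Filter.Eventually.of_forall fun x => ?_)
    simp only [hψ]
    field_simp
  rw [h3, ENNReal.ofReal_mul hk.le, ENNReal.ofReal_toReal hK]
  gcongr

lemma HOmega_comp {E E' : Type*} [NormedAddCommGroup E] [NormedSpace ℝ E] [NormedAddCommGroup E']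
    [NormedSpace ℝ E'] (L : E →L[ℝ] E') {f : (Fin 3 → ℝ) → E} (hf : ContDiff ℝ (⊤ : ℕ∞) f) (n : ℕ) :
    HOmega3n n (fun y => L (f y)) ≤ ‖L‖ₑ * HOmega3n n f := by
  unfold HOmega3n
  have hL : ‖L‖ₑ ^ 2 ≠ ⊤ := ENNReal.pow_ne_top enorm_ne_top
  rw [← half_pow_sq ‖L‖ₑ, ← ENNReal.mul_rpow_of_nonneg _ _ (by norm_num), Finset.mul_sum]
  refine ENNReal.rpow_le_rpow ?_ (by norm_num)
  refine Finset.sum_le_sum fun k _ => ?_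
  rw [← lintegral_const_mul' _ _ hL]
  refine lintegral_mono fun y => ?_
  rw [← mul_pow]
  refine pow_le_pow_left' ?_ 2
  rw [← enorm_eq_nnnorm, ← enorm_eq_nnnorm]
  have := L.norm_iteratedFDeriv_comp_left (f := f) (x := y) (n := k) (N := (⊤ : ℕ∞)) hf.contDiffAt
    (by exact_mod_cast le_top)
  have h2 : ‖iteratedFDeriv ℝ k (fun y => L (f y)) y‖ ≤ ‖L‖ * ‖iteratedFDeriv ℝ k f y‖ := this
  rw [← ofReal_norm, ← ofReal_norm, ← ofReal_norm, ← ENNReal.ofReal_mul (norm_nonneg _)]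
  exact ENNReal.ofReal_le_ofReal h2

lemma norm_proj_le (k : Fin 3) : ‖(ContinuousLinearMap.proj k : (Fin 3 → ℝ) →L[ℝ] ℝ)‖ ≤ 1 := by
  refine ContinuousLinearMap.opNorm_le_bound _ zero_le_one fun v => ?_
  rw [one_mul]
  exact norm_le_pi_norm v k

lemma HOmega_coord {X : (Fin 3 → ℝ) → (Fin 3 → ℝ)} (hX : ContDiff ℝ (⊤ : ℕ∞) X) (n : ℕ)
    (k : Fin 3) : HOmega3n n (fun y => X y k) ≤ HOmega3n n X := by
  refine (HOmega_comp (ContinuousLinearMap.proj k : (Fin 3 → ℝ) →L[ℝ] ℝ) hX n).trans ?_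
  refine mul_le_of_le_one_left zero_le ?_
  rw [← ofReal_norm, ENNReal.ofReal_le_one]
  exact norm_proj_le k

lemma pd_coord {X : (Fin 3 → ℝ) → (Fin 3 → ℝ)} (hX : ContDiff ℝ (⊤ : ℕ∞) X) (i k : Fin 3)
    (y : Fin 3 → ℝ) : pd i (fun z => X z k) y = fderiv ℝ X y (Pi.single i 1) k := by
  have hd : Differentiable ℝ X := hX.differentiable (by simp)
  unfold pd
  rw [fderiv_apply (hd y)]
  rfl

lemma pd_mul {n : ℕ} {u v : (Fin n → ℝ) → ℝ} (hu : ContDiff ℝ (⊤ : ℕ∞) u)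
    (hv : ContDiff ℝ (⊤ : ℕ∞) v) (i : Fin n) (y : Fin n → ℝ) :
    pd i (fun z => u z * v z) y = u y * pd i v y + pd i u y * v y := by
  unfold pd
  rw [fderiv_fun_mul (hu.differentiable (by simp) y) (hv.differentiable (by simp) y)]
  simp [mul_comm]

lemma pd_comm {n : ℕ} {E : Type*} [NormedAddCommGroup E] [NormedSpace ℝ E] {u : (Fin n → ℝ) → E}
    (hu : ContDiff ℝ (⊤ : ℕ∞) u) (i j : Fin n) (y : Fin n → ℝ) :
    pd i (pd j u) y = pd j (pd i u) y := by
  have hd : Differentiable ℝ (fderiv ℝ u) :=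
    (hu.fderiv_right (m := (⊤ : ℕ∞)) (by simp)).differentiable (by simp)
  have h := (hu.contDiffAt (x := y)).isSymmSndFDerivAt (by simp; exact WithTop.coe_le_coe.2 (le_top : (2 : ℕ∞) ≤ ⊤))
  have e : ∀ a b : Fin n, pd a (pd b u) y = fderiv ℝ (fderiv ℝ u) y (Pi.single a 1) (Pi.single b 1) := by
    intro a b
    unfold pd
    rw [fderiv_clm_apply (hd y) (by fun_prop)]
    simp
  rw [e, e, h.eq]

lemma curl3_eq (X : (Fin 3 → ℝ) → (Fin 3 → ℝ)) (y : Fin 3 → ℝ) : curl3 X y =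
    ![pd 1 (fun z => X z 2) y - pd 2 (fun z => X z 1) y,
      pd 2 (fun z => X z 0) y - pd 0 (fun z => X z 2) y,
      pd 0 (fun z => X z 1) y - pd 1 (fun z => X z 0) y] := by
  ext k
  fin_cases k <;> simp [curl3, eps, Fin.sum_univ_three, pd] <;> ring

lemma div3_eq (X : (Fin 3 → ℝ) → (Fin 3 → ℝ)) (y : Fin 3 → ℝ) : div3 X y =
    pd 0 (fun z => X z 0) y + pd 1 (fun z => X z 1) y + pd 2 (fun z => X z 2) y := by
  simp [div3, Fin.sum_univ_three, pd]

lemma int_add4 {f a b c : (Fin 3 → ℝ) → ℝ} (hf : IntegrableOn f Q3) (ha : IntegrableOn a Q3)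
    (hb : IntegrableOn b Q3) (hc : IntegrableOn c Q3) :
    ∫ y in Q3, (f y + (a y + b y + c y)) = (∫ y in Q3, f y) + ((∫ y in Q3, a y) +
      (∫ y in Q3, b y) + ∫ y in Q3, c y) := by
  have h1 : IntegrableOn (fun y => a y + b y) Q3 := ha.add hb
  have h2 : IntegrableOn (fun y => a y + b y + c y) Q3 := h1.add hc
  rw [integral_add hf h2, integral_add h1 hc, integral_add ha hb]

lemma energy {u : Fin 3 → (Fin 3 → ℝ) → ℝ} (hu : ∀ k, ContDiff ℝ (⊤ : ℕ∞) (u k))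
    (hP : ∀ k, Per3 (u k)) :
    ∫ y in Q3, ∑ i : Fin 3, ∑ k : Fin 3, (pd i (u k) y) ^ 2 =
      (∫ y in Q3, ((pd 1 (u 2) y - pd 2 (u 1) y) ^ 2 + (pd 2 (u 0) y - pd 0 (u 2) y) ^ 2 +
        (pd 0 (u 1) y - pd 1 (u 0) y) ^ 2 + (pd 0 (u 0) y + pd 1 (u 1) y + pd 2 (u 2) y) ^ 2)) +
      2 * ∑ l : Fin 2, ((∫ x in Q2, u l.castSucc (ext3 x 1) * pd l.castSucc (u 2) (ext3 x 1)) -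
        ∫ x in Q2, u l.castSucc (ext3 x (-1)) * pd l.castSucc (u 2) (ext3 x (-1))) := by
  have hs : ∀ i k, ContDiff ℝ (⊤ : ℕ∞) (pd i (u k)) := fun i k => pd_smooth i (hu k)
  have hm : ∀ a i k, ContDiff ℝ (⊤ : ℕ∞) (fun y => u a y * pd i (u k) y) :=
    fun a i k => (hu a).mul (hs i k)
  have hmp : ∀ a i k, Per3 (fun y => u a y * pd i (u k) y) := by
    intro a i k y m
    simp only [hP a y m, pd_per i (hP k) y m]
  have hci : ∀ a i k j, Continuous (pd j (fun y => u a y * pd i (u k) y)) :=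
    fun a i k j => (pd_smooth j (hm a i k)).continuous
  have pt : ∀ y, ∑ i : Fin 3, ∑ k : Fin 3, (pd i (u k) y) ^ 2 =
      ((pd 1 (u 2) y - pd 2 (u 1) y) ^ 2 + (pd 2 (u 0) y - pd 0 (u 2) y) ^ 2 +
        (pd 0 (u 1) y - pd 1 (u 0) y) ^ 2 + (pd 0 (u 0) y + pd 1 (u 1) y + pd 2 (u 2) y) ^ 2) +
      (2 * pd 1 (fun y => u 0 y * pd 0 (u 1) y) y + (-2) * pd 0 (fun y => u 0 y * pd 1 (u 1) y) y +
       (2 * pd 2 (fun y => u 0 y * pd 0 (u 2) y) y + (-2) * pd 0 (fun y => u 0 y * pd 2 (u 2) y) y) +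
       (2 * pd 2 (fun y => u 1 y * pd 1 (u 2) y) y +
         (-2) * pd 1 (fun y => u 1 y * pd 2 (u 2) y) y)) := by
    intro y
    simp only [Fin.sum_univ_three, pd_mul (hu _) (hs _ _)]
    rw [pd_comm (hu 1) 1 0, pd_comm (hu 2) 2 0, pd_comm (hu 2) 2 1]
    ring
  have I : ∀ (c : ℝ) a i k j, IntegrableOn (fun y => c * pd j (fun y => u a y * pd i (u k) y) y) Q3 :=
    fun c a i k j => intQ3 (continuous_const.mul (hci a i k j))
  simp only [pt]
  have hcc : ∀ i k, Continuous (pd i (u k)) := fun i k => (hs i k).continuous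
  have J : Continuous fun y => ((pd 1 (u 2) y - pd 2 (u 1) y) ^ 2 + (pd 2 (u 0) y - pd 0 (u 2) y) ^ 2 +
        (pd 0 (u 1) y - pd 1 (u 0) y) ^ 2 +
        (pd 0 (u 0) y + pd 1 (u 1) y + pd 2 (u 2) y) ^ 2) := by
    refine (((Continuous.pow ?_ 2).add (Continuous.pow ?_ 2)).add (Continuous.pow ?_ 2)).add
      (Continuous.pow ?_ 2)
    · exact (hcc _ _).sub (hcc _ _)
    · exact (hcc _ _).sub (hcc _ _)
    · exact (hcc _ _).sub (hcc _ _)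
    · exact ((hcc _ _).add (hcc _ _)).add (hcc _ _)
  have A1 : IntegrableOn (fun y => 2 * pd 1 (fun y => u 0 y * pd 0 (u 1) y) y +
      (-2) * pd 0 (fun y => u 0 y * pd 1 (u 1) y) y) Q3 := (I _ _ _ _ _).add (I _ _ _ _ _)
  have A2 : IntegrableOn (fun y => 2 * pd 2 (fun y => u 0 y * pd 0 (u 2) y) y +
      (-2) * pd 0 (fun y => u 0 y * pd 2 (u 2) y) y) Q3 := (I _ _ _ _ _).add (I _ _ _ _ _)
  have A3 : IntegrableOn (fun y => 2 * pd 2 (fun y => u 1 y * pd 1 (u 2) y) y +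
         (-2) * pd 1 (fun y => u 1 y * pd 2 (u 2) y) y) Q3 := (I _ _ _ _ _).add (I _ _ _ _ _)
  rw [int_add4 (intQ3 J) A1 A2 A3]
  congr 1
  rw [integral_add (I _ _ _ _ _) (I _ _ _ _ _), integral_add (I _ _ _ _ _) (I _ _ _ _ _),
    integral_add (I _ _ _ _ _) (I _ _ _ _ _)]
  simp only [integral_const_mul]
  have h0 : ∀ a i k, ∫ y in Q3, pd 0 (fun y => u a y * pd i (u k) y) y = 0 :=
    fun a i k => int_pd_h (hm a i k) (hmp a i k) 0
  have h1 : ∀ a i k, ∫ y in Q3, pd 1 (fun y => u a y * pd i (u k) y) y = 0 :=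
    fun a i k => int_pd_h (hm a i k) (hmp a i k) 1
  rw [h0, h0, h1, h1, int_pd_z (hm _ _ _), int_pd_z (hm _ _ _), Fin.sum_univ_two]
  simp only [Fin.castSucc_zero, Fin.castSucc_one]
  ring

lemma opn_le_sum {E : Type*} [NormedAddCommGroup E] [NormedSpace ℝ E] (L : (Fin 3 → ℝ) →L[ℝ] E) :
    ‖L‖ ≤ ∑ i : Fin 3, ‖L (Pi.single i 1)‖ := by
  refine ContinuousLinearMap.opNorm_le_bound _ (Finset.sum_nonneg fun i _ => norm_nonneg _) fun v => ?_
  have hv : v = ∑ i : Fin 3, v i • (Pi.single i 1 : Fin 3 → ℝ) := by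
    ext j
    simp [Finset.sum_apply, Pi.single_apply]
  calc ‖L v‖ = ‖∑ i : Fin 3, v i • L (Pi.single i 1)‖ := by
        conv_lhs => rw [hv]
        rw [map_sum]
        simp only [map_smul]
    _ ≤ ∑ i : Fin 3, ‖v i • L (Pi.single i 1)‖ := norm_sum_le _ _
    _ ≤ ∑ i : Fin 3, ‖v‖ * ‖L (Pi.single i 1)‖ := by
        refine Finset.sum_le_sum fun i _ => ?_
        rw [norm_smul]
        exact mul_le_mul_of_nonneg_right (norm_le_pi_norm v i) (norm_nonneg _)
    _ = _ := by rw [← Finset.mul_sum, mul_comm]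

lemma pi_norm_sq_le (v : Fin 3 → ℝ) : ‖v‖ ^ 2 ≤ ∑ k : Fin 3, v k ^ 2 := by
  have h : ‖v‖ ≤ √(∑ k : Fin 3, v k ^ 2) := by
    rw [pi_norm_le_iff_of_nonneg (Real.sqrt_nonneg _)]
    intro k
    refine Real.le_sqrt_of_sq_le ?_
    rw [Real.norm_eq_abs, sq_abs]
    exact Finset.single_le_sum (f := fun k => v k ^ 2) (fun _ _ => sq_nonneg _) (Finset.mem_univ k)
  calc ‖v‖ ^ 2 ≤ (√(∑ k : Fin 3, v k ^ 2)) ^ 2 := pow_le_pow_left₀ (norm_nonneg _) h 2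
    _ = _ := Real.sq_sqrt (Finset.sum_nonneg fun _ _ => sq_nonneg _)

lemma opn_sq_le_sum (L : (Fin 3 → ℝ) →L[ℝ] (Fin 3 → ℝ)) :
    ‖L‖ ^ 2 ≤ 3 * ∑ i : Fin 3, ∑ k : Fin 3, (L (Pi.single i 1) k) ^ 2 := by
  have h := opn_le_sum L
  have h2 : ‖L‖ ^ 2 ≤ (∑ i : Fin 3, ‖L (Pi.single i 1)‖) ^ 2 :=
    pow_le_pow_left₀ (norm_nonneg _) h 2
  have h3 : ∑ i : Fin 3, ‖L (Pi.single i 1)‖ ^ 2 ≤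
      ∑ i : Fin 3, ∑ k : Fin 3, (L (Pi.single i 1) k) ^ 2 :=
    Finset.sum_le_sum fun i _ => pi_norm_sq_le _
  simp only [Fin.sum_univ_three] at h2 h3 ⊢
  nlinarith [sq_nonneg (‖L (Pi.single 0 1)‖ - ‖L (Pi.single 1 1)‖),
    sq_nonneg (‖L (Pi.single 0 1)‖ - ‖L (Pi.single 2 1)‖),
    sq_nonneg (‖L (Pi.single 1 1)‖ - ‖L (Pi.single 2 1)‖)]

lemma enorm_sq_ofReal {E : Type*} [NormedAddCommGroup E] (v : E) :
    ‖v‖ₑ ^ 2 = ENNReal.ofReal (‖v‖ ^ 2) := by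
  rw [ENNReal.ofReal_pow (norm_nonneg _), ofReal_norm]

lemma lintQ3_finite {E : Type*} [NormedAddCommGroup E] {G : (Fin 3 → ℝ) → E} (hG : Continuous G) :
    ∫⁻ y in Q3, ‖G y‖ₑ ^ 2 ≠ ⊤ := by
  have h := (intQ3 (hG.norm.pow 2)).lintegral_lt_top
  simp only [enorm_sq_ofReal]
  exact h.ne

lemma lintQ3_ofReal {g : (Fin 3 → ℝ) → ℝ} (hg : Continuous g) (h0 : ∀ y, 0 ≤ g y) :
    ∫⁻ y in Q3, ENNReal.ofReal (g y) = ENNReal.ofReal (∫ y in Q3, g y) :=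
  (ofReal_integral_eq_lintegral_ofReal (intQ3 hg) (Filter.Eventually.of_forall h0)).symm

lemma HOmega0_eq {E : Type*} [NormedAddCommGroup E] [NormedSpace ℝ E] (F : (Fin 3 → ℝ) → E) :
    HOmega3n 0 F = (∫⁻ y in Q3, ‖F y‖ₑ ^ 2) ^ (1/2 : ℝ) := by
  unfold HOmega3n
  congr 1
  rw [Finset.sum_range_one]
  refine lintegral_congr fun x => ?_
  rw [← enorm_eq_nnnorm, enorm_eq_iff_norm_eq.2 (norm_iteratedFDeriv_zero (𝕜 := ℝ) (f := F) (x := x))]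

/-- the boundary term -/
def BT (σ : ℝ) (X : (Fin 3 → ℝ) → (Fin 3 → ℝ)) : ℝ≥0∞ :=
  ∑ l : Fin 2, (HGammaR σ (fun x => fderiv ℝ X (ext3 x 1) (Pi.single l.castSucc 1) 2) +
    HGammaR σ (fun x => -fderiv ℝ X (ext3 x (-1)) (Pi.single l.castSucc 1) 2))

lemma absorb {H a : ℝ≥0∞} (hH : H ≠ ⊤) (h : H ^ 2 ≤ 9 * a ^ 2 + 96 * (H * a)) : H ≤ 100 * a := by
  rcases eq_or_ne a ⊤ with rfl | ha
  · simp
  lift H to ℝ≥0 using hH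
  lift a to ℝ≥0 using ha
  norm_cast at h ⊢
  by_contra! hc
  have h1 : (H : ℝ) ^ 2 ≤ 9 * (a : ℝ) ^ 2 + 96 * (H * a) := by exact_mod_cast h
  have h2 : 100 * (a : ℝ) < H := by exact_mod_cast hc
  nlinarith [a.2, H.2, a.coe_nonneg, H.coe_nonneg]

lemma contDiff_slice {F : (Fin 3 → ℝ) → ℝ} (hF : ContDiff ℝ (⊤ : ℕ∞) F) (z : ℝ) :
    ContDiff ℝ (⊤ : ℕ∞) fun x : Fin 2 → ℝ => F (ext3 x z) := by
  refine hF.comp ?_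
  rw [contDiff_pi]
  intro i
  fin_cases i
  · exact contDiff_apply ℝ ℝ 0
  · exact contDiff_apply ℝ ℝ 1
  · exact contDiff_const

lemma base_case {X : (Fin 3 → ℝ) → (Fin 3 → ℝ)} (hX : ContDiff ℝ (⊤ : ℕ∞) X) (hP : Per3 X) :
    HOmega3n 1 X ≤ 100 * (HOmega3n 0 X + HOmega3n 0 (curl3 X) + HOmega3n 0 (div3 X) +
      BT (-(1/2)) X) := by
  set H := HOmega3n 1 X with hHdef
  set u : Fin 3 → (Fin 3 → ℝ) → ℝ := fun k y => X y k with hu_def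
  have hu : ∀ k, ContDiff ℝ (⊤ : ℕ∞) (u k) := fun k => contDiff_pi.1 hX k
  have hPu : ∀ k, Per3 (u k) := fun k y m => by simp only [hu_def, hP y m]
  have hcc : ∀ i k, Continuous (pd i (u k)) := fun i k => (pd_smooth i (hu k)).continuous
  have hHt : H ≠ ⊤ := by
    rw [hHdef, HOmega1_eq]
    refine ENNReal.rpow_ne_top_of_nonneg (by norm_num) ?_
    exact ENNReal.add_ne_top.2 ⟨lintQ3_finite hX.continuous,
      lintQ3_finite (hX.continuous_fderiv (by simp))⟩
  rcases eq_or_ne H 0 with h0 | hH0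
  · rw [h0]; exact zero_le
  refine absorb hHt ?_
  have hc := energy hu hPu
  set E := ∫ y in Q3, ∑ i : Fin 3, ∑ k : Fin 3, (pd i (u k) y) ^ 2 with hE
  set a0 := HOmega3n 0 X
  set c0 := HOmega3n 0 (curl3 X)
  set d0 := HOmega3n 0 (div3 X)
  set R := BT (-(1/2)) X with hR
  have ha : ∫⁻ y in Q3, ‖X y‖ₑ ^ 2 = a0 ^ 2 := by
    simp only [a0]; rw [HOmega0_eq, sq_pow_half]
  have hcu : ∫⁻ y in Q3, ‖curl3 X y‖ₑ ^ 2 = c0 ^ 2 := by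
    simp only [c0]; rw [HOmega0_eq, sq_pow_half]
  have hdi : ∫⁻ y in Q3, ‖div3 X y‖ₑ ^ 2 = d0 ^ 2 := by
    simp only [d0]; rw [HOmega0_eq, sq_pow_half]
  have hH2 : H ^ 2 = a0 ^ 2 + ∫⁻ y in Q3, ‖fderiv ℝ X y‖ₑ ^ 2 := by
    rw [hHdef, HOmega1_eq, sq_pow_half, ha]
  have hEc : Continuous fun y => ∑ i : Fin 3, ∑ k : Fin 3, (pd i (u k) y) ^ 2 :=
    continuous_finsetSum _ fun i _ => continuous_finsetSum _ fun k _ => (hcc i k).pow 2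
  have h1 : ∫⁻ y in Q3, ‖fderiv ℝ X y‖ₑ ^ 2 ≤ 3 * ENNReal.ofReal E := by
    rw [hE, ← lintQ3_ofReal hEc (fun y => Finset.sum_nonneg fun i _ => Finset.sum_nonneg
      fun k _ => sq_nonneg _), ← lintegral_const_mul' _ _ (by norm_num)]
    refine lintegral_mono fun y => ?_
    rw [enorm_sq_ofReal, show (3 : ℝ≥0∞) = ENNReal.ofReal 3 by norm_num,
      ← ENNReal.ofReal_mul (by norm_num)]
    refine ENNReal.ofReal_le_ofReal ?_
    simp only [hu_def, pd_coord hX]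
    exact opn_sq_le_sum _
  have hR1 : ∀ l : Fin 2, ENNReal.ofReal
      (∫ x in Q2, u l.castSucc (ext3 x 1) * pd l.castSucc (u 2) (ext3 x 1)) ≤
      16 * H * HGammaR (-(1/2)) (fun x => fderiv ℝ X (ext3 x 1) (Pi.single l.castSucc 1) 2) := by
    intro l
    have := dual_le (w := fun x => fderiv ℝ X (ext3 x 1) (Pi.single l.castSucc 1) 2)
      (φ := fun x => u l.castSucc (ext3 x 1)) (contDiff_slice (hu _) 1)
      (per3_slice (hPu _) 1) (K := 16 * H) (mul_ne_zero (by norm_num) hH0)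
      (ENNReal.mul_ne_top (by norm_num) hHt)
      ((trace_half (hu _) (hPu _) (Or.inl rfl)).trans (mul_le_mul_right (HOmega_coord hX 1 _) 16))
    refine le_trans (le_of_eq ?_) this
    congr 1
    refine integral_congr_ae (Filter.Eventually.of_forall fun x => ?_)
    simp only [hu_def, pd_coord hX, mul_comm]
  have hR2 : ∀ l : Fin 2, ENNReal.ofReal
      (-∫ x in Q2, u l.castSucc (ext3 x (-1)) * pd l.castSucc (u 2) (ext3 x (-1))) ≤
      16 * H * HGammaR (-(1/2))
        (fun x => -fderiv ℝ X (ext3 x (-1)) (Pi.single l.castSucc 1) 2) := by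
    intro l
    have := dual_le (w := fun x => -fderiv ℝ X (ext3 x (-1)) (Pi.single l.castSucc 1) 2)
      (φ := fun x => u l.castSucc (ext3 x (-1))) (contDiff_slice (hu _) (-1))
      (per3_slice (hPu _) (-1)) (K := 16 * H) (mul_ne_zero (by norm_num) hH0)
      (ENNReal.mul_ne_top (by norm_num) hHt)
      ((trace_half (hu _) (hPu _) (Or.inr rfl)).trans (mul_le_mul_right (HOmega_coord hX 1 _) 16))
    refine le_trans (le_of_eq ?_) this
    congr 1
    rw [← integral_neg]
    refine integral_congr_ae (Filter.Eventually.of_forall fun x => ?_)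
    simp only [hu_def, pd_coord hX]
    ring
  have hA : ENNReal.ofReal (∫ y in Q3, ((pd 1 (u 2) y - pd 2 (u 1) y) ^ 2 +
      (pd 2 (u 0) y - pd 0 (u 2) y) ^ 2 + (pd 0 (u 1) y - pd 1 (u 0) y) ^ 2 +
        (pd 0 (u 0) y + pd 1 (u 1) y + pd 2 (u 2) y) ^ 2)) ≤ 3 * c0 ^ 2 + d0 ^ 2 := by
    have hdc : Continuous (div3 X) := by
      have : div3 X = fun y => pd 0 (u 0) y + pd 1 (u 1) y + pd 2 (u 2) y := by
        ext y; rw [div3_eq]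
      rw [this]
      exact ((hcc _ _).add (hcc _ _)).add (hcc _ _)
    rw [← lintQ3_ofReal]
    · rw [← hcu, ← hdi, ← lintegral_const_mul' _ _ (by norm_num), ← lintegral_add_right]
      · refine lintegral_mono fun y => ?_
        rw [enorm_sq_ofReal, enorm_sq_ofReal, show (3 : ℝ≥0∞) = ENNReal.ofReal 3 by norm_num,
          ← ENNReal.ofReal_mul (by norm_num), ← ENNReal.ofReal_add (by positivity) (by positivity)]
        refine ENNReal.ofReal_le_ofReal ?_
        have hk : ∀ k, (curl3 X y k) ^ 2 ≤ ‖curl3 X y‖ ^ 2 := by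
          intro k
          have := norm_le_pi_norm (curl3 X y) k
          rw [Real.norm_eq_abs] at this
          rw [← sq_abs]
          exact pow_le_pow_left₀ (abs_nonneg _) this 2
        have k0 := hk 0
        have k1 := hk 1
        have k2 := hk 2
        have kd : ‖div3 X y‖ ^ 2 = (div3 X y) ^ 2 := by rw [Real.norm_eq_abs, sq_abs]
        rw [kd, div3_eq]
        simp only [curl3_eq X y, Matrix.cons_val] at k0 k1 k2
        rw [curl3_eq X y]
        linarith
      · exact hdc.enorm.measurable.pow_const 2
    · refine (((Continuous.pow ?_ 2).add (Continuous.pow ?_ 2)).add (Continuous.pow ?_ 2)).add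
        (Continuous.pow ?_ 2)
      · exact (hcc _ _).sub (hcc _ _)
      · exact (hcc _ _).sub (hcc _ _)
      · exact (hcc _ _).sub (hcc _ _)
      · exact ((hcc _ _).add (hcc _ _)).add (hcc _ _)
    · intro y; positivity
  have hB : ENNReal.ofReal E ≤ 3 * c0 ^ 2 + d0 ^ 2 + 2 * (16 * H * R) := by
    rw [hc]
    refine ENNReal.ofReal_add_le.trans (add_le_add hA ?_)
    rw [ENNReal.ofReal_mul (by norm_num)]
    refine mul_le_mul' (by norm_num) ?_
    rw [hR, BT, Finset.mul_sum]
    have hl := fun l => ENNReal.ofReal_add_le.trans (add_le_add (hR1 l) (hR2 l))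
    simp only [← mul_add, ← sub_eq_add_neg] at hl
    rw [Fin.sum_univ_two, Fin.sum_univ_two]
    exact ENNReal.ofReal_add_le.trans (add_le_add (hl 0) (hl 1))
  rw [hH2]
  set a := a0 + c0 + d0 + R with ha_def
  have q1 : R ≤ a := le_add_self
  have q2 : a0 ^ 2 + (9 * c0 ^ 2 + 3 * d0 ^ 2) ≤ 9 * a ^ 2 := by
    calc a0 ^ 2 + (9 * c0 ^ 2 + 3 * d0 ^ 2) ≤ 9 * a0 ^ 2 + (9 * c0 ^ 2 + 9 * d0 ^ 2) := by
          gcongr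
          · exact le_mul_of_one_le_left zero_le (by norm_num)
          · norm_num
      _ ≤ 9 * a0 ^ 2 + (9 * c0 ^ 2 + 9 * d0 ^ 2) + (9 * R ^ 2 + 18 * (a0 * c0 + a0 * d0 + a0 * R +
          c0 * d0 + c0 * R + d0 * R)) := le_self_add
      _ = _ := by rw [ha_def]; ring
  calc _ ≤ a0 ^ 2 + 3 * (3 * c0 ^ 2 + d0 ^ 2 + 2 * (16 * H * R)) := by
        gcongr
        exact h1.trans (mul_le_mul_right hB 3)
    _ = a0 ^ 2 + (9 * c0 ^ 2 + 3 * d0 ^ 2) + 96 * (H * R) := by ring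
    _ ≤ _ := by gcongr

lemma iter_pd {n : ℕ} {E : Type*} [NormedAddCommGroup E] [NormedSpace ℝ E] (j : Fin n) (k : ℕ)
    {w : (Fin n → ℝ) → E} (hw : ContDiff ℝ (⊤ : ℕ∞) w) (x y : Fin n → ℝ) :
    ‖iteratedFDeriv ℝ k (pd j w) x‖ ≤ ‖iteratedFDeriv ℝ (k + 1) w x‖ ∧
    ‖iteratedFDeriv ℝ k (pd j w) x - iteratedFDeriv ℝ k (pd j w) y‖ ≤
      ‖iteratedFDeriv ℝ (k + 1) w x - iteratedFDeriv ℝ (k + 1) w y‖ := by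
  set L : ((Fin n → ℝ) →L[ℝ] E) →L[ℝ] E := ContinuousLinearMap.apply ℝ E (Pi.single j 1) with hL
  have hLn : ‖L‖ ≤ 1 := by
    refine ContinuousLinearMap.opNorm_le_bound _ zero_le_one fun v => ?_
    rw [one_mul]
    refine (v.le_opNorm _).trans ?_
    rw [Pi.norm_single]
    simp
  have hd : ContDiff ℝ (⊤ : ℕ∞) (fderiv ℝ w) := hw.fderiv_right (by simp)
  have e : ∀ x, iteratedFDeriv ℝ k (pd j w) x =
      L.compContinuousMultilinearMap (iteratedFDeriv ℝ k (fderiv ℝ w) x) := by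
    intro x
    exact L.iteratedFDeriv_comp_left (f := fderiv ℝ w) (n := (⊤ : ℕ∞)) hd.contDiffAt
      (by exact_mod_cast le_top)
  have e2 : ∀ x, iteratedFDeriv ℝ (k + 1) w x =
      (continuousMultilinearCurryRightEquiv' ℝ k (Fin n → ℝ) E).symm
        (iteratedFDeriv ℝ k (fderiv ℝ w) x) := by
    intro x
    rw [iteratedFDeriv_succ_eq_comp_right]
    rfl
  have hb : ∀ A : ContinuousMultilinearMap ℝ (fun _ : Fin k => Fin n → ℝ) ((Fin n → ℝ) →L[ℝ] E),
      ‖L.compContinuousMultilinearMap A‖ ≤ ‖A‖ := by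
    intro A
    refine (L.norm_compContinuousMultilinearMap_le A).trans ?_
    exact mul_le_of_le_one_left (norm_nonneg _) hLn
  constructor
  · rw [e, e2, LinearIsometryEquiv.norm_map]
    exact hb _
  · rw [e, e]
    have : L.compContinuousMultilinearMap (iteratedFDeriv ℝ k (fderiv ℝ w) x) -
      L.compContinuousMultilinearMap (iteratedFDeriv ℝ k (fderiv ℝ w) y) =
      L.compContinuousMultilinearMap (iteratedFDeriv ℝ k (fderiv ℝ w) x -
        iteratedFDeriv ℝ k (fderiv ℝ w) y) := by
      ext v
      simp
    rw [this]
    refine (hb _).trans (le_of_eq ?_)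
    rw [e2, e2, ← dist_eq_norm]
    exact (dist_eq_norm _ _).symm.trans (((continuousMultilinearCurryRightEquiv' ℝ k (Fin n → ℝ) E).symm).dist_map _ _).symm

lemma enorm_mono {E F : Type*} [NormedAddCommGroup E] [NormedAddCommGroup F] {a : E} {b : F}
    (h : ‖a‖ ≤ ‖b‖) : ‖a‖ₑ ^ 2 ≤ ‖b‖ₑ ^ 2 :=
  pow_le_pow_left' (enorm_le_iff_norm_le.2 h) 2

lemma HGamma2_nhalf (n : ℕ) (f : (Fin 2 → ℝ) → ℝ) : HGamma2 ((n : ℝ) + 1/2) f =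
    ((∑ k ∈ Finset.range (n + 1), ∫⁻ x in Q2, ‖iteratedFDeriv ℝ k f x‖ₑ ^ 2) +
      gagliardo2Sq (1/2) (iteratedFDeriv ℝ n f)) ^ (1/2 : ℝ) := by
  unfold HGamma2
  have hfl : ⌊(n : ℝ) + 1/2⌋₊ = n := by
    rw [Nat.floor_eq_iff (by positivity)]
    constructor <;> linarith
  rw [hfl, if_neg (by linarith), add_sub_cancel_left]
  rfl

lemma HGammaR_nhalf (n : ℕ) (f : (Fin 2 → ℝ) → ℝ) :
    HGammaR ((n : ℝ) + 1/2) f = HGamma2 ((n : ℝ) + 1/2) f := by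
  unfold HGammaR
  rw [if_pos (by positivity)]

lemma bdry_ii (n : ℕ) (j : Fin 2) {w : (Fin 2 → ℝ) → ℝ} (hw : ContDiff ℝ (⊤ : ℕ∞) w) :
    HGamma2 ((n : ℝ) + 1/2) (pd j w) ≤ HGamma2 (((n + 1 : ℕ) : ℝ) + 1/2) w := by
  rw [HGamma2_nhalf, HGamma2_nhalf]
  refine ENNReal.rpow_le_rpow (add_le_add ?_ ?_) (by norm_num)
  · rw [Finset.sum_range_succ' _ (n + 1)]
    refine le_add_right (Finset.sum_le_sum fun k _ => lintegral_mono fun x => ?_)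
    exact enorm_mono (iter_pd j k hw x x).1
  · unfold gagliardo2Sq
    refine lintegral_mono fun x => lintegral_mono fun y => ?_
    exact ENNReal.div_le_div_right (enorm_mono (iter_pd j n hw x y).2) _

lemma bdry_i (j : Fin 2) {w : (Fin 2 → ℝ) → ℝ} (hw : ContDiff ℝ (⊤ : ℕ∞) w) (hP : Per2 w) :
    HGammaR (-(1/2)) (pd j w) ≤ 100 * HGamma2 (1/2) w := by
  rw [HGammaR_neg_half]
  refine iSup₂_le fun φ hφ => ?_
  obtain ⟨hφs, hφp, hφn⟩ := hφ
  have gφ : gagliardo2Sq (1/2) φ ≤ 1 := by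
    rw [HGamma2_half] at hφn
    have := pow_le_pow_left' hφn 2
    rw [sq_pow_half, one_pow] at this
    exact le_add_self.trans this
  have key : ∀ K : ℝ≥0∞, HGamma2 (1/2) w < K → ENNReal.ofReal (∫ x in Q2, pd j w x * φ x) / 100 ≤ K := by
    intro K hK
    rcases eq_or_ne K ⊤ with rfl | hKt
    · exact le_top
    have hK0 : K ≠ 0 := (zero_le.trans_lt hK).ne'
    have hk : 0 < K.toReal := ENNReal.toReal_pos hK0 hKt
    set g : (Fin 2 → ℝ) → ℝ := fun x => K.toReal⁻¹ * w x with hg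
    have hgs : ContDiff ℝ (⊤ : ℕ∞) g := contDiff_const.mul hw
    have hgp : Per2 g := by
      intro x k
      simp only [hg, hP x k]
    have h1 : HGamma2 (1/2) g ≤ 1 := by
      rw [hg, HGamma2_half_smul]
      have : ‖K.toReal⁻¹‖ₑ = K⁻¹ := by
        rw [Real.enorm_of_nonneg (by positivity), ENNReal.ofReal_inv_of_pos hk,
          ENNReal.ofReal_toReal hKt]
      rw [this]
      calc _ ≤ K⁻¹ * K := by gcongr
        _ = 1 := ENNReal.inv_mul_cancel hK0 hKt
    have gg : gagliardo2Sq (1/2) g ≤ 1 := by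
      rw [HGamma2_half] at h1
      have := pow_le_pow_left' h1 2
      rw [sq_pow_half, one_pow] at this
      exact le_add_self.trans this
    have hb := bilinear hφp hgp hφs.continuous hgs j gφ gg
    have e : ∫ x in Q2, pd j w x * φ x =
        K.toReal * ∫ x in Q2, φ x * fderiv ℝ g x (Pi.single j 1) := by
      rw [← integral_const_mul]
      refine integral_congr_ae (Filter.Eventually.of_forall fun x => ?_)
      simp only [hg, pd]
      rw [fderiv_const_mul (hw.differentiable (by simp) x)]
      simp
      field_simp
    refine ENNReal.div_le_of_le_mul ?_
    rw [e, ENNReal.ofReal_mul hk.le, ENNReal.ofReal_toReal hKt]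
    refine mul_le_mul_right ?_ _
    calc _ ≤ ENNReal.ofReal 100 := ENNReal.ofReal_le_ofReal ((le_abs_self _).trans hb)
      _ = 100 := by norm_num
  have := le_of_forall_gt_imp_ge_of_dense key
  rwa [ENNReal.div_le_iff (by norm_num) (by norm_num), mul_comm] at this

lemma bdry_iii (n : ℕ) {w : (Fin 2 → ℝ) → ℝ} (hw : Continuous w) :
    HGammaR (-(1/2)) w ≤ HGamma2 ((n : ℝ) + 1/2) w := by
  rw [HGammaR_neg_half]
  refine iSup₂_le fun φ hφ => ?_
  obtain ⟨hφs, hφp, hφn⟩ := hφ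
  have gφ : ∫⁻ x in Q2, ‖φ x‖ₑ ^ 2 ≤ 1 := by
    rw [HGamma2_half] at hφn
    have := pow_le_pow_left' hφn 2
    rw [sq_pow_half, one_pow] at this
    exact le_self_add.trans this
  have h1 : ENNReal.ofReal (∫ x in Q2, w x * φ x) ≤ ∫⁻ x in Q2, ‖w x‖ₑ * ‖φ x‖ₑ := by
    calc _ ≤ ‖∫ x in Q2, w x * φ x‖ₑ := by
          rw [← ofReal_norm]
          exact ENNReal.ofReal_le_ofReal (le_abs_self _)
      _ ≤ ∫⁻ x in Q2, ‖w x * φ x‖ₑ := enorm_integral_le_lintegral_enorm _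
      _ = _ := by simp only [enorm_mul]
  have h2 := cs_enn (μ := volume.restrict Q2) hw.enorm.measurable.aemeasurable
    hφs.continuous.enorm.measurable.aemeasurable
  have h3 : (ENNReal.ofReal (∫ x in Q2, w x * φ x)) ^ 2 ≤ ∫⁻ x in Q2, ‖w x‖ₑ ^ 2 := by
    calc _ ≤ _ := (pow_le_pow_left' h1 2).trans h2
      _ ≤ (∫⁻ x in Q2, ‖w x‖ₑ ^ 2) * 1 := by gcongr
      _ = _ := mul_one _
  have h4 := ENNReal.rpow_le_rpow h3 (by norm_num : (0:ℝ) ≤ 1/2)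
  rw [half_pow_sq] at h4
  refine h4.trans ?_
  rw [HGamma2_nhalf]
  refine ENNReal.rpow_le_rpow ?_ (by norm_num)
  refine le_add_right ?_
  rw [Finset.sum_range_succ' _ n]
  refine le_add_left (le_of_eq ?_)
  refine lintegral_congr fun x => ?_
  rw [enorm_eq_iff_norm_eq.2 (norm_iteratedFDeriv_zero (𝕜 := ℝ) (f := w) (x := x))]

lemma iter_le_sum {E : Type*} [NormedAddCommGroup E] [NormedSpace ℝ E] (k : ℕ)
    {w : (Fin 3 → ℝ) → E} (hw : ContDiff ℝ (⊤ : ℕ∞) w) (y : Fin 3 → ℝ) :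
    ‖iteratedFDeriv ℝ (k + 1) w y‖ ≤ ∑ i : Fin 3, ‖iteratedFDeriv ℝ k (pd i w) y‖ := by
  rw [← norm_iteratedFDeriv_fderiv]
  have hd : ContDiff ℝ (⊤ : ℕ∞) (fderiv ℝ w) := hw.fderiv_right (by simp)
  refine ContinuousMultilinearMap.opNorm_le_bound
    (Finset.sum_nonneg fun i _ => norm_nonneg _) fun v => ?_
  refine (opn_le_sum _).trans ?_
  rw [Finset.sum_mul]
  refine Finset.sum_le_sum fun i _ => ?_
  have e : iteratedFDeriv ℝ k (pd i w) y =
      (ContinuousLinearMap.apply ℝ E (Pi.single i 1 : Fin 3 → ℝ)).compContinuousMultilinearMap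
        (iteratedFDeriv ℝ k (fderiv ℝ w) y) :=
    (ContinuousLinearMap.apply ℝ E (Pi.single i 1 : Fin 3 → ℝ)).iteratedFDeriv_comp_left
      (f := fderiv ℝ w) (n := (⊤ : ℕ∞)) hd.contDiffAt (by exact_mod_cast le_top)
  have e2 : iteratedFDeriv ℝ k (fderiv ℝ w) y v (Pi.single i 1) = iteratedFDeriv ℝ k (pd i w) y v := by
    rw [e]; rfl
  rw [e2]
  exact ContinuousMultilinearMap.le_opNorm _ _

lemma HOm_sq {E : Type*} [NormedAddCommGroup E] [NormedSpace ℝ E] (n : ℕ) (f : (Fin 3 → ℝ) → E) :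
    (HOmega3n n f) ^ 2 =
      ∑ k ∈ Finset.range (n + 1), ∫⁻ y in Q3, ‖iteratedFDeriv ℝ k f y‖ₑ ^ 2 := by
  unfold HOmega3n
  rw [sq_pow_half]
  rfl

lemma le_of_sq_le {a b : ℝ≥0∞} (h : a ^ 2 ≤ b ^ 2) : a ≤ b :=
  (ENNReal.pow_le_pow_left_iff two_ne_zero).1 h

lemma HOm_mono {E : Type*} [NormedAddCommGroup E] [NormedSpace ℝ E] {m n : ℕ} (hmn : m ≤ n)
    (f : (Fin 3 → ℝ) → E) : HOmega3n m f ≤ HOmega3n n f := by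
  refine le_of_sq_le ?_
  rw [HOm_sq, HOm_sq]
  exact Finset.sum_le_sum_of_subset (Finset.range_mono (by omega))

lemma HOm_pd {E : Type*} [NormedAddCommGroup E] [NormedSpace ℝ E] (n : ℕ) (i : Fin 3)
    {f : (Fin 3 → ℝ) → E} (hf : ContDiff ℝ (⊤ : ℕ∞) f) :
    HOmega3n n (pd i f) ≤ HOmega3n (n + 1) f := by
  refine le_of_sq_le ?_
  rw [HOm_sq, HOm_sq, Finset.sum_range_succ' _ (n + 1)]
  refine le_add_right (Finset.sum_le_sum fun k _ => lintegral_mono fun x => ?_)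
  exact enorm_mono (iter_pd i k hf x x).1

lemma meas_iter {E : Type*} [NormedAddCommGroup E] [NormedSpace ℝ E] (k : ℕ)
    {f : (Fin 3 → ℝ) → E} (hf : ContDiff ℝ (⊤ : ℕ∞) f) :
    Measurable fun y => ‖iteratedFDeriv ℝ k f y‖ₑ ^ 2 :=
  (hf.continuous_iteratedFDeriv (m := k) (by exact_mod_cast le_top)).enorm.measurable.pow_const 2

lemma HOm_succ {E : Type*} [NormedAddCommGroup E] [NormedSpace ℝ E] (n : ℕ)
    {f : (Fin 3 → ℝ) → E} (hf : ContDiff ℝ (⊤ : ℕ∞) f) :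
    HOmega3n (n + 1) f ≤ 3 * (HOmega3n 0 f + (HOmega3n n (pd 0 f) + HOmega3n n (pd 1 f) +
      HOmega3n n (pd 2 f))) := by
  refine le_of_sq_le ?_
  have h1 : ∀ k, ∫⁻ y in Q3, ‖iteratedFDeriv ℝ (k + 1) f y‖ₑ ^ 2 ≤
      3 * ((∫⁻ y in Q3, ‖iteratedFDeriv ℝ k (pd 0 f) y‖ₑ ^ 2) +
        (∫⁻ y in Q3, ‖iteratedFDeriv ℝ k (pd 1 f) y‖ₑ ^ 2) +
        ∫⁻ y in Q3, ‖iteratedFDeriv ℝ k (pd 2 f) y‖ₑ ^ 2) := by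
    intro k
    rw [← lintegral_add_left (meas_iter k (pd_smooth 0 hf)),
      ← lintegral_add_right _ (meas_iter k (pd_smooth 2 hf)), ← lintegral_const_mul' _ _ (by norm_num)]
    refine lintegral_mono fun y => ?_
    rw [enorm_sq_ofReal, enorm_sq_ofReal, enorm_sq_ofReal, enorm_sq_ofReal,
      ← ENNReal.ofReal_add (by positivity) (by positivity),
      ← ENNReal.ofReal_add (by positivity) (by positivity),
      show (3 : ℝ≥0∞) = ENNReal.ofReal 3 by norm_num, ← ENNReal.ofReal_mul (by norm_num)]
    refine ENNReal.ofReal_le_ofReal ?_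
    have h := iter_le_sum k hf y
    rw [Fin.sum_univ_three] at h
    have h2 := pow_le_pow_left₀ (norm_nonneg _) h 2
    generalize ‖iteratedFDeriv ℝ k (pd 0 f) y‖ = a at *
    generalize ‖iteratedFDeriv ℝ k (pd 1 f) y‖ = b at *
    generalize ‖iteratedFDeriv ℝ k (pd 2 f) y‖ = c at *
    nlinarith [sq_nonneg (a - b), sq_nonneg (a - c), sq_nonneg (b - c)]
  have h2 : (HOmega3n (n + 1) f) ^ 2 ≤ (HOmega3n 0 f) ^ 2 + 3 * ((HOmega3n n (pd 0 f)) ^ 2 +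
      (HOmega3n n (pd 1 f)) ^ 2 + (HOmega3n n (pd 2 f)) ^ 2) := by
    simp only [HOm_sq]
    rw [Finset.sum_range_succ' _ (n + 1), add_comm, ← Finset.sum_add_distrib,
      ← Finset.sum_add_distrib, Finset.mul_sum]
    refine add_le_add ?_ (Finset.sum_le_sum fun k _ => h1 k)
    simp
  refine h2.trans ?_
  generalize HOmega3n 0 f = a
  generalize HOmega3n n (pd 0 f) = b
  generalize HOmega3n n (pd 1 f) = c
  generalize HOmega3n n (pd 2 f) = d
  calc _ ≤ (a ^ 2 + 3 * (b ^ 2 + c ^ 2 + d ^ 2)) + (8 * a ^ 2 + 6 * (b ^ 2 + c ^ 2 + d ^ 2) +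
        18 * (a * b + a * c + a * d + b * c + b * d + c * d)) := le_self_add
    _ = _ := by ring

lemma HOm_add {E : Type*} [NormedAddCommGroup E] [NormedSpace ℝ E] (n : ℕ)
    {f g : (Fin 3 → ℝ) → E} (hf : ContDiff ℝ (⊤ : ℕ∞) f) (hg : ContDiff ℝ (⊤ : ℕ∞) g) :
    HOmega3n n (fun y => f y + g y) ≤ 2 * (HOmega3n n f + HOmega3n n g) := by
  refine le_of_sq_le ?_
  have h1 : ∀ k, ∫⁻ y in Q3, ‖iteratedFDeriv ℝ k (fun y => f y + g y) y‖ₑ ^ 2 ≤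
      2 * (∫⁻ y in Q3, ‖iteratedFDeriv ℝ k f y‖ₑ ^ 2) +
        2 * ∫⁻ y in Q3, ‖iteratedFDeriv ℝ k g y‖ₑ ^ 2 := by
    intro k
    rw [← lintegral_const_mul' _ _ (by norm_num), ← lintegral_const_mul' _ _ (by norm_num),
      ← lintegral_add_left ((meas_iter k hf).const_mul 2)]
    refine lintegral_mono fun y => ?_
    have hk : ((k : ℕ∞) : WithTop ℕ∞) ≤ ((⊤ : ℕ∞) : WithTop ℕ∞) := by exact_mod_cast le_top
    have e : iteratedFDeriv ℝ k (fun y => f y + g y) y = iteratedFDeriv ℝ k f y +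
        iteratedFDeriv ℝ k g y :=
      iteratedFDeriv_add_apply (hf.of_le hk).contDiffAt (hg.of_le hk).contDiffAt
    rw [e]
    exact enorm_add_sq_le _ _
  have h2 : (HOmega3n n (fun y => f y + g y)) ^ 2 ≤ 2 * (HOmega3n n f) ^ 2 +
      2 * (HOmega3n n g) ^ 2 := by
    simp only [HOm_sq]
    rw [Finset.mul_sum, Finset.mul_sum, ← Finset.sum_add_distrib]
    exact Finset.sum_le_sum fun k _ => h1 k
  refine h2.trans ?_
  generalize HOmega3n n f = a
  generalize HOmega3n n g = b
  calc _ ≤ (2 * a ^ 2 + 2 * b ^ 2) + (2 * a ^ 2 + 2 * b ^ 2 + 8 * (a * b)) := le_self_add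
    _ = _ := by ring

lemma HOm_comp1 {E E' : Type*} [NormedAddCommGroup E] [NormedSpace ℝ E] [NormedAddCommGroup E']
    [NormedSpace ℝ E'] (L : E →L[ℝ] E') (hL : ∀ v, ‖L v‖ ≤ ‖v‖) {f : (Fin 3 → ℝ) → E}
    (hf : ContDiff ℝ (⊤ : ℕ∞) f) (n : ℕ) :
    HOmega3n n (fun y => L (f y)) ≤ HOmega3n n f := by
  refine (HOmega_comp L hf n).trans (mul_le_of_le_one_left zero_le ?_)
  rw [← ofReal_norm, ENNReal.ofReal_le_one]
  exact ContinuousLinearMap.opNorm_le_bound _ zero_le_one fun v => by rw [one_mul]; exact hL v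

/-- coefficient map for `∂₀X` -/
def cA0 : (Fin 3 → ℝ) →L[ℝ] (Fin 3 → ℝ) := ContinuousLinearMap.pi
  ![ContinuousLinearMap.proj 2, 0, -ContinuousLinearMap.proj 0]
/-- coefficient map for `∂₁X` -/
def cA1 : (Fin 3 → ℝ) →L[ℝ] (Fin 3 → ℝ) := ContinuousLinearMap.pi
  ![0, ContinuousLinearMap.proj 2, -ContinuousLinearMap.proj 1]
/-- coefficient map for the curl -/
def cA2 : (Fin 3 → ℝ) →L[ℝ] (Fin 3 → ℝ) := ContinuousLinearMap.pi
  ![ContinuousLinearMap.proj 1, -ContinuousLinearMap.proj 0, 0]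
/-- coefficient map for the divergence -/
def cA3 : ℝ →L[ℝ] (Fin 3 → ℝ) := ContinuousLinearMap.pi
  ![0, 0, ContinuousLinearMap.id ℝ ℝ]

lemma cA0_le (v : Fin 3 → ℝ) : ‖cA0 v‖ ≤ ‖v‖ := by
  rw [pi_norm_le_iff_of_nonneg (norm_nonneg _)]
  intro i
  fin_cases i
  · simpa [cA0] using norm_le_pi_norm v 2
  · simp [cA0]
  · simpa [cA0] using norm_le_pi_norm v 0

lemma cA1_le (v : Fin 3 → ℝ) : ‖cA1 v‖ ≤ ‖v‖ := by
  rw [pi_norm_le_iff_of_nonneg (norm_nonneg _)]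
  intro i
  fin_cases i
  · simp [cA1]
  · simpa [cA1] using norm_le_pi_norm v 2
  · simpa [cA1] using norm_le_pi_norm v 1

lemma cA2_le (v : Fin 3 → ℝ) : ‖cA2 v‖ ≤ ‖v‖ := by
  rw [pi_norm_le_iff_of_nonneg (norm_nonneg _)]
  intro i
  fin_cases i
  · simpa [cA2] using norm_le_pi_norm v 1
  · simpa [cA2] using norm_le_pi_norm v 0
  · simp [cA2]

lemma cA3_le (v : ℝ) : ‖cA3 v‖ ≤ ‖v‖ := by
  rw [pi_norm_le_iff_of_nonneg (norm_nonneg _)]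
  intro i
  fin_cases i <;> simp [cA3]

section X
variable {X : (Fin 3 → ℝ) → (Fin 3 → ℝ)} (hX : ContDiff ℝ (⊤ : ℕ∞) X)
include hX

lemma coord_smooth (k : Fin 3) : ContDiff ℝ (⊤ : ℕ∞) fun y => X y k := contDiff_pi.1 hX k

lemma div_smooth : ContDiff ℝ (⊤ : ℕ∞) (div3 X) := by
  have : div3 X = fun y => pd 0 (fun z => X z 0) y + pd 1 (fun z => X z 1) y +
      pd 2 (fun z => X z 2) y := by
    ext y; rw [div3_eq]
  rw [this]
  have h := fun i k => pd_smooth i (coord_smooth hX k)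
  exact ((h _ _).add (h _ _)).add (h _ _)

lemma curl_smooth : ContDiff ℝ (⊤ : ℕ∞) (curl3 X) := by
  have h := fun i k => pd_smooth i (coord_smooth hX k)
  rw [contDiff_pi]
  intro k
  simp only [curl3_eq X]
  fin_cases k
  · exact (h _ _).sub (h _ _)
  · exact (h _ _).sub (h _ _)
  · exact (h _ _).sub (h _ _)

lemma pd_sub' {u v : (Fin 3 → ℝ) → ℝ} (hu : ContDiff ℝ (⊤ : ℕ∞) u)
    (hv : ContDiff ℝ (⊤ : ℕ∞) v) (i : Fin 3) (y : Fin 3 → ℝ) :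
    pd i (fun z => u z - v z) y = pd i u y - pd i v y := by
  unfold pd
  rw [fderiv_fun_sub (hu.differentiable (by simp) y) (hv.differentiable (by simp) y)]
  rfl

lemma pd_add' {u v : (Fin 3 → ℝ) → ℝ} (hu : ContDiff ℝ (⊤ : ℕ∞) u)
    (hv : ContDiff ℝ (⊤ : ℕ∞) v) (i : Fin 3) (y : Fin 3 → ℝ) :
    pd i (fun z => u z + v z) y = pd i u y + pd i v y := by
  unfold pd
  rw [fderiv_fun_add (hu.differentiable (by simp) y) (hv.differentiable (by simp) y)]
  rfl

lemma pd_coord_fun (j k : Fin 3) : (fun y => pd j X y k) = pd j (fun z => X z k) := by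
  ext y
  rw [pd_coord hX]
  rfl

lemma pd2_eq : pd 2 X = fun y => ((cA0 (pd 0 X y) + cA1 (pd 1 X y)) + cA2 (curl3 X y)) +
    cA3 (div3 X y) := by
  have e : ∀ i k y, pd i X y k = pd i (fun z => X z k) y := fun i k y => (pd_coord hX i k y).symm
  ext y k
  rw [curl3_eq, div3_eq]
  fin_cases k <;> simp [cA0, cA1, cA2, cA3, e] <;> ring

lemma HOm_pd2 (n : ℕ) : HOmega3n n (pd 2 X) ≤ 8 * (HOmega3n n (pd 0 X) + HOmega3n n (pd 1 X) +
    HOmega3n n (curl3 X) + HOmega3n n (div3 X)) := by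
  rw [pd2_eq hX]
  have s0 := pd_smooth 0 hX
  have s1 := pd_smooth 1 hX
  have s2 := curl_smooth hX
  have s3 := div_smooth hX
  have t0 : ContDiff ℝ (⊤ : ℕ∞) fun y => cA0 (pd 0 X y) := cA0.contDiff.comp s0
  have t1 : ContDiff ℝ (⊤ : ℕ∞) fun y => cA1 (pd 1 X y) := cA1.contDiff.comp s1
  have t2 : ContDiff ℝ (⊤ : ℕ∞) fun y => cA2 (curl3 X y) := cA2.contDiff.comp s2
  have t3 : ContDiff ℝ (⊤ : ℕ∞) fun y => cA3 (div3 X y) := cA3.contDiff.comp s3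
  have b0 := HOm_comp1 cA0 cA0_le s0 n
  have b1 := HOm_comp1 cA1 cA1_le s1 n
  have b2 := HOm_comp1 cA2 cA2_le s2 n
  have b3 := HOm_comp1 cA3 cA3_le s3 n
  have a1 := HOm_add n t0 t1
  have a2 := HOm_add n (t0.add t1) t2
  have a3 := HOm_add n ((t0.add t1).add t2) t3
  refine a3.trans ?_
  generalize HOmega3n n (pd 0 X) = p0 at *
  generalize HOmega3n n (pd 1 X) = p1 at *
  generalize HOmega3n n (curl3 X) = c at *
  generalize HOmega3n n (div3 X) = d at *
  calc _ ≤ 2 * (2 * (2 * (p0 + p1) + c) + d) := by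
        refine mul_le_mul_right (add_le_add (a2.trans (mul_le_mul_right (add_le_add
          (a1.trans (mul_le_mul_right (add_le_add b0 b1) 2)) b2) 2)) b3) 2
    _ ≤ 2 * (2 * (2 * (p0 + p1) + c) + d) + (4 * c + 6 * d) := le_self_add
    _ = _ := by ring

lemma curl_pd (j : Fin 3) : curl3 (pd j X) = pd j (curl3 X) := by
  have h := fun i k => pd_smooth i (coord_smooth hX k)
  have hc := fun i k a => pd_comm (coord_smooth hX k) i j a
  ext y k
  have e : pd j (curl3 X) y k = pd j (fun z => curl3 X z k) y :=
    (pd_coord (curl_smooth hX) j k y).symm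
  rw [e, curl3_eq]
  simp only [pd_coord_fun hX, curl3_eq X, hc]
  fin_cases k
  · exact (pd_sub' hX (h _ _) (h _ _) j y).symm
  · exact (pd_sub' hX (h _ _) (h _ _) j y).symm
  · exact (pd_sub' hX (h _ _) (h _ _) j y).symm

lemma div_pd (j : Fin 3) : div3 (pd j X) = pd j (div3 X) := by
  have h := fun i k => pd_smooth i (coord_smooth hX k)
  have hc := fun i k a => pd_comm (coord_smooth hX k) i j a
  ext y
  have e : div3 X = fun y => pd 0 (fun z => X z 0) y + pd 1 (fun z => X z 1) y +
      pd 2 (fun z => X z 2) y := by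
    ext y; rw [div3_eq]
  rw [e, div3_eq]
  simp only [pd_coord_fun hX, hc]
  rw [pd_add' hX ((h _ _).add (h _ _)) (h _ _), pd_add' hX (h _ _) (h _ _)]
end X

lemma pd_slice {F : (Fin 3 → ℝ) → ℝ} (hF : ContDiff ℝ (⊤ : ℕ∞) F) (j : Fin 2) (z : ℝ)
    (x : Fin 2 → ℝ) : pd j (fun x => F (ext3 x z)) x = pd j.castSucc F (ext3 x z) := by
  have hd : Differentiable ℝ F := hF.differentiable (by simp)
  have h1 := slice_h hd x (Pi.single j 1) z 0
  have hs : DifferentiableAt ℝ (fun x => F (ext3 x z)) x :=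
    (contDiff_slice hF z).differentiable (by simp) x
  have hl : HasDerivAt (fun t : ℝ => x + t • (Pi.single j (1 : ℝ) : Fin 2 → ℝ))
      (Pi.single j 1) 0 := by
    simpa using ((hasDerivAt_id (0 : ℝ)).smul_const (Pi.single j (1 : ℝ) : Fin 2 → ℝ)).const_add x
  have h2 : HasDerivAt (fun t : ℝ => F (ext3 (x + t • (Pi.single j (1 : ℝ) : Fin 2 → ℝ)) z))
      (fderiv ℝ (fun x => F (ext3 x z)) x (Pi.single j 1)) 0 := by
    have hs' : HasFDerivAt (fun x => F (ext3 x z)) (fderiv ℝ (fun x => F (ext3 x z)) x)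
        (x + (0 : ℝ) • (Pi.single j (1 : ℝ) : Fin 2 → ℝ)) := by
      simpa using hs.hasFDerivAt
    exact hs'.comp_hasDerivAt (0 : ℝ) hl
  have h3 := h2.unique h1
  have e : lift3 (Pi.single j 1) = Pi.single j.castSucc 1 := by
    ext i
    fin_cases j <;> fin_cases i <;> simp [lift3, ext3]
  unfold pd
  rw [h3, e]
  simp

lemma bfun {X : (Fin 3 → ℝ) → (Fin 3 → ℝ)} (hX : ContDiff ℝ (⊤ : ℕ∞) X) (l : Fin 2) (z : ℝ) :
    (fun x : Fin 2 → ℝ => fderiv ℝ X (ext3 x z) (Pi.single l.castSucc 1) 2) =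
      fun x => pd l.castSucc (fun y => X y 2) (ext3 x z) := by
  ext x
  rw [pd_coord hX]

lemma bfun_pd {X : (Fin 3 → ℝ) → (Fin 3 → ℝ)} (hX : ContDiff ℝ (⊤ : ℕ∞) X) (l j : Fin 2) (z : ℝ) :
    (fun x : Fin 2 → ℝ => fderiv ℝ (pd j.castSucc X) (ext3 x z) (Pi.single l.castSucc 1) 2) =
      pd j (fun x => fderiv ℝ X (ext3 x z) (Pi.single l.castSucc 1) 2) := by
  have hu := coord_smooth hX 2
  rw [bfun hX, bfun (pd_smooth _ hX)]
  ext x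
  rw [pd_slice (pd_smooth _ hu), pd_coord_fun hX]
  exact pd_comm hu _ _ _

lemma pd_neg_fun {n : ℕ} (j : Fin n) (w : (Fin n → ℝ) → ℝ) :
    pd j (fun x => -w x) = fun x => -pd j w x := by
  ext x
  unfold pd
  rw [fderiv_fun_neg]
  rfl

lemma term_pd (m : ℕ) (hm : 1 ≤ m) (j : Fin 2) {w : (Fin 2 → ℝ) → ℝ}
    (hw : ContDiff ℝ (⊤ : ℕ∞) w) (hP : Per2 w) :
    HGammaR ((m : ℝ) - 3/2) (pd j w) ≤ 100 * HGammaR (((m + 1 : ℕ) : ℝ) - 3/2) w := by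
  obtain rfl | ⟨n, rfl⟩ : m = 1 ∨ ∃ n, m = n + 2 := by
    rcases m with _ | _ | n
    · omega
    · left; rfl
    · right; exact ⟨n, rfl⟩
  · have e1 : (((1 : ℕ) : ℝ) - 3/2) = -(1/2) := by norm_num
    have e2 : ((((1 + 1 : ℕ)) : ℝ) - 3/2) = ((0 : ℕ) : ℝ) + 1/2 := by norm_num
    rw [e1, e2, HGammaR_nhalf]
    have := bdry_i j hw hP
    simpa using this
  · have e1 : (((n + 2 : ℕ) : ℝ) - 3/2) = (n : ℝ) + 1/2 := by push_cast; ring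
    have e2 : (((n + 2 + 1 : ℕ) : ℝ) - 3/2) = ((n + 1 : ℕ) : ℝ) + 1/2 := by push_cast; ring
    rw [e1, e2, HGammaR_nhalf, HGammaR_nhalf]
    refine (bdry_ii n j hw).trans ?_
    exact le_mul_of_one_le_left (zero_le) (by norm_num)

lemma term_low (m : ℕ) (hm : 1 ≤ m) {w : (Fin 2 → ℝ) → ℝ}
    (hw : ContDiff ℝ (⊤ : ℕ∞) w) :
    HGammaR (-(1/2)) w ≤ HGammaR (((m + 1 : ℕ) : ℝ) - 3/2) w := by
  obtain ⟨n, rfl⟩ : ∃ n, m = n + 1 := ⟨m - 1, by omega⟩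
  have e2 : (((n + 1 + 1 : ℕ) : ℝ) - 3/2) = (n : ℝ) + 1/2 := by push_cast; ring
  rw [e2, HGammaR_nhalf]
  exact bdry_iii n hw.continuous

lemma bsm {X : (Fin 3 → ℝ) → (Fin 3 → ℝ)} (hX : ContDiff ℝ (⊤ : ℕ∞) X) (l : Fin 2) (z : ℝ) :
    ContDiff ℝ (⊤ : ℕ∞)
      (fun x : Fin 2 → ℝ => fderiv ℝ X (ext3 x z) (Pi.single l.castSucc 1) 2) := by
  rw [bfun hX]
  exact contDiff_slice (pd_smooth _ (coord_smooth hX 2)) z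

lemma bper {X : (Fin 3 → ℝ) → (Fin 3 → ℝ)} (hX : ContDiff ℝ (⊤ : ℕ∞) X) (hP : Per3 X)
    (l : Fin 2) (z : ℝ) :
    Per2 (fun x : Fin 2 → ℝ => fderiv ℝ X (ext3 x z) (Pi.single l.castSucc 1) 2) := by
  rw [bfun hX]
  have : Per3 fun y => X y 2 := fun y k => congrFun (hP y k) 2
  exact per3_slice (pd_per _ this) z

lemma BT_pd (m : ℕ) (hm : 1 ≤ m) (j : Fin 2) {X : (Fin 3 → ℝ) → (Fin 3 → ℝ)}
    (hX : ContDiff ℝ (⊤ : ℕ∞) X) (hP : Per3 X) :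
    BT ((m : ℝ) - 3/2) (pd j.castSucc X) ≤ 100 * BT (((m + 1 : ℕ) : ℝ) - 3/2) X := by
  unfold BT
  rw [Finset.mul_sum]
  refine Finset.sum_le_sum fun l _ => ?_
  rw [mul_add]
  refine add_le_add ?_ ?_
  · rw [bfun_pd hX]
    exact term_pd m hm j (bsm hX l 1) (bper hX hP l 1)
  · have e : (fun x : Fin 2 → ℝ => -fderiv ℝ (pd j.castSucc X) (ext3 x (-1))
        (Pi.single l.castSucc 1) 2) =
        pd j (fun x => -fderiv ℝ X (ext3 x (-1)) (Pi.single l.castSucc 1) 2) := by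
      rw [pd_neg_fun, ← bfun_pd hX]
    rw [e]
    refine term_pd m hm j (bsm hX l (-1)).neg fun x k => ?_
    exact congrArg Neg.neg (bper hX hP l (-1) x k)

lemma BT_low (m : ℕ) (hm : 1 ≤ m) {X : (Fin 3 → ℝ) → (Fin 3 → ℝ)}
    (hX : ContDiff ℝ (⊤ : ℕ∞) X) :
    BT (-(1/2)) X ≤ BT (((m + 1 : ℕ) : ℝ) - 3/2) X := by
  unfold BT
  refine Finset.sum_le_sum fun l _ => add_le_add ?_ ?_
  · exact term_low m hm (bsm hX l 1)
  · exact term_low m hm (bsm hX l (-1)).neg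

lemma main_claim (m : ℕ) (hm : 1 ≤ m) : ∃ C : ℝ≥0, 0 < C ∧
    ∀ X : (Fin 3 → ℝ) → (Fin 3 → ℝ), ContDiff ℝ (⊤ : ℕ∞) X → Per3 X →
      HOmega3n m X ≤ C * (HOmega3n 0 X + HOmega3n (m - 1) (curl3 X) +
        HOmega3n (m - 1) (div3 X) + BT ((m : ℝ) - 3/2) X) := by
  induction m, hm using Nat.le_induction with
  | base =>
    refine ⟨100, by norm_num, fun X hX hP => ?_⟩
    have e1 : (((1 : ℕ) : ℝ) - 3/2) = -(1/2) := by norm_num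
    rw [e1]
    simpa using base_case hX hP
  | succ m hm ih =>
    obtain ⟨C, hC, ih⟩ := ih
    refine ⟨27 * (1 + 800 * C), by positivity, fun X hX hP => ?_⟩
    rw [Nat.add_sub_cancel]
    set a := HOmega3n 0 X + HOmega3n m (curl3 X) + HOmega3n m (div3 X) +
      BT (((m + 1 : ℕ) : ℝ) - 3/2) X with ha
    have h0 : HOmega3n 0 X ≤ a :=
      le_add_right (le_add_right le_self_add)
    have hc : HOmega3n m (curl3 X) ≤ a :=
      le_add_right (le_add_right le_add_self)
    have hd : HOmega3n m (div3 X) ≤ a := le_add_right le_add_self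
    have hb : BT (((m + 1 : ℕ) : ℝ) - 3/2) X ≤ a := le_add_self
    have h1 : HOmega3n 1 X ≤ 100 * a := by
      refine (base_case hX hP).trans (mul_le_mul_right ?_ 100)
      exact add_le_add (add_le_add (add_le_add le_rfl (HOm_mono (Nat.zero_le m) _))
        (HOm_mono (Nat.zero_le m) _)) (BT_low m hm hX)
    have hp : ∀ j : Fin 2, HOmega3n m (pd j.castSucc X) ≤ C * (400 * a) := by
      intro j
      refine (ih _ (pd_smooth _ hX) (pd_per _ hP)).trans (mul_le_mul_right ?_ _)
      have k1 : HOmega3n 0 (pd j.castSucc X) ≤ 100 * a := (HOm_pd 0 _ hX).trans h1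
      have k2 : HOmega3n (m - 1) (curl3 (pd j.castSucc X)) ≤ a := by
        rw [curl_pd hX]
        refine (HOm_pd (m - 1) _ (curl_smooth hX)).trans ?_
        rwa [Nat.sub_add_cancel hm]
      have k3 : HOmega3n (m - 1) (div3 (pd j.castSucc X)) ≤ a := by
        rw [div_pd hX]
        refine (HOm_pd (m - 1) _ (div_smooth hX)).trans ?_
        rwa [Nat.sub_add_cancel hm]
      have k4 : BT ((m : ℝ) - 3/2) (pd j.castSucc X) ≤ 100 * a :=
        (BT_pd m hm j hX hP).trans (mul_le_mul_right hb 100)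
      calc _ ≤ 100 * a + a + a + 100 * a := add_le_add (add_le_add (add_le_add k1 k2) k3) k4
        _ ≤ 100 * a + a + a + 100 * a + 198 * a := le_self_add
        _ = 400 * a := by ring
    have p0 : HOmega3n m (pd 0 X) ≤ C * (400 * a) := hp 0
    have p1 : HOmega3n m (pd 1 X) ≤ C * (400 * a) := hp 1
    have p2 := HOm_pd2 hX m
    have hs := HOm_succ m hX
    refine hs.trans ?_
    calc _ ≤ 3 * (a + (C * (400 * a) + C * (400 * a) +
          8 * (C * (400 * a) + C * (400 * a) + HOmega3n m (curl3 X) + HOmega3n m (div3 X)))) := by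
          refine mul_le_mul_right (add_le_add h0 (add_le_add (add_le_add p0 p1)
            (p2.trans (mul_le_mul_right ?_ 8)))) 3
          exact add_le_add (add_le_add (add_le_add p0 p1) le_rfl) le_rfl
      _ = 3 * a + 3 * (18 * (C * (400 * a))) +
          24 * (HOmega3n m (curl3 X) + HOmega3n m (div3 X)) := by ring
      _ ≤ 3 * a + 3 * (18 * (C * (400 * a))) + 24 * a := by
          refine add_le_add le_rfl (mul_le_mul_right ?_ 24)
          rw [ha]
          refine le_add_right ?_
          rw [add_assoc]
          exact le_add_self
      _ = (27 + 27 * (800 * C)) * a := by ring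
      _ = _ := by push_cast; ring

/-- **Hodge-type div–curl estimate.** On `Ω = 𝕋² × (−1,1)` with boundary `Γ` and outward
normal `N`, for every integer `s ≥ 1` and every smooth vector field `X`:
`‖X‖_{H^s(Ω)} ≲ ‖X‖_{L²} + ‖curl X‖_{H^{s−1}} + ‖div X‖_{H^{s−1}} + |∂̄X·N|_{H^{s−3/2}(Γ)}`,
the boundary term collecting the two tangential derivatives `∂̄ ∈ {∂_1, ∂_2}` on the top
(`N = e₃`) and bottom (`N = −e₃`) components of `Γ`. -/
theorem hodge_div_curl_estimate :
    ∀ s : ℕ, 1 ≤ s →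
      ∃ C : ℝ≥0, 0 < C ∧
        ∀ X : (Fin 3 → ℝ) → (Fin 3 → ℝ), ContDiff ℝ (⊤ : ℕ∞) X → Per3 X →
          HOmega3n s X ≤
            C * (HOmega3n 0 X + HOmega3n (s - 1) (curl3 X) + HOmega3n (s - 1) (div3 X) +
              ∑ l : Fin 2,
                (HGammaR ((s : ℝ) - 3/2)
                    (fun x => fderiv ℝ X (ext3 x 1) (Pi.single l.castSucc 1) 2) +
                  HGammaR ((s : ℝ) - 3/2)
                    (fun x => -fderiv ℝ X (ext3 x (-1)) (Pi.single l.castSucc 1) 2))) := by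
  intro s hs
  exact main_claim s hs
end
end

section
/- (Mollifier approximation rate in L∞) With Λ_κ the horizontal mollifier at scale κ on 𝕋² (convolution with κ^{-2}ζ(·/κ), ζ a standard kernel), for any f with ∂̄f ∈ H^{1/2}(𝕋²) one has |f − Λ_κ f|_{L^∞(𝕋²)} ≲ √κ · |∂̄ f|_{H^{1/2}(𝕋²)}, with implicit constant independent of κ. -/
open MeasureTheory
open scoped ENNReal NNReal

noncomputable section

/-- The horizontal mollification at scale `κ`:
`Λ_κ f (x) = ∫ κ⁻² ζ((x − z)/κ) f(z) dz`. -/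
def moll (ζ : (Fin 2 → ℝ) → ℝ) (κ : ℝ) (f : (Fin 2 → ℝ) → ℝ) (x : Fin 2 → ℝ) : ℝ :=
  ∫ z, (κ ^ 2)⁻¹ * ζ (κ⁻¹ • (x - z)) * f z

/-- The `H^{1/2}(𝕋²)` (Sobolev–Slobodeckij) norm. -/
def H12 (φ : (Fin 2 → ℝ) → ℝ) : ℝ≥0∞ :=
  ((∫⁻ x in Q2, (‖φ x‖₊ : ℝ≥0∞) ^ 2) +
      ∫⁻ x in Q2, ∫⁻ y in Q2,
        ((‖φ x - φ y‖₊ : ℝ≥0∞) ^ 2) / ENNReal.ofReal (pdist2 x y ^ (3 : ℝ))) ^ (1/2 : ℝ)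

open Metric


open scoped Pointwise in
lemma lint_per_s17 (Φ : (Fin 2 → ℝ) → ℝ≥0∞) (hΦ : Per2 Φ) (x : Fin 2 → ℝ) :
    ∫⁻ y in closedBall x (1/2), Φ y = ∫⁻ y in Q2, Φ y := by
  let b := Pi.basisFun ℝ (Fin 2)
  have hD := ZSpan.isAddFundamentalDomain' b (volume : Measure (Fin 2 → ℝ))
  let v : (Fin 2 → ℝ) := fun i => x i - 1/2
  have hD2 : IsAddFundamentalDomain (Submodule.span ℤ (Set.range b)).toAddSubgroup
      (v +ᵥ ZSpan.fundamentalDomain b) (volume : Measure (Fin 2 → ℝ)) := hD.vadd_of_comm v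
  have : Countable (Submodule.span ℤ (Set.range b)).toAddSubgroup :=
    inferInstanceAs (Countable (Submodule.span ℤ (Set.range b)))
  have key := hD2.setLIntegral_eq hD Φ (by
    rintro ⟨g, hg⟩ y
    have : ∃ k : Fin 2 → ℤ, g = fun i => (k i : ℝ) := by
      have hg' : g ∈ Submodule.span ℤ (Set.range b) := hg
      rw [b.mem_span_iff_repr_mem ℤ] at hg'
      choose k hk using hg'
      refine ⟨k, funext fun i => ?_⟩
      have := hk i
      simpa [b] using this.symm
    obtain ⟨k, rfl⟩ := this
    have := hΦ y k
    rw [add_comm] at this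
    exact this)
  have e1 : (closedBall x (1/2) : Set (Fin 2 → ℝ)) =ᵐ[volume] (v +ᵥ ZSpan.fundamentalDomain b : Set (Fin 2 → ℝ)) := by
    have : (v +ᵥ ZSpan.fundamentalDomain b : Set (Fin 2 → ℝ))
        = Set.univ.pi fun i => Set.Ico (x i - 1/2) (x i + 1/2) := by
      ext y
      rw [Set.mem_vadd_set_iff_neg_vadd_mem, ZSpan.fundamentalDomain_pi_basisFun]
      simp only [Set.mem_pi, Set.mem_univ, true_implies, Set.mem_Ico, vadd_eq_add, Pi.add_apply,
        Pi.neg_apply, v]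
      refine forall_congr' fun i => ?_
      constructor <;> rintro ⟨h1, h2⟩ <;> constructor <;> linarith
    rw [this, closedBall_pi _ (by norm_num)]
    simp only [Real.closedBall_eq_Icc]
    rw [Set.pi_univ_Icc]
    exact Measure.univ_pi_Ico_ae_eq_Icc.symm
  have e2 : Q2 =ᵐ[volume] (ZSpan.fundamentalDomain b : Set (Fin 2 → ℝ)) := by
    rw [ZSpan.fundamentalDomain_pi_basisFun]
    exact Measure.univ_pi_Ioo_ae_eq_Icc.trans Measure.univ_pi_Ico_ae_eq_Icc.symm
  rw [setLIntegral_congr e1, setLIntegral_congr e2, key]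

lemma lint_scale (N : (Fin 2 → ℝ) → ℝ≥0∞) (hN : Measurable N) (x : Fin 2 → ℝ) (κ s : ℝ) (hs : 0 < s) :
    ∫⁻ z in closedBall x κ, N (x + s • (z - x))
      = ENNReal.ofReal ((s^2)⁻¹) * ∫⁻ y in closedBall x (s * κ), N y := by
  rw [← lintegral_indicator measurableSet_closedBall, ← lintegral_indicator measurableSet_closedBall]
  set Φ := (closedBall x (s * κ)).indicator N with hΦ
  have hm : Measurable Φ := hN.indicator measurableSet_closedBall
  have e : ∀ z, (closedBall x κ).indicator (fun z => N (x + s • (z - x))) z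
      = Φ (x + s • (z - x)) := by
    intro z
    have : z ∈ closedBall x κ ↔ x + s • (z - x) ∈ closedBall x (s * κ) := by
      simp only [mem_closedBall, dist_eq_norm, add_sub_cancel_left, norm_smul, Real.norm_eq_abs,
        abs_of_pos hs]
      exact (mul_le_mul_iff_right₀ hs).symm
    by_cases hz : z ∈ closedBall x κ
    · rw [Set.indicator_of_mem hz, hΦ, Set.indicator_of_mem (this.1 hz)]
    · rw [Set.indicator_of_notMem hz, hΦ, Set.indicator_of_notMem (fun h => hz (this.2 h))]
  simp_rw [e]
  rw [lintegral_sub_right_eq_self (fun u => Φ (x + s • u)) x]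
  have := lintegral_map (μ := (volume : Measure (Fin 2 → ℝ))) (f := fun v => Φ (x + v)) (g := fun u => s • u)
    (by fun_prop) (by fun_prop)
  rw [← this, Measure.map_addHaar_smul _ hs.ne', lintegral_smul_measure,
    lintegral_add_left_eq_self Φ x]
  simp

lemma pdist2_nonneg (y z : Fin 2 → ℝ) : 0 ≤ pdist2 y z := Real.iInf_nonneg fun _ => norm_nonneg _

lemma pdist2_le (y z : Fin 2 → ℝ) : pdist2 y z ≤ ‖y - z‖ := by
  have := ciInf_le (f := fun k : Fin 2 → ℤ => ‖y - z + fun i => (k i : ℝ)‖)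
    ⟨0, by rintro _ ⟨k, rfl⟩; exact norm_nonneg _⟩ 0
  refine this.trans_eq ?_
  congr 1
  ext i; simp

lemma pdist2_per_right (y : Fin 2 → ℝ) : Per2 (pdist2 y) := by
  intro z k
  unfold pdist2
  refine (Equiv.addLeft (-k)).iInf_congr fun j => ?_
  congr 1
  ext i
  simp; ring

lemma pdist2_per_left (z : Fin 2 → ℝ) : Per2 (fun y => pdist2 y z) := by
  intro y k
  unfold pdist2
  refine (Equiv.addLeft k).iInf_congr fun j => ?_
  congr 1
  ext i
  simp; ring

lemma amgm (a l : ℝ) (hl : 0 < l) :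
    ‖a‖ₑ ≤ ENNReal.ofReal l + ENNReal.ofReal l⁻¹ * ‖a‖ₑ ^ 2 := by
  rw [← ofReal_norm, ← ENNReal.ofReal_pow (norm_nonneg _),
    ← ENNReal.ofReal_mul (by positivity), ← ENNReal.ofReal_add (by positivity) (by positivity)]
  apply ENNReal.ofReal_le_ofReal
  have h : l + l⁻¹ * ‖a‖^2 - ‖a‖ = l⁻¹ * ((‖a‖ - l/2)^2 + 3/4 * l^2) := by
    field_simp; ring
  have : 0 ≤ l⁻¹ * ((‖a‖ - l/2)^2 + 3/4 * l^2) := by positivity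
  linarith

lemma vol_cb (x : Fin 2 → ℝ) {r : ℝ} (hr : 0 ≤ r) :
    volume (closedBall x r) = ENNReal.ofReal (4 * r^2) := by
  rw [Real.volume_pi_closedBall x hr]
  congr 1; simp; ring

lemma frac_bound (d : ℝ≥0∞) (p r : ℝ) (hp : 0 ≤ p) (hpr : p ≤ r) (hr : 0 < r) :
    d ≤ ENNReal.ofReal (r^3) * (d / ENNReal.ofReal (p ^ (3:ℝ))) := by
  have e : p ^ (3:ℝ) = p^3 := by exact_mod_cast Real.rpow_natCast p 3
  rw [e]
  rcases hp.eq_or_lt with h0 | h0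
  · rw [← h0]
    by_cases hd : d = 0
    · simp [hd]
    · have : d / ENNReal.ofReal (0^3) = ⊤ := by
        simp [ENNReal.div_zero hd]
      rw [this, ENNReal.mul_top]
      · exact le_top
      · simpa using pow_pos hr 3
  · have : 1 ≤ ENNReal.ofReal (r^3) / ENNReal.ofReal (p^3) := by
      rw [← ENNReal.ofReal_div_of_pos (by positivity)]
      rw [ENNReal.one_le_ofReal, one_le_div (by positivity)]
      gcongr
    calc d = d * 1 := (mul_one d).symm
      _ ≤ d * (ENNReal.ofReal (r^3) / ENNReal.ofReal (p^3)) := by gcongr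
      _ = _ := by simp only [div_eq_mul_inv]; ring

/-- The local bounds on `g` provided by `H12 g ≤ h`. -/
structure LocB (g : (Fin 2 → ℝ) → ℝ) (h : ℝ) : Prop where
  cont : Continuous g
  pos : 0 < h
  l2 : ∀ x : Fin 2 → ℝ, ∫⁻ y in closedBall x (1/2), ‖g y‖ₑ^2 ≤ ENNReal.ofReal (h^2)
  sem : ∀ x : Fin 2 → ℝ, ∫⁻ y in closedBall x (1/2), ∫⁻ z in closedBall x (1/2),
    ‖g y - g z‖ₑ^2 / ENNReal.ofReal (pdist2 y z ^ (3:ℝ)) ≤ ENNReal.ofReal (h^2)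

lemma LocB.of_H12 (g : (Fin 2 → ℝ) → ℝ) (h : ℝ) (hg : Continuous g) (hper : Per2 g) (hh : 0 < h)
    (H : H12 g ≤ ENNReal.ofReal h) : LocB g h := by
  have H2 : (∫⁻ x in Q2, ‖g x‖ₑ ^ 2) +
      (∫⁻ x in Q2, ∫⁻ y in Q2,
        (‖g x - g y‖ₑ ^ 2) / ENNReal.ofReal (pdist2 x y ^ (3 : ℝ))) ≤ ENNReal.ofReal (h^2) := by
    have := ENNReal.rpow_le_rpow H (z := 2) (by norm_num)
    unfold H12 at this
    rw [← ENNReal.rpow_mul] at this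
    rw [show (1/2 : ℝ) * 2 = 1 by norm_num, ENNReal.rpow_one, ENNReal.rpow_two] at this
    rw [ENNReal.ofReal_pow hh.le]
    exact this
  refine ⟨hg, hh, fun x => ?_, fun x => ?_⟩
  · rw [lint_per_s17 _ (fun y k => by simp only [hper y k])]
    exact le_self_add.trans H2
  · have e : ∀ y, ∫⁻ z in closedBall x (1/2),
        ‖g y - g z‖ₑ^2 / ENNReal.ofReal (pdist2 y z ^ (3:ℝ))
        = ∫⁻ z in Q2, ‖g y - g z‖ₑ^2 / ENNReal.ofReal (pdist2 y z ^ (3:ℝ)) := fun y =>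
      lint_per_s17 _ (fun z k => by simp only [hper z k, pdist2_per_right y z k]) x
    simp_rw [e]
    rw [lint_per_s17 _ (fun y k => by
      have := fun z => pdist2_per_left z y k
      simp only [hper y k, this])]
    exact le_add_self.trans H2

lemma LocB.base {g : (Fin 2 → ℝ) → ℝ} {h : ℝ} (B : LocB g h) (x : Fin 2 → ℝ) :
    ∫⁻ y in closedBall x (1/2), ‖g y‖ₑ ≤ ENNReal.ofReal (2 * h) := by
  have hh := B.pos
  calc ∫⁻ y in closedBall x (1/2), ‖g y‖ₑ
      ≤ ∫⁻ y in closedBall x (1/2), (ENNReal.ofReal h + ENNReal.ofReal h⁻¹ * ‖g y‖ₑ ^ 2) :=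
        lintegral_mono fun y => amgm _ _ hh
    _ = ENNReal.ofReal h + ENNReal.ofReal h⁻¹ * ∫⁻ y in closedBall x (1/2), ‖g y‖ₑ ^ 2 := by
        rw [lintegral_add_left measurable_const, lintegral_const_mul' _ _ ENNReal.ofReal_ne_top,
          setLIntegral_const, vol_cb x (by norm_num)]
        norm_num
    _ ≤ ENNReal.ofReal h + ENNReal.ofReal h⁻¹ * ENNReal.ofReal (h^2) := by
        gcongr; exact B.l2 x
    _ = _ := by
        rw [← ENNReal.ofReal_mul (by positivity), ← ENNReal.ofReal_add hh.le (by positivity)]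
        congr 1; field_simp; ring

lemma LocB.step {g : (Fin 2 → ℝ) → ℝ} {h : ℝ} (B : LocB g h) (x : Fin 2 → ℝ) (t : ℝ) (ht : 0 < t)
    (ht2 : 4 * t^2 ≤ 1/2)
    (IH : ∫⁻ y in closedBall x (4 * t^2), ‖g y‖ₑ ≤ ENNReal.ofReal (64 * h * (2*t)^3)) :
    ∫⁻ y in closedBall x (t^2), ‖g y‖ₑ ≤ ENNReal.ofReal (64 * h * t^3) := by
  have hh := B.pos
  have hg := B.cont
  have hl : 0 < h / t := by positivity
  have pt : ∀ y ∈ closedBall x (t^2), ∀ z ∈ closedBall x (4*t^2), ‖g y‖ₑ ≤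
      (‖g z‖ₑ + ENNReal.ofReal (h/t)) + ENNReal.ofReal ((h/t)⁻¹) * (ENNReal.ofReal ((5*t^2)^3) *
       (‖g y - g z‖ₑ^2 / ENNReal.ofReal (pdist2 y z ^ (3:ℝ)))) := by
    intro y hy z hz
    have h1 : ‖g y‖ₑ ≤ ‖g z‖ₑ + ‖g y - g z‖ₑ := by
      calc ‖g y‖ₑ = ‖g z + (g y - g z)‖ₑ := by congr 1; ring
        _ ≤ _ := enorm_add_le _ _
    refine h1.trans ?_
    rw [add_assoc]
    gcongr
    refine (amgm _ _ hl).trans ?_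
    gcongr
    refine frac_bound _ _ _ (pdist2_nonneg _ _) ?_ (by positivity)
    refine (pdist2_le _ _).trans ?_
    rw [← dist_eq_norm]
    have := dist_triangle_right y z x
    rw [mem_closedBall] at hy hz
    linarith
  set S : ℝ≥0∞ := ENNReal.ofReal ((h/t)⁻¹) * ENNReal.ofReal ((5*t^2)^3) with hS
  have hSt : S ≠ ⊤ := ENNReal.mul_ne_top ENNReal.ofReal_ne_top ENNReal.ofReal_ne_top
  have I1 : ∀ y ∈ closedBall x (t^2), ENNReal.ofReal (64*t^4) * ‖g y‖ₑ ≤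
      ENNReal.ofReal (64 * h * (2*t)^3 + h/t * (64*t^4)) + S * ∫⁻ z in closedBall x (1/2),
        (‖g y - g z‖ₑ^2 / ENNReal.ofReal (pdist2 y z ^ (3:ℝ))) := by
    intro y hy
    calc ENNReal.ofReal (64*t^4) * ‖g y‖ₑ = ∫⁻ z in closedBall x (4*t^2), ‖g y‖ₑ := by
          rw [setLIntegral_const, vol_cb x (by positivity), mul_comm]
          congr 2; ring
      _ ≤ ∫⁻ z in closedBall x (4*t^2), ((‖g z‖ₑ + ENNReal.ofReal (h/t)) +
            S * (‖g y - g z‖ₑ^2 / ENNReal.ofReal (pdist2 y z ^ (3:ℝ)))) := by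
          refine setLIntegral_mono' measurableSet_closedBall fun z hz => ?_
          refine (pt y hy z hz).trans_eq ?_
          rw [hS, mul_assoc]
      _ = (∫⁻ z in closedBall x (4*t^2), ‖g z‖ₑ) + ENNReal.ofReal (h/t) * ENNReal.ofReal (64*t^4)
          + S * ∫⁻ z in closedBall x (4*t^2),
            (‖g y - g z‖ₑ^2 / ENNReal.ofReal (pdist2 y z ^ (3:ℝ))) := by
          rw [lintegral_add_left (by fun_prop), lintegral_add_right _ measurable_const,
            lintegral_const_mul' _ _ hSt, setLIntegral_const, vol_cb x (by positivity)]
          congr 4; ring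
      _ ≤ _ := by
          rw [ENNReal.ofReal_add (by positivity) (by positivity), ← ENNReal.ofReal_mul hl.le]
          gcongr
  have I2 : ENNReal.ofReal (64*t^4) * ∫⁻ y in closedBall x (t^2), ‖g y‖ₑ ≤
      ENNReal.ofReal (64*t^4) * ENNReal.ofReal (64 * h * t^3) := by
    calc ENNReal.ofReal (64*t^4) * ∫⁻ y in closedBall x (t^2), ‖g y‖ₑ
        = ∫⁻ y in closedBall x (t^2), ENNReal.ofReal (64*t^4) * ‖g y‖ₑ :=
          (lintegral_const_mul' _ _ ENNReal.ofReal_ne_top).symm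
      _ ≤ ∫⁻ y in closedBall x (t^2), (ENNReal.ofReal (64 * h * (2*t)^3 + h/t * (64*t^4)) +
          S * ∫⁻ z in closedBall x (1/2),
            (‖g y - g z‖ₑ^2 / ENNReal.ofReal (pdist2 y z ^ (3:ℝ)))) :=
          setLIntegral_mono' measurableSet_closedBall I1
      _ = ENNReal.ofReal (64 * h * (2*t)^3 + h/t * (64*t^4)) * ENNReal.ofReal (4 * (t^2)^2) +
          S * ∫⁻ y in closedBall x (t^2), ∫⁻ z in closedBall x (1/2),
            (‖g y - g z‖ₑ^2 / ENNReal.ofReal (pdist2 y z ^ (3:ℝ))) := by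
          rw [lintegral_add_left measurable_const, lintegral_const_mul' _ _ hSt,
            setLIntegral_const, vol_cb x (by positivity)]
      _ ≤ ENNReal.ofReal (64 * h * (2*t)^3 + h/t * (64*t^4)) * ENNReal.ofReal (4 * (t^2)^2) +
          S * ENNReal.ofReal (h^2) := by
          gcongr
          refine le_trans ?_ (B.sem x)
          exact lintegral_mono_set (closedBall_subset_closedBall (by nlinarith))
      _ ≤ _ := by
          rw [hS, ← ENNReal.ofReal_mul (by positivity), ← ENNReal.ofReal_mul (by positivity),
            ← ENNReal.ofReal_mul (by positivity), ← ENNReal.ofReal_add (by positivity) (by positivity),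
            ← ENNReal.ofReal_mul (by positivity)]
          apply ENNReal.ofReal_le_ofReal
          have e : 64*t^4 * (64*h*t^3) - ((64 * h * (2*t)^3 + h/t * (64*t^4)) * (4 * (t^2)^2)
            + (h/t)⁻¹ * (5*t^2)^3 * h^2) = (4096 - 2048 - 256 - 125) * (h * t^7) := by
            field_simp; ring
          have : 0 ≤ (4096 - 2048 - 256 - 125) * (h * t^7) := by positivity
          linarith
  rwa [ENNReal.mul_le_mul_iff_right] at I2
  · simp; positivity
  · exact ENNReal.ofReal_ne_top

lemma LocB.main {g : (Fin 2 → ℝ) → ℝ} {h : ℝ} (B : LocB g h) (x : Fin 2 → ℝ) (n : ℕ) :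
    ∀ t : ℝ, 0 < t → t^2 ≤ 1/2 → 1/8 < 4^n * t^2 →
    ∫⁻ y in closedBall x (t^2), ‖g y‖ₑ ≤ ENNReal.ofReal (64 * h * t^3) := by
  have hh := B.pos
  have base : ∀ t : ℝ, 0 < t → t^2 ≤ 1/2 → 1/8 < t^2 →
    ∫⁻ y in closedBall x (t^2), ‖g y‖ₑ ≤ ENNReal.ofReal (64 * h * t^3) := by
    intro t ht h1 h2
    refine (lintegral_mono_set (closedBall_subset_closedBall h1)).trans ((B.base x).trans ?_)
    apply ENNReal.ofReal_le_ofReal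
    have : 1/3 ≤ t := by nlinarith
    have h3 : (1/3)^3 ≤ t^3 := by gcongr
    nlinarith
  induction n with
  | zero => intro t ht h1 h2; exact base t ht h1 (by simpa using h2)
  | succ n ih =>
    intro t ht h1 h2
    by_cases hc : 1/8 < t^2
    · exact base t ht h1 hc
    · push Not at hc
      refine B.step x t ht (by linarith) ?_
      have := ih (2*t) (by positivity) (by nlinarith) (by rw [pow_succ] at h2; nlinarith)
      rwa [show (2*t)^2 = 4*t^2 by ring] at this

lemma LocB.bound {g : (Fin 2 → ℝ) → ℝ} {h : ℝ} (B : LocB g h) (x : Fin 2 → ℝ) (s : ℝ) (hs : 0 < s)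
    (hs2 : s ≤ 1/2) :
    ∫⁻ y in closedBall x s, ‖g y‖ₑ ≤ ENNReal.ofReal (64 * h * Real.sqrt s ^ 3) := by
  obtain ⟨n, hn⟩ := pow_unbounded_of_one_lt (1/(8*s)) (by norm_num : (1:ℝ) < 4)
  have e : Real.sqrt s ^ 2 = s := Real.sq_sqrt hs.le
  have := B.main x n (Real.sqrt s) (Real.sqrt_pos.2 hs) (by rw [e]; exact hs2) (by
    rw [e]
    rw [div_lt_iff₀ (by positivity)] at hn
    linarith)
  rwa [e] at this

lemma lint_rpow : ∫⁻ s in Set.Ioc (0:ℝ) 1, ENNReal.ofReal (s ^ (-1/2 : ℝ)) = ENNReal.ofReal 2 := by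
  have hi : IntervalIntegrable (fun s : ℝ => s ^ (-1/2 : ℝ)) volume 0 1 :=
    intervalIntegral.intervalIntegrable_rpow' (by norm_num)
  rw [intervalIntegrable_iff_integrableOn_Ioc_of_le zero_le_one] at hi
  rw [← ofReal_integral_eq_lintegral_ofReal hi]
  · rw [← intervalIntegral.integral_of_le zero_le_one, integral_rpow (by left; norm_num)]
    congr 1
    norm_num
  · refine (ae_restrict_mem measurableSet_Ioc).mono fun s hs => ?_
    exact Real.rpow_nonneg hs.1.le _

lemma ptwise (f : (Fin 2 → ℝ) → ℝ) (hf : ContDiff ℝ (⊤ : ℕ∞) f) (x z : Fin 2 → ℝ) (κ : ℝ)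
    (hz : z ∈ closedBall x κ) :
    ‖f x - f z‖ₑ ≤ ∫⁻ s in Set.Ioc (0:ℝ) 1,
      ENNReal.ofReal κ * ∑ i : Fin 2, ‖fderiv ℝ f (x + s • (z - x)) (Pi.single i 1)‖ₑ := by
  have hcf : Continuous (fderiv ℝ f) := hf.continuous_fderiv (by simp)
  have hd : ∀ s : ℝ, HasDerivAt (fun s : ℝ => f (x + s • (z - x)))
      (fderiv ℝ f (x + s • (z - x)) (z - x)) s := by
    intro s
    have h1 : HasDerivAt (fun s : ℝ => x + s • (z - x)) (z - x) s := by
      simpa using ((hasDerivAt_id s).smul_const (z - x)).const_add x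
    exact ((hf.differentiable (by simp)).differentiableAt.hasFDerivAt).comp_hasDerivAt s h1
  have ftc := intervalIntegral.integral_eq_sub_of_hasDerivAt (a := 0) (b := 1)
    (fun s _ => hd s) (Continuous.intervalIntegrable (by fun_prop) _ _)
  simp only [one_smul, zero_smul, add_zero, add_sub_cancel] at ftc
  rw [enorm_sub_rev, ← ftc, intervalIntegral.integral_of_le zero_le_one]
  refine (enorm_integral_le_lintegral_enorm _).trans (lintegral_mono fun s => ?_)
  have hv : z - x = ∑ i : Fin 2, (z - x) i • (Pi.single i 1 : Fin 2 → ℝ) := by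
    exact pi_eq_sum_univ' _
  have e : fderiv ℝ f (x + s • (z - x)) (z - x)
      = ∑ i : Fin 2, (z - x) i • fderiv ℝ f (x + s • (z - x)) (Pi.single i 1) := by
    conv_lhs => rw [show ∀ L : (Fin 2 → ℝ) →L[ℝ] ℝ, L (z - x) = L (∑ i : Fin 2, (z - x) i • (Pi.single i 1 : Fin 2 → ℝ)) from fun L => by rw [← hv]]
    rw [map_sum]
    simp only [map_smul]
  rw [e, Finset.mul_sum]
  refine (enorm_sum_le _ _).trans (Finset.sum_le_sum fun i _ => ?_)
  rw [enorm_smul]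
  gcongr
  rw [← ofReal_norm]
  apply ENNReal.ofReal_le_ofReal
  refine (norm_le_pi_norm (z - x) i).trans ?_
  rwa [← dist_eq_norm]

lemma avg_bound (f : (Fin 2 → ℝ) → ℝ) (hf : ContDiff ℝ (⊤ : ℕ∞) f) (h : Fin 2 → ℝ)
    (B : ∀ i, LocB (fun y => fderiv ℝ f y (Pi.single i 1)) (h i)) (x : Fin 2 → ℝ)
    (κ : ℝ) (hκ : 0 < κ) (hκ2 : κ ≤ 1/2) :
    ∫⁻ z in closedBall x κ, ‖f x - f z‖ₑ
      ≤ ENNReal.ofReal (128 * (∑ i, h i) * κ^2 * Real.sqrt κ) := by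
  have hcf : Continuous (fderiv ℝ f) := hf.continuous_fderiv (by simp)
  have hpos := fun i => (B i).pos
  have hH : 0 < ∑ i, h i := Finset.sum_pos (fun i _ => hpos i) Finset.univ_nonempty
  have hsq : Real.sqrt κ ^ 2 = κ := Real.sq_sqrt hκ.le
  have hsp : 0 < Real.sqrt κ := Real.sqrt_pos.2 hκ
  calc ∫⁻ z in closedBall x κ, ‖f x - f z‖ₑ
      ≤ ∫⁻ z in closedBall x κ, ∫⁻ s in Set.Ioc (0:ℝ) 1, ENNReal.ofReal κ *
        ∑ i : Fin 2, ‖fderiv ℝ f (x + s • (z - x)) (Pi.single i 1)‖ₑ :=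
        setLIntegral_mono' measurableSet_closedBall fun z hz => ptwise f hf x z κ hz
    _ = ∫⁻ s in Set.Ioc (0:ℝ) 1, ∫⁻ z in closedBall x κ, ENNReal.ofReal κ *
        ∑ i : Fin 2, ‖fderiv ℝ f (x + s • (z - x)) (Pi.single i 1)‖ₑ := by
        apply lintegral_lintegral_swap
        apply Measurable.aemeasurable
        refine Measurable.const_mul ?_ _
        refine Finset.measurable_sum _ fun i _ => ?_
        apply Continuous.measurable
        fun_prop
    _ ≤ ∫⁻ s in Set.Ioc (0:ℝ) 1, ENNReal.ofReal (64 * (∑ i, h i) * κ^2 * Real.sqrt κ) *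
          ENNReal.ofReal (s ^ (-1/2 : ℝ)) := by
        refine setLIntegral_mono' measurableSet_Ioc fun s hs => ?_
        have hs0 := hs.1
        have hm : ∀ i : Fin 2, Measurable fun y => ‖fderiv ℝ f y (Pi.single i 1)‖ₑ := by
          intro i; apply Continuous.measurable; fun_prop
        rw [lintegral_const_mul' _ _ ENNReal.ofReal_ne_top, lintegral_finsetSum']
        swap
        · intro i _
          apply Continuous.aemeasurable; fun_prop
        have hb : ∀ i : Fin 2, ∫⁻ z in closedBall x κ,
            ‖fderiv ℝ f (x + s • (z - x)) (Pi.single i 1)‖ₑ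
            ≤ ENNReal.ofReal (64 * h i * (κ * Real.sqrt κ) * s ^ (-1/2 : ℝ)) := by
          intro i
          rw [lint_scale _ (hm i) x κ s hs0]
          have := (B i).bound x (s * κ) (by positivity) (by nlinarith [hs.2])
          refine (mul_le_mul_right this _).trans_eq ?_
          rw [← ENNReal.ofReal_mul (by positivity)]
          congr 1
          have e1 : s ^ (-1/2 : ℝ) = (Real.sqrt s)⁻¹ := by
            rw [Real.sqrt_eq_rpow, ← Real.rpow_neg hs0.le]; norm_num
          rw [e1, Real.sqrt_mul hs0.le]
          have hss : Real.sqrt s ^ 2 = s := Real.sq_sqrt hs0.le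
          have hsp' : 0 < Real.sqrt s := Real.sqrt_pos.2 hs0
          generalize Real.sqrt s = a at *
          generalize Real.sqrt κ = b at *
          subst hss hsq
          field_simp
        calc _ ≤ ENNReal.ofReal κ * ∑ i : Fin 2,
              ENNReal.ofReal (64 * h i * (κ * Real.sqrt κ) * s ^ (-1/2 : ℝ)) := by
              gcongr with i _; exact hb i
          _ = _ := by
              have hr : 0 ≤ s ^ (-1/2 : ℝ) := Real.rpow_nonneg hs0.le _
              rw [← ENNReal.ofReal_sum_of_nonneg, ← ENNReal.ofReal_mul hκ.le,
                ← ENNReal.ofReal_mul (by positivity)]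
              · congr 1
                simp only [Fin.sum_univ_two]; ring
              · intro i _
                have := hpos i
                positivity
    _ = _ := by
        rw [lintegral_const_mul' _ _ ENNReal.ofReal_ne_top, lint_rpow,
          ← ENNReal.ofReal_mul (by positivity)]
        congr 1; ring

lemma osc_bound (f : (Fin 2 → ℝ) → ℝ) (hf : ContDiff ℝ (⊤ : ℕ∞) f) (hper : Per2 f) (h : Fin 2 → ℝ)
    (B : ∀ i, LocB (fun y => fderiv ℝ f y (Pi.single i 1)) (h i)) (x y : Fin 2 → ℝ) :
    ‖f x - f y‖ₑ ≤ ENNReal.ofReal (64 * (∑ i, h i)) := by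
  have hpos := fun i => (B i).pos
  have hH : 0 < ∑ i, h i := Finset.sum_pos (fun i _ => hpos i) Finset.univ_nonempty
  have hfc := hf.continuous
  have h1 := avg_bound f hf h B x (1/2) (by norm_num) le_rfl
  have h2 := avg_bound f hf h B y (1/2) (by norm_num) le_rfl
  rw [lint_per_s17 _ (fun z k => by simp only [hper z k]),
    ← lint_per_s17 _ (fun z k => by simp only [hper z k]) x] at h2
  calc ‖f x - f y‖ₑ = ∫⁻ z in closedBall x (1/2), ‖f x - f y‖ₑ := by
        rw [setLIntegral_const, vol_cb x (by norm_num)]; norm_num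
    _ ≤ ∫⁻ z in closedBall x (1/2), (‖f x - f z‖ₑ + ‖f y - f z‖ₑ) := by
        refine lintegral_mono fun z => ?_
        rw [enorm_sub_rev (f y)]
        calc ‖f x - f y‖ₑ = ‖(f x - f z) + (f z - f y)‖ₑ := by congr 1; ring
          _ ≤ _ := enorm_add_le _ _
    _ = _ := lintegral_add_left (by fun_prop) _
    _ ≤ _ := add_le_add h1 h2
    _ ≤ _ := by
        rw [← ENNReal.ofReal_add (by positivity) (by positivity)]
        apply ENNReal.ofReal_le_ofReal
        have : Real.sqrt (1/2) ≤ 1 := Real.sqrt_le_one.2 (by norm_num)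
        nlinarith

lemma per_fderiv (f : (Fin 2 → ℝ) → ℝ) (hper : Per2 f) (v : Fin 2 → ℝ) :
    Per2 (fun y => fderiv ℝ f y v) := by
  intro x k
  have : (fun y => f (y + fun i => (k i : ℝ))) = f := funext fun y => hper y k
  have h := fderiv_comp_add_right (𝕜 := ℝ) (f := f) (x := x) (fun i => (k i : ℝ))
  simp only [this] at h
  simp only [h]

lemma moll_bound (ζ : (Fin 2 → ℝ) → ℝ) (hζ : ContDiff ℝ (⊤ : ℕ∞) ζ)
    (hζsupp : Function.support ζ ⊆ Metric.closedBall 0 1)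
    (hζnonneg : ∀ x, 0 ≤ ζ x) (hζint : ∫ x, ζ x = 1) (M : ℝ) (hM : ∀ x, ζ x ≤ M)
    (κ : ℝ) (hκ : 0 < κ) (f : (Fin 2 → ℝ) → ℝ) (hf : ContDiff ℝ (⊤ : ℕ∞) f) (hper : Per2 f)
    (h : Fin 2 → ℝ)
    (B : ∀ i, LocB (fun y => fderiv ℝ f y (Pi.single i 1)) (h i)) (x : Fin 2 → ℝ) :
    ENNReal.ofReal |f x - moll ζ κ f x| ≤
      ENNReal.ofReal ((128 * M + 128) * Real.sqrt κ * ∑ i, h i) := by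
  have hpos := fun i => (B i).pos
  have hH : 0 < ∑ i, h i := Finset.sum_pos (fun i _ => hpos i) Finset.univ_nonempty
  have hfc := hf.continuous
  have hζc := hζ.continuous
  have hM0 : 0 ≤ M := (hζnonneg 0).trans (hM 0)
  set k : (Fin 2 → ℝ) → ℝ := fun z => (κ ^ 2)⁻¹ * ζ (κ⁻¹ • (x - z)) with hk
  have hkc : Continuous k := by fun_prop
  have hk0 : ∀ z, 0 ≤ k z := fun z => mul_nonneg (by positivity) (hζnonneg _)
  have hksupp : ∀ z, z ∉ closedBall x κ → k z = 0 := by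
    intro z hz
    have : ζ (κ⁻¹ • (x - z)) = 0 := by
      by_contra hne
      have := hζsupp hne
      rw [mem_closedBall, dist_zero_right, norm_smul, norm_inv, Real.norm_eq_abs, abs_of_pos hκ,
        inv_mul_le_iff₀ hκ, mul_one, ← dist_eq_norm, dist_comm] at this
      exact hz this
    simp [hk, this]
  have hkcs : HasCompactSupport k :=
    HasCompactSupport.intro (isCompact_closedBall x κ) hksupp
  have hki : Integrable k := hkc.integrable_of_hasCompactSupport hkcs
  have hkfi : Integrable (fun z => k z * f z) :=
    (hkc.mul hfc).integrable_of_hasCompactSupport hkcs.mul_right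
  have hk1 : ∫ z, k z = 1 := by
    simp only [hk]
    rw [integral_const_mul, integral_sub_left_eq_self (fun u => ζ (κ⁻¹ • u)) volume x,
      Measure.integral_comp_inv_smul_of_nonneg _ _ hκ.le, hζint]
    simp [hκ.ne']
  have hdiff : f x - moll ζ κ f x = ∫ z, k z * (f x - f z) := by
    have e : moll ζ κ f x = ∫ z, k z * f z := rfl
    rw [e]
    simp_rw [mul_sub]
    rw [integral_sub (hki.mul_const _) hkfi, integral_mul_const, hk1, one_mul]
  have hle : ENNReal.ofReal |f x - moll ζ κ f x| ≤ ∫⁻ z, ‖k z‖ₑ * ‖f x - f z‖ₑ := by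
    rw [← Real.norm_eq_abs, ofReal_norm, hdiff]
    refine (enorm_integral_le_lintegral_enorm _).trans_eq ?_
    simp only [enorm_mul]
  refine hle.trans ?_
  rcases le_or_gt κ (1/2) with hc | hc
  · calc ∫⁻ z, ‖k z‖ₑ * ‖f x - f z‖ₑ
        ≤ ∫⁻ z, (closedBall x κ).indicator
            (fun z => ENNReal.ofReal ((κ^2)⁻¹ * M) * ‖f x - f z‖ₑ) z := by
          refine lintegral_mono fun z => ?_
          by_cases hz : z ∈ closedBall x κ
          · rw [Set.indicator_of_mem hz]
            gcongr
            rw [Real.enorm_of_nonneg (hk0 z)]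
            apply ENNReal.ofReal_le_ofReal
            simp only [hk]
            gcongr
            exact hM _
          · simp [hksupp z hz]
      _ = ENNReal.ofReal ((κ^2)⁻¹ * M) * ∫⁻ z in closedBall x κ, ‖f x - f z‖ₑ := by
          rw [lintegral_indicator measurableSet_closedBall,
            lintegral_const_mul' _ _ ENNReal.ofReal_ne_top]
      _ ≤ ENNReal.ofReal ((κ^2)⁻¹ * M) *
            ENNReal.ofReal (128 * (∑ i, h i) * κ^2 * Real.sqrt κ) := by
          gcongr; exact avg_bound f hf h B x κ hκ hc
      _ ≤ _ := by
          rw [← ENNReal.ofReal_mul (by positivity)]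
          apply ENNReal.ofReal_le_ofReal
          have e : (κ^2)⁻¹ * M * (128 * (∑ i, h i) * κ^2 * Real.sqrt κ)
            = 128 * M * Real.sqrt κ * ∑ i, h i := by field_simp
          rw [e]
          gcongr
          linarith
  · calc ∫⁻ z, ‖k z‖ₑ * ‖f x - f z‖ₑ
        ≤ ∫⁻ z, ‖k z‖ₑ * ENNReal.ofReal (64 * (∑ i, h i)) := by
          refine lintegral_mono fun z => ?_
          gcongr
          exact osc_bound f hf hper h B x z
      _ = ENNReal.ofReal (64 * (∑ i, h i)) := by
          rw [lintegral_mul_const' _ _ ENNReal.ofReal_ne_top]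
          simp_rw [fun z => Real.enorm_of_nonneg (hk0 z)]
          rw [← ofReal_integral_eq_lintegral_ofReal hki (Filter.Eventually.of_forall hk0), hk1]
          simp
      _ ≤ _ := by
          apply ENNReal.ofReal_le_ofReal
          have : 1/2 ≤ Real.sqrt κ := Real.le_sqrt_of_sq_le (by linarith)
          gcongr
          nlinarith

/-- **Mollifier approximation rate in `L^∞`.**  For a standard mollifier kernel `ζ` and
the associated mollification `Λ_κ` at scale `κ`, any (smooth periodic) `f` on `𝕋²`
satisfies `|f − Λ_κ f|_{L^∞(𝕋²)} ≲ √κ · |∂̄f|_{H^{1/2}(𝕋²)}`, with constant independent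
of `κ`. -/
theorem mollifier_approximation_rate
    (ζ : (Fin 2 → ℝ) → ℝ) (hζ : ContDiff ℝ (⊤ : ℕ∞) ζ)
    (hζsupp : Function.support ζ ⊆ Metric.closedBall 0 1)
    (hζnonneg : ∀ x, 0 ≤ ζ x) (hζint : ∫ x, ζ x = 1) :
    ∃ C : ℝ≥0, 0 < C ∧
      ∀ κ : ℝ, 0 < κ →
        ∀ f : (Fin 2 → ℝ) → ℝ, ContDiff ℝ (⊤ : ℕ∞) f → Per2 f →
          ∀ x : Fin 2 → ℝ,
            ENNReal.ofReal |f x - moll ζ κ f x| ≤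
              C * ENNReal.ofReal (Real.sqrt κ) *
                ∑ i : Fin 2, H12 fun y => fderiv ℝ f y (Pi.single i 1) := by
  have hcs : HasCompactSupport ζ :=
    HasCompactSupport.intro (isCompact_closedBall 0 1) fun z hz => by
      by_contra hne; exact hz (hζsupp hne)
  obtain ⟨M, hM⟩ := hcs.exists_bound_of_continuous hζ.continuous
  have hM' : ∀ x, ζ x ≤ M := fun x => (Real.le_norm_self _).trans (hM x)
  have hM0 : 0 ≤ M := (hζnonneg 0).trans (hM' 0)
  refine ⟨Real.toNNReal (128 * M + 128), by simp; positivity, ?_⟩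
  intro κ hκ f hf hper x
  have hcf : Continuous (fderiv ℝ f) := hf.continuous_fderiv (by simp)
  set H : Fin 2 → ℝ≥0∞ := fun i => H12 fun y => fderiv ℝ f y (Pi.single i 1) with hH
  have hsq : 0 < Real.sqrt κ := Real.sqrt_pos.2 hκ
  have hC : ENNReal.ofReal (128 * M + 128) * ENNReal.ofReal (Real.sqrt κ) ≠ 0 := by
    simp [hκ]; positivity
  change _ ≤ ENNReal.ofReal (128 * M + 128) * ENNReal.ofReal (Real.sqrt κ) * ∑ i, H i
  by_cases htop : ∑ i, H i = ⊤
  · rw [htop, ENNReal.mul_top hC]; exact le_top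
  have hfin : ∀ i, H i ≠ ⊤ := fun i hi => htop (ENNReal.sum_eq_top.2 ⟨i, Finset.mem_univ _, hi⟩)
  have key : ∀ ε : ℝ, 0 < ε → |f x - moll ζ κ f x| ≤
      (128 * M + 128) * Real.sqrt κ * ∑ i, ((H i).toReal + ε) := by
    intro ε hε
    have hp : ∀ i, 0 < (H i).toReal + ε := fun i => by positivity
    have B : ∀ i, LocB (fun y => fderiv ℝ f y (Pi.single i 1)) ((H i).toReal + ε) := by
      intro i
      refine LocB.of_H12 _ _ (by fun_prop) (per_fderiv f hper _) (hp i) ?_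
      change H i ≤ _
      rw [ENNReal.le_ofReal_iff_toReal_le (hfin i) (hp i).le]
      linarith
    have := moll_bound ζ hζ hζsupp hζnonneg hζint M hM' κ hκ f hf hper _ B x
    rwa [ENNReal.ofReal_le_ofReal_iff] at this
    have : 0 ≤ ∑ i, ((H i).toReal + ε) := Finset.sum_nonneg fun i _ => (hp i).le
    positivity
  have fin : |f x - moll ζ κ f x| ≤ (128 * M + 128) * Real.sqrt κ * ∑ i, (H i).toReal := by
    have hpos : 0 < (128 * M + 128) * Real.sqrt κ := by positivity
    refine le_of_forall_pos_le_add fun ε hε => ?_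
    refine (key (ε / (2 * ((128 * M + 128) * Real.sqrt κ))) (by positivity)).trans_eq ?_
    simp only [Fin.sum_univ_two]
    field_simp
    ring
  refine (ENNReal.ofReal_le_ofReal fin).trans_eq ?_
  rw [ENNReal.ofReal_mul (by positivity), ENNReal.ofReal_mul (by positivity),
    ENNReal.ofReal_sum_of_nonneg (fun i _ => ENNReal.toReal_nonneg)]
  congr 1
  exact Finset.sum_congr rfl fun i _ => ENNReal.ofReal_toReal (hfin i)
end
end
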